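/- Let F ∈ R^{l×m} with l < m and rank r, and suppose d_r(F) is associated to (z_1 − f) h, where f ∈ K[z_2, …, z_n] and h ∈ K[z_n]. Then F is equivalent to its Smith form if and only if J_k(F) = R for every k = 1, …, r. -/

import Mathlib

open MvPolynomial Matrix

section Defs

variable {A : Type*} [CommRing A]

/-- The set of all `k × k` minors of a matrix. -/
def minorsSet {l m : ℕ} (F : Matrix (Fin l) (Fin m) A) (k : ℕ) : Set A :=
  { p | ∃ (r : Fin k ↪ Fin l) (c : Fin k ↪ Fin m), p = (F.submatrix ⇑r ⇑c).det }

/-- `d` is a greatest common divisor of the `k × k` minors of `F`. -/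
def IsGcdMinors {l m : ℕ} (F : Matrix (Fin l) (Fin m) A) (k : ℕ) (d : A) : Prop :=
  (∀ p ∈ minorsSet F k, d ∣ p) ∧ ∀ e : A, (∀ p ∈ minorsSet F k, e ∣ p) → e ∣ d

/-- The ideal generated by the `k × k` reduced minors of `F`, relative to a gcd `d`
of the `k × k` minors (the reduced minors are the `v` with `d * v` a minor). -/
def reducedIdeal {l m : ℕ} (F : Matrix (Fin l) (Fin m) A) (k : ℕ) (d : A) : Ideal A :=
  Ideal.span { v : A | d * v ∈ minorsSet F k }

/-- `J_k(F) = R`: the `k × k` reduced minors of `F` generate the unit ideal. -/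
def JkUnit {l m : ℕ} (F : Matrix (Fin l) (Fin m) A) (k : ℕ) : Prop :=
  ∃ d : A, IsGcdMinors F k d ∧ reducedIdeal F k d = ⊤

/-- `F` has rank `r`: some `r × r` minor is nonzero and all `(r+1) × (r+1)` minors vanish. -/
def HasRank {l m : ℕ} (F : Matrix (Fin l) (Fin m) A) (r : ℕ) : Prop :=
  (∃ p ∈ minorsSet F r, p ≠ 0) ∧ ∀ p ∈ minorsSet F (r + 1), p = 0

/-- Equivalence of matrices: `F₁ = U * F₂ * V` for unimodular `U`, `V`. -/
def MatEquiv {l m : ℕ} (F₁ F₂ : Matrix (Fin l) (Fin m) A) : Prop :=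
  ∃ (U : Matrix (Fin l) (Fin l) A) (V : Matrix (Fin m) (Fin m) A),
    IsUnit U.det ∧ IsUnit V.det ∧ F₁ = U * F₂ * V

/-- The rectangular diagonal matrix with diagonal entries `Φ`. -/
def smithDiag {l m : ℕ} (Φ : Fin l → A) : Matrix (Fin l) (Fin m) A :=
  Matrix.of fun i j => if (i : ℕ) = (j : ℕ) then Φ i else 0

/-- `F` (of rank `r`) is equivalent to its Smith form: there are diagonal entries `Φ` such that
for each `i ≤ r` the product `Φ_1 ⋯ Φ_i` is a gcd of the `i × i` minors of `F`
(i.e. `Φ_i = d_i(F)/d_{i-1}(F)`), `Φ_i = 0` for `i > r`, and `F` is equivalent to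
the diagonal matrix with entries `Φ`. -/
def SmithEquivAt {l m : ℕ} (F : Matrix (Fin l) (Fin m) A) (r : ℕ) : Prop :=
  ∃ Φ : Fin l → A,
    (∀ i : Fin l, (i : ℕ) < r →
      IsGcdMinors F ((i : ℕ) + 1) (∏ j ∈ Finset.Iic i, Φ j)) ∧
    (∀ i : Fin l, r ≤ (i : ℕ) → Φ i = 0) ∧
    MatEquiv F (smithDiag Φ)

/-- `F` is equivalent to its Smith form. -/
def EquivToSmith {l m : ℕ} (F : Matrix (Fin l) (Fin m) A) : Prop :=
  ∃ r : ℕ, HasRank F r ∧ SmithEquivAt F r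

end Defs


section PartA
variable {A : Type*} [CommRing A]

/-- The determinantal ideal of size `k` (arbitrary index functions). -/
def dI {m n : Type*} (k : ℕ) (F : Matrix m n A) : Ideal A :=
  Ideal.span {x | ∃ (r : Fin k → m) (c : Fin k → n), x = (F.submatrix r c).det}

lemma det_mem_dI {m n : Type*} {k : ℕ} (F : Matrix m n A) (r : Fin k → m) (c : Fin k → n) :
    (F.submatrix r c).det ∈ dI k F := Ideal.subset_span ⟨r, c, rfl⟩

lemma dI_le_iff {m n : Type*} {k : ℕ} {F : Matrix m n A} {I : Ideal A} :
    dI k F ≤ I ↔ ∀ (r : Fin k → m) (c : Fin k → n), (F.submatrix r c).det ∈ I := by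
  constructor
  · intro h r c
    exact h (det_mem_dI F r c)
  · intro h
    refine Ideal.span_le.2 ?_
    rintro x ⟨r, c, rfl⟩
    exact h r c

lemma dI_transpose {m n : Type*} (k : ℕ) (F : Matrix m n A) : dI k Fᵀ = dI k F := by
  apply le_antisymm
  · refine dI_le_iff.2 fun r c => ?_
    rw [← transpose_submatrix, det_transpose]
    exact det_mem_dI F c r
  · refine dI_le_iff.2 fun r c => ?_
    have := det_mem_dI Fᵀ c r
    rwa [← transpose_submatrix, det_transpose] at this

lemma dI_mul_le_right {l m n : Type*} [Fintype m] (k : ℕ) (P : Matrix l m A)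
    (Q : Matrix m n A) : dI k (P * Q) ≤ dI k Q := by
  classical
  refine dI_le_iff.2 fun r c => ?_
  have h1 : ((P * Q).submatrix r c).det =
      (detRowAlternating (R := A) (n := Fin k)).toMultilinearMap
        (fun i => ∑ x : m, P (r i) x • (fun j => Q x (c j))) := by
    change det _ = det _
    congr 1
    ext i j
    simp [Matrix.mul_apply, Finset.sum_apply]
  rw [h1, MultilinearMap.map_sum]
  refine Ideal.sum_mem _ fun s _ => ?_
  rw [MultilinearMap.map_smul_univ]
  exact Ideal.mul_mem_left _ _ (det_mem_dI Q s c)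

lemma dI_mul_le_left {l m n : Type*} [Fintype m] (k : ℕ) (P : Matrix l m A)
    (Q : Matrix m n A) : dI k (P * Q) ≤ dI k P := by
  rw [← dI_transpose, transpose_mul, ← dI_transpose k P]
  exact dI_mul_le_right _ _ _

lemma dI_mul_mul_le {l m n o : Type*} [Fintype m] [Fintype n] (k : ℕ) (P : Matrix l m A)
    (F : Matrix m n A) (Q : Matrix n o A) : dI k (P * F * Q) ≤ dI k F :=
  (dI_mul_le_left _ _ _).trans (dI_mul_le_right _ _ _)

lemma dI_unit_left {m n : Type*} [Fintype m] [DecidableEq m] (k : ℕ) (U : Matrix m m A)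
    (hU : IsUnit U.det) (F : Matrix m n A) : dI k (U * F) = dI k F := by
  apply le_antisymm (dI_mul_le_right _ _ _)
  calc dI k F = dI k (U⁻¹ * (U * F)) := by rw [← Matrix.mul_assoc, nonsing_inv_mul _ hU, Matrix.one_mul]
    _ ≤ _ := dI_mul_le_right _ _ _

lemma dI_unit_right {m n : Type*} [Fintype n] [DecidableEq n] (k : ℕ) (F : Matrix m n A)
    (V : Matrix n n A) (hV : IsUnit V.det) : dI k (F * V) = dI k F := by
  apply le_antisymm (dI_mul_le_left _ _ _)
  calc dI k F = dI k (F * V * V⁻¹) := by rw [Matrix.mul_assoc, mul_nonsing_inv _ hV, Matrix.mul_one]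
    _ ≤ _ := dI_mul_le_left _ _ _

lemma dI_map {B : Type*} [CommRing B] {m n : Type*} (k : ℕ) (F : Matrix m n A) (φ : A →+* B) :
    dI k (F.map φ) = Ideal.map φ (dI k F) := by
  unfold dI
  rw [Ideal.map_span]
  congr 1
  ext x
  simp only [Set.mem_image, Set.mem_ofPred_eq]
  constructor
  · rintro ⟨r, c, rfl⟩
    refine ⟨_, ⟨r, c, rfl⟩, ?_⟩
    rw [RingHom.map_det]; rfl
  · rintro ⟨_, ⟨r, c, rfl⟩, rfl⟩
    refine ⟨r, c, ?_⟩
    rw [RingHom.map_det]; rfl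

lemma dI_zero {m n : Type*} (F : Matrix m n A) : dI 0 F = ⊤ := by
  rw [Ideal.eq_top_iff_one]
  have := det_mem_dI (k := 0) F (fun i => i.elim0) (fun i => i.elim0)
  simpa using this

lemma dI_succ_le {m n : Type*} (k : ℕ) (F : Matrix m n A) : dI (k + 1) F ≤ dI k F := by
  refine dI_le_iff.2 fun r c => ?_
  rw [det_succ_row_zero]
  refine Ideal.sum_mem _ fun s _ => ?_
  refine Ideal.mul_mem_left _ _ ?_
  rw [submatrix_submatrix]
  exact det_mem_dI F _ _

lemma dI_antitone {m n : Type*} (F : Matrix m n A) {j k : ℕ} (h : j ≤ k) : dI k F ≤ dI j F := by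
  induction h with
  | refl => exact le_rfl
  | step _ ih => exact (dI_succ_le _ _).trans ih

lemma dI_smul {m n : Type*} (k : ℕ) (a : A) (F : Matrix m n A) :
    dI k (a • F) = Ideal.span {a ^ k} * dI k F := by
  have hd : ∀ (r : Fin k → m) (c : Fin k → n), ((a • F).submatrix r c).det =
      a ^ k * (F.submatrix r c).det := by
    intro r c
    have : (a • F).submatrix r c = a • F.submatrix r c := rfl
    rw [this, det_smul, Fintype.card_fin]
  apply le_antisymm
  · refine dI_le_iff.2 fun r c => ?_
    rw [hd]
    exact Ideal.mul_mem_mul (Ideal.mem_span_singleton_self _) (det_mem_dI F r c)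
  · rw [dI, dI, Ideal.span_mul_span', Ideal.span_le]
    rintro _ ⟨_, rfl, _, ⟨r, c, rfl⟩, rfl⟩
    have := det_mem_dI (a • F) r c
    rw [hd] at this
    exact this

lemma submatrix_eq_mul {l m n o : Type*} [Fintype m] [Fintype n] [DecidableEq m] [DecidableEq n]
    (F : Matrix m n A) (r : l → m) (c : o → n) :
    F.submatrix r c = (1 : Matrix m m A).submatrix r id * F * (1 : Matrix n n A).submatrix id c := by
  ext i j
  simp [Matrix.mul_apply, Matrix.one_apply]

lemma dI_submatrix_le {l m n o : Type*} (k : ℕ)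
    (F : Matrix m n A) (r : l → m) (c : o → n) : dI k (F.submatrix r c) ≤ dI k F := by
  refine dI_le_iff.2 fun r' c' => ?_
  rw [submatrix_submatrix]
  exact det_mem_dI F _ _

lemma dI_eq_bot_row {m n : Type*} [Fintype m] {k : ℕ} (h : Fintype.card m < k)
    (F : Matrix m n A) : dI k F = ⊥ := by
  rw [eq_bot_iff]
  refine dI_le_iff.2 fun r c => ?_
  obtain ⟨i, j, hij, he⟩ := Fintype.exists_ne_map_eq_of_card_lt r (by simpa using h)
  rw [Ideal.mem_bot]
  exact det_zero_of_row_eq hij (by ext x; simp [he])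

lemma dI_eq_bot_col {m n : Type*} [Fintype n] {k : ℕ} (h : Fintype.card n < k)
    (F : Matrix m n A) : dI k F = ⊥ := by
  rw [← dI_transpose]; exact dI_eq_bot_row h _

lemma dI_square {r : ℕ} (F : Matrix (Fin r) (Fin r) A) : dI r F = Ideal.span {F.det} := by
  apply le_antisymm
  · refine dI_le_iff.2 fun r c => ?_
    rw [submatrix_eq_mul, det_mul, det_mul]
    exact Ideal.mul_mem_right _ _ (Ideal.mul_mem_left _ _ (Ideal.mem_span_singleton_self _))
  · rw [Ideal.span_singleton_le_iff_mem]
    have := det_mem_dI F id id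
    simpa using this

lemma dI_pivot_aux {a b : ℕ} (F : Matrix (Fin (a + 1)) (Fin (b + 1)) A)
    (h2 : ∀ i : Fin a, F i.succ 0 = 0) {k : ℕ}
    (r : Fin k → Fin (a + 1)) (c : Fin k → Fin (b + 1)) (hr : ∀ i, r i ≠ 0) :
    (F.submatrix r c).det ∈ dI k (F.submatrix Fin.succ Fin.succ) := by
  choose r' hr' using fun i => Fin.exists_succ_eq.2 (hr i)
  by_cases hc : ∃ j, c j = 0
  · obtain ⟨j, hj⟩ := hc
    rw [det_eq_zero_of_column_eq_zero j]
    · exact Ideal.zero_mem _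
    · intro i
      rw [submatrix_apply, hj, ← hr', h2]
  · push Not at hc
    choose c' hc' using fun i => Fin.exists_succ_eq.2 (hc i)
    have := det_mem_dI (F.submatrix Fin.succ Fin.succ) r' c'
    rw [submatrix_submatrix] at this
    convert this using 3
    · ext i; simp [hr']
    · ext i; simp [hc']

lemma dI_pivot {a b : ℕ} (F : Matrix (Fin (a + 1)) (Fin (b + 1)) A) (h0 : F 0 0 = 1)
    (h1 : ∀ j : Fin b, F 0 j.succ = 0) (h2 : ∀ i : Fin a, F i.succ 0 = 0) (k : ℕ) :
    dI (k + 1) F = dI k (F.submatrix Fin.succ Fin.succ) := by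
  apply le_antisymm
  · refine dI_le_iff.2 fun r c => ?_
    by_cases hr : ∃ i, r i = 0
    · obtain ⟨i, hi⟩ := hr
      by_cases h : ∃ i', i' ≠ i ∧ r i' = 0
      · obtain ⟨i', hne, hi'⟩ := h
        rw [det_zero_of_row_eq hne (by ext; simp [hi, hi'])]
        exact Ideal.zero_mem _
      · push Not at h
        rw [det_succ_row _ i]
        refine Ideal.sum_mem _ fun s _ => Ideal.mul_mem_left _ _ ?_
        rw [submatrix_submatrix]
        exact dI_pivot_aux F h2 _ _ (fun t => h _ (Fin.succAbove_ne i t))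
    · push Not at hr
      exact dI_succ_le _ _ (dI_pivot_aux F h2 r c hr)
  · refine dI_le_iff.2 fun r c => ?_
    have := det_mem_dI F (Fin.cons 0 (Fin.succ ∘ r)) (Fin.cons 0 (Fin.succ ∘ c))
    convert this using 1
    rw [det_succ_row_zero, Fin.sum_univ_succ]
    simp [h0, h1, submatrix_submatrix]

lemma span_minorsSet {l m : ℕ} (F : Matrix (Fin l) (Fin m) A) (k : ℕ) :
    Ideal.span (minorsSet F k) = dI k F := by
  apply le_antisymm
  · refine Ideal.span_mono ?_
    rintro x ⟨r, c, rfl⟩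
    exact ⟨r, c, rfl⟩
  · refine dI_le_iff.2 fun r c => ?_
    by_cases hr : Function.Injective r
    · by_cases hc : Function.Injective c
      · exact Ideal.subset_span ⟨⟨r, hr⟩, ⟨c, hc⟩, rfl⟩
      · simp only [Function.Injective, not_forall] at hc
        obtain ⟨i, j, he, hij⟩ := hc
        rw [det_zero_of_column_eq hij (by intro x; simp [he])]
        exact Ideal.zero_mem _
    · simp only [Function.Injective, not_forall] at hr
      obtain ⟨i, j, he, hij⟩ := hr
      rw [det_zero_of_row_eq hij (by ext x; simp [he])]
      exact Ideal.zero_mem _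

lemma dI_of_reduced {l m : ℕ} (F : Matrix (Fin l) (Fin m) A) (k : ℕ) (d : A)
    (hd : ∀ p ∈ minorsSet F k, d ∣ p) (hr : reducedIdeal F k d = ⊤) :
    dI k F = Ideal.span {d} := by
  rw [← span_minorsSet]
  apply le_antisymm
  · rw [Ideal.span_le]
    intro p hp
    exact Ideal.mem_span_singleton.2 (hd p hp)
  · rw [Ideal.span_singleton_le_iff_mem]
    have h1 : (1 : A) ∈ reducedIdeal F k d := hr ▸ Submodule.mem_top
    have : ∀ x ∈ reducedIdeal F k d, d * x ∈ Ideal.span (minorsSet F k) := by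
      intro x hx
      induction hx using Submodule.span_induction with
      | mem x hx => exact Ideal.subset_span hx
      | zero => simp
      | add x y _ _ hx hy => rw [mul_add]; exact Ideal.add_mem _ hx hy
      | smul a x _ hx => rw [smul_eq_mul, mul_left_comm]; exact Ideal.mul_mem_left _ _ hx
    simpa using this 1 h1

lemma reduced_of_dI [IsDomain A] {l m : ℕ} (F : Matrix (Fin l) (Fin m) A) (k : ℕ) (d : A)
    (hd0 : d ≠ 0) (hd : dI k F = Ideal.span {d}) :
    IsGcdMinors F k d ∧ reducedIdeal F k d = ⊤ := by
  rw [← span_minorsSet] at hd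
  have h1 : ∀ p ∈ minorsSet F k, d ∣ p := fun p hp =>
    Ideal.mem_span_singleton.1 (hd ▸ Ideal.subset_span hp)
  have hmem : d ∈ Ideal.span (minorsSet F k) := hd ▸ Ideal.mem_span_singleton_self d
  refine ⟨⟨h1, fun e he => ?_⟩, ?_⟩
  · have : Ideal.span (minorsSet F k) ≤ Ideal.span {e} :=
      Ideal.span_le.2 fun p hp => Ideal.mem_span_singleton.2 (he p hp)
    exact Ideal.mem_span_singleton.1 (this hmem)
  · rw [Ideal.eq_top_iff_one]
    have : ∀ x ∈ Ideal.span (minorsSet F k), ∃ y ∈ reducedIdeal F k d, x = d * y := by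
      intro x hx
      induction hx using Submodule.span_induction with
      | mem x hx =>
        obtain ⟨y, rfl⟩ := h1 x hx
        exact ⟨y, Ideal.subset_span hx, rfl⟩
      | zero => exact ⟨0, Ideal.zero_mem _, by simp⟩
      | add x y _ _ hx hy =>
        obtain ⟨a, ha, rfl⟩ := hx
        obtain ⟨b, hb, rfl⟩ := hy
        exact ⟨a + b, Ideal.add_mem _ ha hb, by ring⟩
      | smul a x _ hx =>
        obtain ⟨b, hb, rfl⟩ := hx
        exact ⟨a * b, Ideal.mul_mem_left _ _ hb, by simp; ring⟩
    obtain ⟨y, hy, he⟩ := this d hmem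
    have : y = 1 := mul_left_cancel₀ hd0 (by rw [← he, mul_one])
    exact this ▸ hy

end PartA



section Noether
open List

/-- The substitution `X_i ↦ X_i + c • X_0 ^ (u ^ i)` for `i ≠ 0`. -/
noncomputable def nT1 {A : Type*} [CommRing A] {n : ℕ} (u : ℕ) (c : A) :
    MvPolynomial (Fin (n + 1)) A →ₐ[A] MvPolynomial (Fin (n + 1)) A :=
  aeval fun i ↦ if i = 0 then X 0 else X i + c • X 0 ^ (u ^ i.1)

lemma nT1_comp {A : Type*} [CommRing A] {n : ℕ} (u : ℕ) (c : A) :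
    (nT1 (n := n) u c).comp (nT1 u (-c)) = AlgHom.id _ _ := by
  unfold nT1
  rw [comp_aeval, ← MvPolynomial.aeval_X_left]
  ext i v
  cases i using Fin.cases <;> simp

/-- The automorphism given by `nT1 u 1`. -/
noncomputable def nT {A : Type*} [CommRing A] {n : ℕ} (u : ℕ) :
    MvPolynomial (Fin (n + 1)) A ≃ₐ[A] MvPolynomial (Fin (n + 1)) A :=
  AlgEquiv.ofAlgHom (nT1 u 1) (nT1 u (-1))
    (nT1_comp u 1) (by simpa using nT1_comp u (-1 : A))

lemma nT_X_zero {A : Type*} [CommRing A] {n : ℕ} (u : ℕ) :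
    nT u (X 0 : MvPolynomial (Fin (n + 1)) A) = X 0 := by
  simp [nT, nT1]

lemma nT_X_succ {A : Type*} [CommRing A] {n : ℕ} (u : ℕ) (i : Fin n) :
    nT u (X i.succ : MvPolynomial (Fin (n + 1)) A) = X i.succ + X 0 ^ (u ^ (i.1 + 1)) := by
  simp [nT, nT1]

lemma nT_C {A : Type*} [CommRing A] {n : ℕ} (u : ℕ) (a : A) :
    nT u (C a : MvPolynomial (Fin (n + 1)) A) = C a := by
  simp [nT, nT1]

lemma nT_map {A B : Type*} [CommRing A] [CommRing B] (φ : A →+* B) {n : ℕ} (u : ℕ)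
    (q : MvPolynomial (Fin (n + 1)) A) :
    MvPolynomial.map φ (nT u q) = nT u (MvPolynomial.map φ q) := by
  induction q using MvPolynomial.induction_on with
  | C a => simp [nT_C]
  | add p q hp hq => simp [hp, hq]
  | mul_X p i hp =>
    rw [map_mul, map_mul, hp, map_mul, map_mul]
    congr 1
    cases i using Fin.cases <;> simp [nT_X_zero, nT_X_succ]

variable {k : Type*} [Field k] {n : ℕ} (f : MvPolynomial (Fin (n + 1)) k)
variable (v w : Fin (n + 1) →₀ ℕ) {u : ℕ}

lemma n_sum_ne (hu : 1 < u) (vlt : ∀ i, v i < u) (wlt : ∀ i, w i < u) (ne : v ≠ w) :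
    ∑ x : Fin (n + 1), u ^ x.1 * v x ≠ ∑ x : Fin (n + 1), u ^ x.1 * w x := by
  intro h
  refine ne <| Finsupp.ext <| congrFun <| ofFn_inj.mp ?_
  apply Nat.ofDigits_inj_of_len_eq hu
    (by simp) (by grind) (by grind)
  simpa only [Nat.ofDigits_eq_sum_mapIdx, mapIdx_eq_ofFn, get_ofFn, length_ofFn,
    Fin.val_cast, mul_comm, sum_ofFn] using! h

lemma n_degreeOf_zero {a : k} (ha : a ≠ 0) (hu : 1 < u) : (nT u (monomial v a)).degreeOf 0 =
    ∑ i : Fin (n + 1), (u ^ i.1) * v i := by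
  have hup : ∀ i, 0 < u ^ i := fun i => Nat.pow_pos (by omega)
  rw [← natDegree_finSuccEquiv, monomial_eq, Finsupp.prod_pow v fun a ↦ X a]
  simp only [Fin.prod_univ_succ, Fin.sum_univ_succ, map_mul, map_prod, map_pow,
    nT_C, nT_X_zero, nT_X_succ,
    map_add, finSuccEquiv_X_zero, finSuccEquiv_X_succ]
  have h (i : Fin n) :
      (Polynomial.C (X (R := k) i) + Polynomial.X ^ (u ^ (i.1 + 1))) ^ v i.succ ≠ 0 :=
    pow_ne_zero (v i.succ) (Polynomial.leadingCoeff_ne_zero.mp <| by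
      rw [add_comm, Polynomial.leadingCoeff_X_pow_add_C (hup _)]; exact one_ne_zero)
  rw [Polynomial.natDegree_mul (by simp [ha]) (mul_ne_zero (by simp) (Finset.prod_ne_zero_iff.mpr
    (fun i _ ↦ h i))), Polynomial.natDegree_mul (by simp) (Finset.prod_ne_zero_iff.mpr (fun i _ ↦ h i)),
    Polynomial.natDegree_prod _ _ (fun i _ ↦ h i), natDegree_finSuccEquiv, degreeOf_C]
  simpa only [Polynomial.natDegree_pow, zero_add, Polynomial.natDegree_X, mul_one, Fin.val_zero, pow_zero, one_mul,
    add_right_inj, Fin.val_succ] using Finset.sum_congr rfl (fun i _ ↦ by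
    rw [add_comm (Polynomial.C _), Polynomial.natDegree_X_pow_add_C, mul_comm])

lemma n_leadingCoeff (hu : 1 < u) (a : k) :
    (finSuccEquiv k n (nT u ((monomial v) a))).leadingCoeff = C a := by
  have hup : ∀ i, 0 < u ^ i := fun i => Nat.pow_pos (by omega)
  rw [monomial_eq, Finsupp.prod_fintype]
  · simp only [map_mul, map_prod, Polynomial.leadingCoeff_mul, Polynomial.leadingCoeff_prod, nT_C]
    have h1 : finSuccEquiv k n (C a) = Polynomial.C (C a) := by simp [finSuccEquiv_apply]
    rw [h1]
    simp only [Polynomial.leadingCoeff_C, map_pow, Polynomial.leadingCoeff_pow]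
    have : ∀ j, ((finSuccEquiv k n) (nT u (X j))).leadingCoeff = 1 := fun j ↦ by
      cases j using Fin.cases with
      | zero => simp [nT_X_zero, finSuccEquiv_X_zero]
      | succ i =>
        rw [nT_X_succ]
        simp only [map_add, map_pow, finSuccEquiv_X_succ, finSuccEquiv_X_zero]
        rw [add_comm, Polynomial.leadingCoeff_X_pow_add_C (hup _)]
    simp only [this, one_pow, Finset.prod_const_one, mul_one]
  exact fun i ↦ pow_zero _

/-- `nT` maps `f` into some polynomial in `X_0` such that the leading coefficient is
a nonzero constant. -/
lemma nT_leadingcoeff (fne : f ≠ 0) :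
    ∃ u : ℕ, ∃ a : k, a ≠ 0 ∧ (finSuccEquiv k n (nT u f)).leadingCoeff = C a := by
  obtain ⟨u, hu⟩ : ∃ u, u = 2 + f.totalDegree := ⟨_, rfl⟩
  have hu1 : 1 < u := by omega
  refine ⟨u, ?_⟩
  obtain ⟨v, vin, vs⟩ := Finset.exists_max_image f.support
    (fun v ↦ (nT u ((monomial v) (coeff v f))).degreeOf 0) (support_nonempty.mpr fne)
  set h := fun w ↦ (MvPolynomial.monomial w) (coeff w f) with hh
  simp only [← natDegree_finSuccEquiv] at vs
  have hdlt : ∀ w ∈ f.support, ∀ i, w i < u := fun w hw i =>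
    lt_of_le_of_lt ((monomial_le_degreeOf i hw).trans (degreeOf_le_totalDegree f i)) (by lia)
  replace vs : ∀ x ∈ f.support \ {v}, (finSuccEquiv k n (nT u (h x))).degree <
      (finSuccEquiv k n (nT u (h v))).degree := by
    intro x hx
    obtain ⟨h1, h2⟩ := Finset.mem_sdiff.mp hx
    apply Polynomial.degree_lt_degree <| lt_of_le_of_ne (vs x h1) ?_
    rw [natDegree_finSuccEquiv, natDegree_finSuccEquiv,
      n_degreeOf_zero _ (mem_support_iff.mp h1) hu1, n_degreeOf_zero _ (mem_support_iff.mp vin) hu1]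
    exact n_sum_ne _ _ hu1 (hdlt x h1) (hdlt v vin) (by simpa using h2)
  have hc : (finSuccEquiv k n (nT u (h v + ∑ x ∈ f.support \ {v}, h x))).leadingCoeff =
      (finSuccEquiv k n (nT u (h v))).leadingCoeff := by
    simp only [map_add, map_sum]
    rw [add_comm]
    apply Polynomial.leadingCoeff_add_of_degree_lt <|
      (lt_of_le_of_lt <| Polynomial.degree_sum_le _ _) ?_
    have h2 : h v ≠ 0 := by simpa [h] using mem_support_iff.mp vin
    replace h2 : (finSuccEquiv k n (nT u (h v))) ≠ 0 := fun eq ↦ h2 <|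
      by simpa only [map_eq_zero_iff _ (AlgEquiv.injective _)] using eq
    exact (Finset.sup_lt_iff <| Ne.bot_lt (fun x ↦ h2 <| Polynomial.degree_eq_bot.mp x)).mpr vs
  refine ⟨coeff v f, mem_support_iff.mp vin, ?_⟩
  rw [← n_leadingCoeff v hu1, ← hc, ← Finset.sum_eq_add_sum_sdiff_singleton_of_mem vin h,
    f.support_sum_monomial_coeff]

end Noether



section PartB

/-- `X` factors through a free module of rank `s` up to `g`. -/
def HypS {R : Type*} [CommRing R] {N : Type*} [Fintype N] (s : ℕ) (X : Matrix N N R) (g : R) :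
    Prop :=
  ∃ (ι : Matrix N (Fin s) R) (κ : Matrix (Fin s) N R), κ * ι = g • (1 : Matrix (Fin s) (Fin s) R)
    ∧ ι * κ = g • X

/-- `X` factors through a free module up to `g`. -/
def Hyp {R : Type*} [CommRing R] {N : Type*} [Fintype N] (X : Matrix N N R) (g : R) : Prop :=
  ∃ s, HypS s X g

/-- Every idempotent matrix has free image. -/
def QS (R : Type*) [CommRing R] : Prop :=
  ∀ (N : ℕ) (X : Matrix (Fin N) (Fin N) R), X * X = X → Hyp X 1

variable {R : Type*} [CommRing R] {N : Type*} [Fintype N] [DecidableEq N]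

lemma Hyp.mul {X : Matrix N N R} {g : R} (h : Hyp X g) (a : R) : Hyp X (a * g) := by
  obtain ⟨s, ι, κ, h1, h2⟩ := h
  refine ⟨s, a • ι, κ, ?_, ?_⟩
  · rw [Matrix.mul_smul, h1, smul_smul]
  · rw [Matrix.smul_mul, h2, smul_smul]

lemma Hyp.conj {X Y E E' : Matrix N N R} {g : R} (h : Hyp Y g) (h1 : E * E' = 1)
    (h2 : E' * E = 1) (h3 : E * Y = X * E) : Hyp X g := by
  obtain ⟨s, ι, κ, h4, h5⟩ := h
  refine ⟨s, E * ι, κ * E', ?_, ?_⟩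
  · rw [Matrix.mul_assoc, ← Matrix.mul_assoc E', h2, Matrix.one_mul, h4]
  · rw [Matrix.mul_assoc, ← Matrix.mul_assoc ι, h5, Matrix.smul_mul, Matrix.mul_smul, ← Matrix.mul_assoc, h3,
      Matrix.mul_assoc, h1, Matrix.mul_one]

lemma Hyp.map {B : Type*} [CommRing B] (φ : R →+* B) {X : Matrix N N R} {g : R} (h : Hyp X g) :
    Hyp (X.map φ) (φ g) := by
  obtain ⟨s, ι, κ, h1, h2⟩ := h
  refine ⟨s, ι.map φ, κ.map φ, ?_, ?_⟩
  · rw [← Matrix.map_mul, h1, Matrix.map_smul' _ _ _ (map_mul φ)]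
    simp [Matrix.map_one]
  · rw [← Matrix.map_mul, h2, Matrix.map_smul' _ _ _ (map_mul φ)]

lemma Hyp.of_fintype {S : Type*} [Fintype S] [DecidableEq S] {X : Matrix N N R} {g : R}
    (ι : Matrix N S R) (κ : Matrix S N R) (h1 : κ * ι = g • (1 : Matrix S S R))
    (h2 : ι * κ = g • X) : Hyp X g := by
  let e := (Fintype.equivFin S).symm
  refine ⟨Fintype.card S, ι.submatrix id e, κ.submatrix e id, ?_, ?_⟩
  · rw [← submatrix_mul _ _ _ _ _ Function.bijective_id, h1]
    ext i j
    simp [Matrix.one_apply]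
  · rw [submatrix_mul_equiv, h2]
    rfl

lemma exists_coprime_mul {A : Type*} [CommRing A] [IsDomain A] [IsPrincipalIdealRing A]
    {n : Type*} [Fintype n] (v : n → A) (hv : v ≠ 0) :
    ∃ (d : A) (w y : n → A), d ≠ 0 ∧ v = d • w ∧ ∑ i, w i * y i = 1 := by
  obtain ⟨d, hd⟩ := (IsPrincipalIdealRing.principal (Ideal.span (Set.range v))).principal
  change Ideal.span _ = Ideal.span {d} at hd
  have h1 : ∀ i, ∃ c, v i = d * c := fun i => by
    have : v i ∈ Ideal.span {d} := hd ▸ Ideal.subset_span ⟨i, rfl⟩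
    exact Ideal.mem_span_singleton.1 this
  choose w hw using h1
  have h2 : d ∈ Ideal.span (Set.range v) := hd ▸ Ideal.mem_span_singleton_self d
  obtain ⟨y, hy⟩ := (Ideal.mem_span_range_iff_exists_fun).1 h2
  have hd0 : d ≠ 0 := by
    rintro rfl
    exact hv (by ext i; simp [hw])
  refine ⟨d, w, y, hd0, by ext i; simp [hw], mul_left_cancel₀ hd0 ?_⟩
  rw [Finset.mul_sum, mul_one]
  conv_rhs => rw [← hy]
  refine Finset.sum_congr rfl fun i _ => ?_
  rw [hw i]; ring

lemma nakayama_monic {B : Type*} [CommRing B] (J : Ideal (Polynomial B)) (g : Polynomial B)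
    (hg : g.Monic) (hgJ : g ∈ J) (I : Ideal B) (h : J ⊔ I.map Polynomial.C = ⊤) :
    ∃ c : B, c - 1 ∈ I ∧ Polynomial.C c ∈ J := by
  have fin1 : Module.Finite B (Polynomial B ⧸ Ideal.span {g}) := by
    exact (AdjoinRoot.powerBasis' hg).finite
  have fin2 : Module.Finite B (Polynomial B ⧸ J) := by
    have hle : Ideal.span {g} ≤ J := (Ideal.span_singleton_le_iff_mem _).2 hgJ
    exact Module.Finite.of_surjective (Ideal.Quotient.factorₐ B hle).toLinearMap
      (Ideal.Quotient.factor_surjective hle)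
  have key : (⊤ : Submodule B (Polynomial B ⧸ J)) ≤ I • ⊤ := by
    have hmem : ∀ x ∈ I.map Polynomial.C, (Ideal.Quotient.mk J x) ∈
        (I • ⊤ : Submodule B (Polynomial B ⧸ J)) := by
      intro x hx
      refine Submodule.span_induction ?_ ?_ ?_ ?_ hx
      · rintro _ ⟨b, hb, rfl⟩
        have : Ideal.Quotient.mk J (Polynomial.C b) = b • (1 : Polynomial B ⧸ J) := by
          change _ = Ideal.Quotient.mk J (b • 1)
          rw [Polynomial.smul_eq_C_mul, mul_one]
        rw [this]
        exact Submodule.smul_mem_smul hb trivial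
      · simp
      · intro x y _ _ hx hy
        rw [map_add]; exact Submodule.add_mem _ hx hy
      · intro a x _ hx
        rw [smul_eq_mul, map_mul]
        refine Submodule.smul_induction_on hx ?_ ?_
        · intro r hr n _
          rw [mul_smul_comm]
          exact Submodule.smul_mem_smul hr trivial
        · intro x y hx hy
          rw [mul_add]; exact Submodule.add_mem _ hx hy
    rintro y -
    obtain ⟨x, rfl⟩ := Ideal.Quotient.mk_surjective y
    have hx : x ∈ J ⊔ I.map Polynomial.C := h ▸ Submodule.mem_top
    obtain ⟨a, ha, b, hb, rfl⟩ := Submodule.mem_sup.1 hx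
    rw [map_add, Ideal.Quotient.eq_zero_iff_mem.2 ha, zero_add]
    exact hmem b hb
  obtain ⟨c, hc, hc'⟩ := Submodule.exists_sub_one_mem_and_smul_eq_zero_of_fg_of_le_smul I ⊤
    (Module.Finite.fg_top) key
  refine ⟨c, hc, ?_⟩
  have := hc' 1 trivial
  change Ideal.Quotient.mk J (c • 1) = 0 at this
  rw [Polynomial.smul_eq_C_mul, mul_one] at this
  exact Ideal.Quotient.eq_zero_iff_mem.1 this

lemma horrocks_one [IsDomain R] [UniqueFactorizationMonoid R] (X : Matrix N N R) (f : R)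
    (hf : f ≠ 0) : HypS 1 X f → HypS 1 X 1 := by
  induction f using UniqueFactorizationMonoid.induction_on_prime with
  | h₁ => exact absurd rfl hf
  | h₂ x hx =>
    rintro ⟨ι, κ, h1, h2⟩
    obtain ⟨u, rfl⟩ := hx
    refine ⟨(↑u⁻¹ : R) • ι, κ, ?_, ?_⟩
    · rw [Matrix.mul_smul, h1, smul_smul, Units.inv_mul]
    · rw [Matrix.smul_mul, h2, smul_smul, Units.inv_mul]
  | h₃ a p ha hp ih =>
    rintro ⟨ι, κ, h1, h2⟩
    apply ih ha
    have h3 : ∀ i j, p ∣ ι i 0 * κ 0 j := by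
      intro i j
      have := congrFun (congrFun h2 i) j
      simp [Matrix.mul_apply] at this
      rw [this, mul_assoc]
      exact dvd_mul_right _ _
    by_cases h4 : ∀ i, p ∣ ι i 0
    · choose ι' h' using h4
      have e : ι = p • (Matrix.of fun i _ => ι' i) := by
        ext i j
        rw [Subsingleton.elim j 0]
        simp [h']
      refine ⟨(Matrix.of fun i _ => ι' i), κ, ?_, ?_⟩
      · rw [e, Matrix.mul_smul, SemigroupAction.mul_smul] at h1
        exact smul_right_injective _ hp.ne_zero h1
      · rw [e, Matrix.smul_mul, SemigroupAction.mul_smul] at h2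
        exact smul_right_injective _ hp.ne_zero h2
    · push Not at h4
      obtain ⟨i0, hi0⟩ := h4
      have h5 : ∀ j, p ∣ κ 0 j := fun j => (hp.dvd_or_dvd (h3 i0 j)).resolve_left hi0
      choose κ' h' using h5
      have e : κ = p • (Matrix.of fun _ i => κ' i) := by
        ext j i
        rw [Subsingleton.elim j 0]
        simp [h']
      refine ⟨ι, (Matrix.of fun _ i => κ' i), ?_, ?_⟩
      · rw [e, Matrix.smul_mul, SemigroupAction.mul_smul] at h1
        exact smul_right_injective _ hp.ne_zero h1
      · rw [e, Matrix.mul_smul, SemigroupAction.mul_smul] at h2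
        exact smul_right_injective _ hp.ne_zero h2

end PartB



section PartB2
variable {R : Type*} [CommRing R] {N : Type*} [Fintype N] [DecidableEq N]

lemma hyp_absorb [IsDomain R] {S : Type*} [Fintype S] [DecidableEq S] {X : Matrix N N R} {f : R}
    (hf : f ≠ 0) {ι : Matrix N S R}
    {κ : Matrix S N R} (h1 : κ * ι = f • (1 : Matrix S S R)) (h2 : ι * κ = f • X) :
    κ * X = κ ∧ X * ι = ι := by
  constructor
  · apply smul_right_injective _ hf
    simp only
    rw [← Matrix.mul_smul, ← h2, ← Matrix.mul_assoc, h1, Matrix.smul_mul, Matrix.one_mul]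
  · apply smul_right_injective _ hf
    simp only
    rw [← Matrix.smul_mul, ← h2, Matrix.mul_assoc, h1, Matrix.mul_smul, Matrix.mul_one]

lemma split_idem {X : Matrix N N R} (hX : X * X = X) {q : Matrix N (Fin 1) R}
    {φ : Matrix (Fin 1) N R} (hq : X * q = q) (hφ : φ * X = φ) (hφq : φ * q = 1) :
    (X - q * φ) * (X - q * φ) = X - q * φ ∧ (X - q * φ) * q = 0 ∧ φ * (X - q * φ) = 0 := by
  have h1 : (X - q * φ) * q = 0 := by
    rw [Matrix.sub_mul, hq, Matrix.mul_assoc, hφq, Matrix.mul_one, sub_self]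
  refine ⟨?_, h1, ?_⟩
  · rw [Matrix.mul_sub, ← Matrix.mul_assoc, h1, Matrix.zero_mul, sub_zero, Matrix.sub_mul, hX,
      Matrix.mul_assoc, hφ]
  · rw [Matrix.mul_sub, hφ, ← Matrix.mul_assoc, hφq, Matrix.one_mul, sub_self]

lemma hyp_of_split [IsDomain R] {X : Matrix N N R} (hX : X * X = X) {q : Matrix N (Fin 1) R}
    {φ : Matrix (Fin 1) N R} (hq : X * q = q) (hφ : φ * X = φ) (hφq : φ * q = 1)
    (h : Hyp (X - q * φ) 1) : Hyp X 1 := by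
  obtain ⟨h3, h4, h5⟩ := split_idem hX hq hφ hφq
  obtain ⟨s, ι, κ, h1, h2⟩ := h
  obtain ⟨h6, h7⟩ := hyp_absorb one_ne_zero h1 h2
  rw [one_smul] at h1 h2
  refine Hyp.of_fintype (fromCols q ι) (fromRows φ κ) ?_ ?_
  · rw [fromRows_mul_fromCols, hφq, h1, ← h7, ← Matrix.mul_assoc, h5, ← h6, Matrix.mul_assoc, h4]
    simp
  · rw [fromCols_mul_fromRows, h2, one_smul]
    abel

lemma hyp_reduce [IsDomain R] {s : ℕ} {X : Matrix N N R} (hX : X * X = X) {f g : R} (hf : f ≠ 0)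
    {ι : Matrix N (Fin (s + 1)) R} {κ : Matrix (Fin (s + 1)) N R}
    (h1 : κ * ι = f • (1 : Matrix (Fin (s + 1)) (Fin (s + 1)) R)) (h2 : ι * κ = f • X)
    {q : Matrix N (Fin 1) R}
    {φ : Matrix (Fin 1) N R} (hq : X * q = q) (hφ : φ * X = φ) (hφq : φ * q = 1)
    (hg : κ.submatrix (fun _ : Fin 1 => 0) id * q = g • (1 : Matrix (Fin 1) (Fin 1) R)) :
    HypS s (X - q * φ) (f * g) := by
  obtain ⟨h3, h4, h5⟩ := split_idem hX hq hφ hφq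
  obtain ⟨h6, h7⟩ := hyp_absorb hf h1 h2
  set κ₁ := κ.submatrix (fun _ : Fin 1 => 0) id with hκ₁
  set X' := X - q * φ with hX'
  set T := g • κ - κ * q * κ₁ with hT
  have hk1 : κ₁ * X = κ₁ := by
    have : κ₁ * X = (κ * X).submatrix (fun _ : Fin 1 => 0) id := by
      rw [submatrix_mul κ X _ id _ Function.bijective_id]; rfl
    rw [this, h6]
  have hk2 : κ₁ * ι = f • (1 : Matrix (Fin (s + 1)) (Fin (s + 1)) R).submatrix (fun _ : Fin 1 => 0) id := by
    have : κ₁ * ι = (κ * ι).submatrix (fun _ : Fin 1 => 0) id := by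
      rw [submatrix_mul κ ι _ id _ Function.bijective_id]; rfl
    rw [this, h1]; rfl
  have hTX : T * X = T := by
    rw [hT, Matrix.sub_mul, Matrix.smul_mul, h6, Matrix.mul_assoc, hk1]
  have hTq : T * q = 0 := by
    rw [hT, Matrix.sub_mul, Matrix.smul_mul, Matrix.mul_assoc, hg, Matrix.mul_smul,
      Matrix.mul_one, sub_self]
  have hTX' : T * X' = T := by
    rw [hX', Matrix.mul_sub, hTX, ← Matrix.mul_assoc, hTq, Matrix.zero_mul, sub_zero]
  have hT0 : ∀ j, T 0 j = 0 := by
    intro j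
    have e1 : (κ * q) 0 0 = g := by
      have := congrFun (congrFun hg 0) 0
      simpa [hκ₁, Matrix.mul_apply] using this
    simp only [hT, Matrix.sub_apply, Matrix.smul_apply, Matrix.mul_apply (M := κ * q)]
    simp [e1, hκ₁]
  have hTι : ∀ i j, (T * ι) i (Fin.succ j) = (f * g) • (1 : Matrix _ _ R) i j.succ := by
    intro i j
    rw [hT, Matrix.sub_mul, Matrix.smul_mul, h1, Matrix.mul_assoc, hk2]
    simp [Matrix.mul_apply, (Fin.succ_ne_zero j).symm, Matrix.one_apply]
    rw [mul_comm]
  refine ⟨(X' * ι).submatrix id Fin.succ, T.submatrix Fin.succ id, ?_, ?_⟩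
  · rw [← submatrix_mul _ _ _ _ _ Function.bijective_id, ← Matrix.mul_assoc, hTX']
    ext i j
    rw [submatrix_apply, hTι]
    simp [Matrix.one_apply]
  · have e : (X' * ι).submatrix id Fin.succ * T.submatrix Fin.succ id = X' * ι * T := by
      ext i j
      rw [Matrix.mul_apply, Matrix.mul_apply (M := X' * ι), Fin.sum_univ_succ]
      simp [hT0]
    have e2 : X' * ι * κ = f • X' := by
      rw [Matrix.mul_assoc, h2, Matrix.mul_smul, hX', Matrix.sub_mul, hX, Matrix.mul_assoc, hφ]
    rw [e, hT, Matrix.mul_sub, Matrix.mul_smul, e2, ← Matrix.mul_assoc, ← Matrix.mul_assoc, e2,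
      Matrix.smul_mul, h4, smul_zero, Matrix.zero_mul, sub_zero, smul_smul, mul_comm]


set_option maxHeartbeats 1000000 in
lemma horrocks {B : Type*} [CommRing B] [IsDomain B] [IsLocalRing B]
    [UniqueFactorizationMonoid (Polynomial B)] (s : ℕ) :
    ∀ (X : Matrix N N (Polynomial B)) (f : Polynomial B), X * X = X → f.Monic → HypS s X f →
      Hyp X 1 := by
  induction s with
  | zero =>
    rintro X f hX hf ⟨ι, κ, h1, h2⟩
    have hX0 : X = 0 := by
      apply smul_right_injective _ hf.ne_zero
      simp only
      rw [← h2]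
      ext i j
      simp [Matrix.mul_apply]
    refine ⟨0, ι, κ, by ext i; exact i.elim0, ?_⟩
    ext i j
    simp [Matrix.mul_apply, hX0]
  | succ s ih =>
    rintro X f hX hf h
    rcases s with _ | s
    · exact ⟨1, horrocks_one X f hf.ne_zero h⟩
    obtain ⟨ι, κ, h1, h2⟩ := h
    obtain ⟨h6, h7⟩ := hyp_absorb hf.ne_zero h1 h2
    let π : Polynomial B →+* Polynomial (IsLocalRing.ResidueField B) :=
      Polynomial.mapRingHom (IsLocalRing.residue B)
    have hπf : π f ≠ 0 := (hf.map (IsLocalRing.residue B)).ne_zero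
    have e12 : ∑ i, π (κ 1 i) * π (ι i 1) = π f := by
      have := congrFun (congrFun h1 1) 1
      simp [Matrix.mul_apply] at this
      rw [← this, map_sum]
      simp
    have e02 : ∑ i, π (κ 1 i) * π (ι i 0) = 0 := by
      have := congrFun (congrFun h1 1) 0
      simp [Matrix.mul_apply] at this
      rw [← map_zero π, ← this, map_sum]
      simp
    have eX : ∀ j, ∑ i, π (κ 1 i) * π (X i j) = π (κ 1 j) := by
      intro j
      have := congrFun (congrFun h6 1) j
      simp [Matrix.mul_apply] at this
      rw [← this, map_sum]
      simp
    obtain ⟨d, w, y0, hd, hw, hwy⟩ := exists_coprime_mul (fun i => π (κ 1 i)) (by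
      intro h
      apply hπf
      rw [← e12]
      refine Finset.sum_eq_zero fun i _ => ?_
      have : π (κ 1 i) = 0 := congrFun h i
      rw [this, zero_mul])
    have hw' : ∀ i, π (κ 1 i) = d * w i := fun i => congrFun hw i
    have e02' : ∑ i, w i * π (ι i 0) = 0 := by
      apply mul_left_cancel₀ hd
      rw [mul_zero, ← e02, Finset.mul_sum]
      exact Finset.sum_congr rfl fun i _ => by rw [hw', mul_assoc]
    have eX' : ∀ j, ∑ i, w i * π (X i j) = w j := by
      intro j
      apply mul_left_cancel₀ hd
      rw [← hw', ← eX j, Finset.mul_sum]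
      exact Finset.sum_congr rfl fun i _ => by rw [hw', mul_assoc]
    have hsurj : Function.Surjective π :=
      Polynomial.map_surjective _ IsLocalRing.residue_surjective
    choose y1 hy1 using fun i => hsurj (y0 i)
    let y : N → Polynomial B := fun i => ∑ j, X i j * y1 j
    have hwy' : ∑ i, w i * π (y i) = 1 := by
      simp only [y, map_sum, map_mul, hy1, Finset.mul_sum]
      rw [Finset.sum_comm]
      rw [← hwy]
      refine Finset.sum_congr rfl fun j _ => ?_
      rw [← eX' j, Finset.sum_mul]
      exact Finset.sum_congr rfl fun i _ => by rw [mul_assoc]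
    let ky := ∑ i, κ 0 i * y i
    let M := ky.natDegree + 1
    let q : N → Polynomial B := fun i => Polynomial.X ^ M * ι i 0 + y i
    let g := ∑ i, κ 0 i * q i
    have hgeq : g = Polynomial.X ^ M * f + ky := by
      have h00 := congrFun (congrFun h1 0) 0
      simp [Matrix.mul_apply] at h00
      rw [← h00, Finset.mul_sum]
      simp only [g, q, ky]
      rw [← Finset.sum_add_distrib]
      exact Finset.sum_congr rfl fun i _ => by ring
    have hg : g.Monic := by
      rw [hgeq]
      have hm : (Polynomial.X ^ M * f).Monic := (Polynomial.monic_X_pow M).mul hf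
      refine hm.add_of_left ?_
      refine Polynomial.degree_lt_degree ?_
      rw [(Polynomial.monic_X_pow M).natDegree_mul hf, Polynomial.natDegree_X_pow]
      omega
    have hJ : ∃ c : B, c - 1 ∈ IsLocalRing.maximalIdeal B ∧
        Polynomial.C c ∈ Ideal.span (Set.range q) := by
      refine nakayama_monic _ g hg ?_ _ ?_
      · exact Ideal.sum_mem _ fun i _ => Ideal.mul_mem_left _ _ (Ideal.subset_span ⟨i, rfl⟩)
      · choose w' hw'' using fun i => hsurj (w i)
        rw [Ideal.eq_top_iff_one]
        have h8 : π (1 - ∑ i, w' i * q i) = 0 := by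
          rw [map_sub, map_one, map_sum, ← hwy', sub_eq_zero]
          simp only [map_mul, hw'', q, map_add, mul_add, Finset.sum_add_distrib]
          have : ∑ x, w x * (π (Polynomial.X ^ M) * π (ι x 0)) = 0 := by
            rw [← mul_zero (π (Polynomial.X ^ M)), ← e02', Finset.mul_sum]
            exact Finset.sum_congr rfl fun i _ => by ring
          rw [this, zero_add]
        have h9 : (1 - ∑ i, w' i * q i) ∈ (IsLocalRing.maximalIdeal B).map Polynomial.C := by
          rw [Ideal.mem_map_C_iff]
          intro n
          rw [← IsLocalRing.residue_eq_zero_iff, ← Polynomial.coeff_map]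
          change (π _).coeff n = 0
          rw [h8, Polynomial.coeff_zero]
        have : (1 : Polynomial B) = ∑ i, w' i * q i + (1 - ∑ i, w' i * q i) := by ring
        rw [this]
        exact Submodule.add_mem_sup
          (Ideal.sum_mem _ fun i _ => Ideal.mul_mem_left _ _ (Ideal.subset_span ⟨i, rfl⟩)) h9
    obtain ⟨c, hc, hcJ⟩ := hJ
    have hcu : IsUnit c := by
      by_contra hcn
      have : c ∈ IsLocalRing.maximalIdeal B := hcn
      have h1 : (1 : B) ∈ IsLocalRing.maximalIdeal B := by
        have := Ideal.sub_mem _ this hc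
        simpa using this
      exact h1 isUnit_one
    have hone : (1 : Polynomial B) ∈ Ideal.span (Set.range q) := by
      rw [← Ideal.eq_top_iff_one]
      exact Ideal.eq_top_of_isUnit_mem _ hcJ (hcu.map Polynomial.C)
    obtain ⟨φ0, hφ0⟩ := (Ideal.mem_span_range_iff_exists_fun).1 hone
    let qm : Matrix N (Fin 1) (Polynomial B) := Matrix.of fun i _ => q i
    let φm : Matrix (Fin 1) N (Polynomial B) := Matrix.of fun _ i => φ0 i
    have hXq : X * qm = qm := by
      have hq2 : qm = (Polynomial.X ^ M : Polynomial B) • ι.submatrix id (fun _ : Fin 1 => 0) +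
          X * Matrix.of fun i _ => y1 i := by
        ext1 i j
        simp [qm, q, y, Matrix.mul_apply]
      rw [hq2, Matrix.mul_add, Matrix.mul_smul, ← Matrix.mul_assoc, hX]
      have : X * ι.submatrix id (fun _ : Fin 1 => 0) = ι.submatrix id (fun _ : Fin 1 => 0) := by
        have : X * ι.submatrix id (fun _ : Fin 1 => 0) =
            (X * ι).submatrix id (fun _ : Fin 1 => 0) := by
          rw [submatrix_mul X ι _ id _ Function.bijective_id]; rfl
        rw [this, h7]
      rw [this]
    have hφ1 : φm * qm = 1 := by
      ext1 i j
      rw [Subsingleton.elim i j]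
      simp [Matrix.mul_apply, φm, qm, hφ0]
    have hφX : φm * X * X = φm * X := by rw [Matrix.mul_assoc, hX]
    have hφq : φm * X * qm = 1 := by rw [Matrix.mul_assoc, hXq, hφ1]
    refine hyp_of_split hX hXq hφX hφq ?_
    refine ih _ (f * g) (split_idem hX hXq hφX hφq).1 (hf.mul hg) ?_
    refine hyp_reduce hX hf.ne_zero h1 h2 hXq hφX hφq ?_
    ext1 i j
    rw [Subsingleton.elim i j]
    simp [Matrix.mul_apply, qm, g]

end PartB2



section PartB3

lemma Matrix.map_inj_of {R S : Type*} {m n : Type*} {f : R → S} (hf : Function.Injective f)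
    {P Q : Matrix m n R} (h : P.map f = Q.map f) : P = Q :=
  Matrix.map_injective hf h

lemma exists_clear {A A' : Type*} [CommRing A] [CommRing A'] [Algebra A A'] (S : Submonoid A)
    [IsLocalization S A'] {m n : Type*} [Finite m] [Finite n] (P : Matrix m n A') :
    ∃ c ∈ S, ∃ Q : Matrix m n A, Q.map (algebraMap A A') = algebraMap A A' c • P := by
  obtain ⟨b, hb⟩ := IsLocalization.exist_integer_multiples_of_finite S
    (fun x : m × n => P x.1 x.2)
  choose Q hQ using hb
  refine ⟨b, b.2, Matrix.of fun i j => Q (i, j), ?_⟩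
  ext i j
  simp [hQ, Algebra.smul_def]

variable {N : Type*} [Fintype N] [DecidableEq N]

lemma hyp_of_localization {A A' : Type*} [CommRing A] [CommRing A'] [Algebra A A'] (S : Submonoid A)
    [IsLocalization S A'] (hinj : Function.Injective (algebraMap A A')) {X : Matrix N N A}
    (h : Hyp (X.map (algebraMap A A')) 1) : ∃ c ∈ S, Hyp X c := by
  obtain ⟨s, ι, κ, h1, h2⟩ := h
  obtain ⟨a, ha, ι', hι⟩ := exists_clear S ι
  obtain ⟨b, hb, κ', hκ⟩ := exists_clear S κ
  rw [one_smul] at h1 h2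
  refine ⟨a * b, S.mul_mem ha hb, s, ι', κ', ?_, ?_⟩
  · apply Matrix.map_inj_of hinj
    rw [Matrix.map_mul, hι, hκ, Matrix.smul_mul, Matrix.mul_smul, h1,
      Matrix.map_smul' _ _ _ (map_mul _), smul_smul, map_mul, mul_comm]
    simp [Matrix.map_one]
  · apply Matrix.map_inj_of hinj
    rw [Matrix.map_mul, hι, hκ, Matrix.smul_mul, Matrix.mul_smul, h2,
      Matrix.map_smul' _ _ _ (map_mul _), smul_smul, map_mul]

lemma hyp_field {K : Type*} [Field K] (X : Matrix N N K) (hX : X * X = X) : Hyp X 1 := by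
  let e := Matrix.toLin' X
  let b := Module.finBasis K (LinearMap.range e)
  have he : ∀ v ∈ LinearMap.range e, e v = v := by
    rintro _ ⟨w, rfl⟩
    simp only [e, toLin'_apply, mulVec_mulVec, hX]
  refine ⟨_, Matrix.of fun i j => (b j : N → K) i,
    Matrix.of fun i j => b.repr (e.rangeRestrict (Pi.single j 1)) i, ?_, ?_⟩
  · rw [one_smul]
    ext i j
    have h1 : e.rangeRestrict (b j : N → K) = b j := by
      apply Subtype.ext
      simp only [LinearMap.codRestrict_apply, LinearMap.rangeRestrict]
      exact he _ (b j).2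
    have h2 : b.repr (e.rangeRestrict (b j : N → K)) i = (1 : Matrix _ _ K) i j := by
      rw [h1, Module.Basis.repr_self, Matrix.one_apply, Finsupp.single_apply]
      simp only [eq_comm]
    rw [← h2, Matrix.mul_apply]
    have h3 : (b j : N → K) = ∑ t, (b j : N → K) t • (Pi.single t 1 : N → K) := by
      ext t
      simp [Finset.sum_apply, Pi.single_apply]
    conv_rhs => rw [h3]
    simp [map_sum, map_smul, Finsupp.finset_sum_apply, mul_comm]
  · rw [one_smul]
    ext i j
    rw [Matrix.mul_apply]
    have h1 := congrArg (Subtype.val) (b.sum_repr (e.rangeRestrict (Pi.single j 1)))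
    have h2 := congrFun h1 i
    have h3 : (e.rangeRestrict (Pi.single j 1) : N → K) i = X i j := by
      simp [LinearMap.rangeRestrict, e]
    rw [h3] at h2
    rw [← h2, Submodule.coe_sum, Finset.sum_apply]
    refine Finset.sum_congr rfl fun t _ => ?_
    rw [Submodule.coe_smul, Pi.smul_apply, smul_eq_mul, mul_comm]
    rfl

lemma hyp_generic {A : Type*} [CommRing A] [IsDomain A] (X : Matrix N N A) (hX : X * X = X) :
    ∃ g : A, g ≠ 0 ∧ Hyp X g := by
  obtain ⟨c, hc, h⟩ := hyp_of_localization (A' := FractionRing A) (nonZeroDivisors A)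
    (IsFractionRing.injective A _) (X := X)
    (hyp_field _ (by rw [← Matrix.map_mul, hX]))
  exact ⟨c, nonZeroDivisors.ne_zero hc, h⟩

/-- Conjugacy of matrices. -/
def MConj {A : Type*} [CommRing A] (X Y : Matrix N N A) : Prop :=
  ∃ E E' : Matrix N N A, E * E' = 1 ∧ E' * E = 1 ∧ E * Y = X * E

lemma MConj.refl {A : Type*} [CommRing A] (X : Matrix N N A) : MConj X X :=
  ⟨1, 1, by simp, by simp, by simp⟩

lemma MConj.trans {A : Type*} [CommRing A] {X Y Z : Matrix N N A} (h1 : MConj X Y)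
    (h2 : MConj Y Z) : MConj X Z := by
  obtain ⟨E, E', a1, a2, a3⟩ := h1
  obtain ⟨D, D', b1, b2, b3⟩ := h2
  refine ⟨E * D, D' * E', ?_, ?_, ?_⟩
  · rw [Matrix.mul_assoc, ← Matrix.mul_assoc D, b1, Matrix.one_mul, a1]
  · rw [Matrix.mul_assoc, ← Matrix.mul_assoc E', a2, Matrix.one_mul, b2]
  · rw [Matrix.mul_assoc, b3, ← Matrix.mul_assoc, a3, Matrix.mul_assoc]

/-- Substitution in a matrix of polynomials. -/
noncomputable def msub {B : Type*} [CommRing B] {m n : Type*} (X : Matrix m n (Polynomial B))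
    (b : Polynomial B) : Matrix m n (Polynomial B) := X.map (Polynomial.compRingHom b)

lemma msub_mul {B : Type*} [CommRing B] {m n o : Type*} [Fintype n]
    (X : Matrix m n (Polynomial B)) (Y : Matrix n o (Polynomial B))
    (b : Polynomial B) : msub (X * Y) b = msub X b * msub Y b := Matrix.map_mul

lemma msub_smul {B : Type*} [CommRing B] {m n : Type*} (c : B) (X : Matrix m n (Polynomial B))
    (b : Polynomial B) : msub (Polynomial.C c • X) b = Polynomial.C c • msub X b := by
  ext1 i j
  simp [msub]

lemma comp_sub_dvd {B : Type*} [CommRing B] (p b b' : Polynomial B) :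
    b - b' ∣ p.comp b - p.comp b' := by
  simpa only [Polynomial.comp, Polynomial.eval₂_eq_eval_map] using Polynomial.sub_dvd_eval_sub b b' (p.map Polynomial.C)

lemma msub_dvd {B : Type*} [CommRing B] {m n : Type*} (X : Matrix m n (Polynomial B))
    {c b b' : Polynomial B} (h : c ∣ b - b') : ∃ Y, msub X b = msub X b' + c • Y := by
  have : ∀ i j, ∃ y, (X i j).comp b - (X i j).comp b' = c * y := fun i j =>
    h.trans (comp_sub_dvd _ _ _)
  choose Y hY using this
  refine ⟨Matrix.of Y, ?_⟩
  ext1 i j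
  have := hY i j
  simp [msub]
  rw [← this]; ring

lemma patch_conj {B : Type*} [CommRing B] [IsDomain B] {X : Matrix N N (Polynomial B)} {c : B}
    (hc : c ≠ 0) (h1 : Hyp X (Polynomial.C c)) (h2 : Hyp (1 - X) (Polynomial.C c))
    (hX : X * X = X)
    {b b' : Polynomial B} (h : Polynomial.C (c ^ 2) ∣ b - b') :
    MConj (msub X b) (msub X b') := by
  have hc' : (Polynomial.C c : Polynomial B) ≠ 0 := by simpa using hc
  obtain ⟨s, ι, κ, a1, a2⟩ := h1
  obtain ⟨s', ι', κ', a1', a2'⟩ := h2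
  obtain ⟨a3, a4⟩ := hyp_absorb hc' a1 a2
  obtain ⟨a3', a4'⟩ := hyp_absorb hc' a1' a2'
  have a5 : κ * ι' = 0 := by
    rw [← a3, ← a4', Matrix.mul_assoc, ← Matrix.mul_assoc X, Matrix.mul_sub, hX, Matrix.mul_one,
      sub_self, Matrix.zero_mul, Matrix.mul_zero]
  have a6 : κ' * ι = 0 := by
    rw [← a4, ← a3', Matrix.mul_assoc, ← Matrix.mul_assoc (1 - X), Matrix.sub_mul, hX,
      Matrix.one_mul, sub_self, Matrix.zero_mul, Matrix.mul_zero]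
  have a7 : X * ι' = 0 := by
    rw [← a4', ← Matrix.mul_assoc, Matrix.mul_sub, hX, Matrix.mul_one, sub_self, Matrix.zero_mul]
  have a8 : κ' * X = 0 := by
    rw [← a3', Matrix.mul_assoc, Matrix.sub_mul, hX, Matrix.one_mul, sub_self, Matrix.mul_zero]
  have key : ∀ b b' : Polynomial B, Polynomial.C (c ^ 2) ∣ b - b' → ∃ E : Matrix N N (Polynomial B),
      msub ι b * msub κ b' + msub ι' b * msub κ' b' = Polynomial.C c • E := by
    intro b b' h
    obtain ⟨Y, hY⟩ := msub_dvd ι h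
    obtain ⟨Y', hY'⟩ := msub_dvd ι' h
    refine ⟨1 + Polynomial.C c • (Y * msub κ b' + Y' * msub κ' b'), ?_⟩
    rw [hY, hY', Matrix.add_mul, Matrix.add_mul, ← msub_mul, ← msub_mul, a2, a2', msub_smul,
      msub_smul]
    have : msub (1 - X) b' = 1 - msub X b' := by
      ext1 i j
      simp [msub, Matrix.one_apply]
      split_ifs <;> simp
    rw [this, smul_sub, smul_add, smul_smul, smul_add, map_pow, pow_two, Matrix.smul_mul,
      Matrix.smul_mul]
    abel
  have one : ∀ b b' : Polynomial B, (msub ι b * msub κ b' + msub ι' b * msub κ' b') *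
      (msub ι b' * msub κ b + msub ι' b' * msub κ' b) =
      (Polynomial.C c * Polynomial.C c) • (1 : Matrix N N (Polynomial B)) := by
    intro b b'
    have e1 : msub κ b' * msub ι b' = Polynomial.C c • 1 := by
      rw [← msub_mul, a1, msub_smul]; congr 1; simp [msub, Matrix.map_one]
    have e2 : msub κ' b' * msub ι' b' = Polynomial.C c • 1 := by
      rw [← msub_mul, a1', msub_smul]; congr 1; simp [msub, Matrix.map_one]
    have e3 : msub κ b' * msub ι' b' = 0 := by
      rw [← msub_mul, a5]; ext1 i j; simp [msub]
    have e4 : msub κ' b' * msub ι b' = 0 := by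
      rw [← msub_mul, a6]; ext1 i j; simp [msub]
    rw [Matrix.add_mul, Matrix.mul_add, Matrix.mul_add]
    rw [Matrix.mul_assoc, ← Matrix.mul_assoc (msub κ b'), e1]
    rw [Matrix.mul_assoc (msub ι b), ← Matrix.mul_assoc (msub κ b') (msub ι' b'), e3]
    rw [Matrix.mul_assoc (msub ι' b), ← Matrix.mul_assoc (msub κ' b'), e4]
    rw [Matrix.mul_assoc (msub ι' b), ← Matrix.mul_assoc (msub κ' b'), e2]
    simp only [Matrix.zero_mul, Matrix.mul_zero, add_zero, zero_add, Matrix.smul_mul,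
      Matrix.mul_smul, Matrix.one_mul]
    rw [← msub_mul, ← msub_mul, a2, a2', ← smul_add, msub_smul, msub_smul,
      ← smul_add, smul_smul]
    congr 1
    ext1 i j
    simp [msub, Matrix.one_apply]
    split_ifs <;> simp
  obtain ⟨E, hE⟩ := key b b' h
  obtain ⟨E', hE'⟩ := key b' b (by rw [← dvd_neg, neg_sub]; exact h)
  refine ⟨E, E', ?_, ?_, ?_⟩
  · have := one b b'
    rw [hE, hE', Matrix.smul_mul, Matrix.mul_smul, smul_smul] at this
    exact smul_right_injective _ (mul_ne_zero hc' hc') this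
  · have := one b' b
    rw [hE, hE', Matrix.smul_mul, Matrix.mul_smul, smul_smul] at this
    exact smul_right_injective _ (mul_ne_zero hc' hc') this
  · apply smul_right_injective _ hc'
    simp only
    rw [← Matrix.smul_mul, ← Matrix.mul_smul, ← hE, Matrix.add_mul, Matrix.mul_add,
      Matrix.mul_assoc, ← msub_mul, a3, Matrix.mul_assoc, ← msub_mul, a8, ← Matrix.mul_assoc,
      ← msub_mul, a4, ← Matrix.mul_assoc, ← msub_mul, a7]
    have z1 : ∀ (b : Polynomial B), msub (0 : Matrix (Fin s') N (Polynomial B)) b = 0 := by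
      intro b; ext1 i j; simp [msub]
    have z2 : ∀ (b : Polynomial B), msub (0 : Matrix N (Fin s') (Polynomial B)) b = 0 := by
      intro b; ext1 i j; simp [msub]
    rw [z1, z2]; simp

lemma patch {B : Type*} [CommRing B] [IsDomain B] {X : Matrix N N (Polynomial B)}
    (hX : X * X = X)
    (h : ∀ m : Ideal B, m.IsMaximal → ∃ c, c ∉ m ∧ Hyp X (Polynomial.C c) ∧
      Hyp (1 - X) (Polynomial.C c)) : MConj X (msub X 0) := by
  let I : Ideal B :=
    { carrier := {c | ∀ b b' : Polynomial B, Polynomial.C c ∣ b - b' →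
        MConj (msub X b) (msub X b')}
      zero_mem' := by
        intro b b' h
        rw [map_zero, zero_dvd_iff, sub_eq_zero] at h
        rw [h]; exact MConj.refl _
      add_mem' := by
        rintro c1 c2 h1 h2 b b' ⟨e, he⟩
        refine (h1 b (b' + Polynomial.C c2 * e) ⟨e, ?_⟩).trans (h2 _ _ ⟨e, by ring⟩)
        rw [map_add] at he
        linear_combination he
      smul_mem' := by
        intro a c hc b b' h
        refine hc b b' (dvd_trans ?_ h)
        rw [smul_eq_mul, map_mul]
        exact dvd_mul_left _ _ }
  have hI : I = ⊤ := by
    by_contra hne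
    obtain ⟨m, hm, hIm⟩ := Ideal.exists_le_maximal I hne
    obtain ⟨c, hc, h1, h2⟩ := h m hm
    have hc0 : c ≠ 0 := by rintro rfl; exact hc m.zero_mem
    have : c ^ 2 ∈ I := fun b b' hb => patch_conj hc0 h1 h2 hX hb
    exact hc (hm.isPrime.mem_of_pow_mem _ (hIm this))
  have h1 : (1 : B) ∈ I := hI ▸ Submodule.mem_top
  have := h1 Polynomial.X 0 (by simp)
  have e : msub X Polynomial.X = X := by ext1 i j; simp [msub]
  rwa [e] at this

lemma QS.of_equiv {A B : Type*} [CommRing A] [CommRing B] (e : A ≃+* B) (h : QS A) : QS B := by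
  intro n X hX
  have h1 := (h n (X.map e.symm) (by rw [← Matrix.map_mul, hX])).map (e : A →+* B)
  have : (X.map e.symm).map (e : A →+* B) = X := by ext1 i j; simp
  rw [this, map_one] at h1
  exact h1

lemma local_hyp {B : Type*} [CommRing B] [IsDomain B] [UniqueFactorizationMonoid B]
    {X : Matrix N N (Polynomial B)}
    (hX : X * X = X) {g : Polynomial B} (hg : g.Monic) (h : Hyp X g) (m : Ideal B)
    [hm : m.IsPrime] : ∃ c, c ∉ m ∧ Hyp X (Polynomial.C c) := by
  let B' := Localization.AtPrime m
  have : IsLocalization m.primeCompl B' := inferInstance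
  have : IsDomain B' := IsLocalization.isDomain_localization m.primeCompl_le_nonZeroDivisors
  have : UniqueFactorizationMonoid B' := inferInstance
  letI : Algebra (Polynomial B) (Polynomial B') := Polynomial.algebra B B'
  have hloc : IsLocalization (m.primeCompl.map Polynomial.C) (Polynomial B') :=
    Polynomial.isLocalization m.primeCompl B'
  have hmap : algebraMap (Polynomial B) (Polynomial B') = Polynomial.mapRingHom (algebraMap B B') :=
    rfl
  have hinj : Function.Injective (algebraMap (Polynomial B) (Polynomial B')) := by
    rw [hmap]
    exact Polynomial.map_injective _ (IsLocalization.injective B' m.primeCompl_le_nonZeroDivisors)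
  have h1 : Hyp (X.map (algebraMap (Polynomial B) (Polynomial B'))) 1 := by
    obtain ⟨s, hs⟩ := h.map (algebraMap (Polynomial B) (Polynomial B'))
    refine horrocks s _ _ ?_ ?_ hs
    · rw [← Matrix.map_mul, hX]
    · rw [hmap]; exact hg.map _
  obtain ⟨c, ⟨c', hc', rfl⟩, hc⟩ := hyp_of_localization (m.primeCompl.map Polynomial.C) hinj h1
  exact ⟨c', hc', hc⟩

lemma qs_step {B : Type*} [CommRing B] [IsDomain B] [UniqueFactorizationMonoid B] (hB : QS B)
    {n : ℕ} {X : Matrix (Fin n) (Fin n) (Polynomial B)}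
    (hX : X * X = X) {g : Polynomial B} (hg : g.Monic) (h : Hyp X g) (h' : Hyp (1 - X) g) :
    Hyp X 1 := by
  have hX' : (1 - X) * (1 - X) = 1 - X := by
    rw [Matrix.sub_mul, Matrix.mul_sub, Matrix.mul_sub, hX]; simp
  have h1 : MConj X (msub X 0) := by
    refine patch hX fun m hm => ?_
    obtain ⟨c, hc, a⟩ := local_hyp hX hg h m
    obtain ⟨c', hc', a'⟩ := local_hyp hX' hg h' m
    refine ⟨c * c', fun hcc => (hm.isPrime.mem_or_mem hcc).elim hc hc', ?_, ?_⟩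
    · rw [mul_comm, map_mul]; exact a.mul _
    · rw [map_mul]; exact a'.mul _
  obtain ⟨E, E', h2, h3, h4⟩ := h1
  refine Hyp.conj ?_ h2 h3 h4
  have h5 := (hB n (X.map Polynomial.constantCoeff) (by rw [← Matrix.map_mul, hX])).map
    (Polynomial.C : B →+* Polynomial B)
  rw [map_one] at h5
  convert h5 using 1
  ext1 i j
  simp [msub, Polynomial.coeff_zero_eq_eval_zero]

lemma qs_step' {A B : Type*} [CommRing A] [CommRing B] [IsDomain B] [UniqueFactorizationMonoid B]
    (hB : QS B) (e : A ≃+* Polynomial B)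
    {n : ℕ} {X : Matrix (Fin n) (Fin n) A}
    (hX : X * X = X) {g : A} (hg : (e g).Monic) (h : Hyp X g) (h' : Hyp (1 - X) g) :
    Hyp X 1 := by
  have m2 : Hyp (1 - X.map (e : A →+* Polynomial B)) (e g) := by
    have h1 := h'.map (e : A →+* Polynomial B)
    have h2 : (1 - X).map (e : A →+* Polynomial B) = 1 - X.map (e : A →+* Polynomial B) := by
      ext1 i j
      simp only [Matrix.map_apply, Matrix.sub_apply, map_sub, Matrix.one_apply]
      split_ifs <;> simp
    rwa [h2] at h1
  have h3 := (qs_step hB (by rw [← Matrix.map_mul, hX]) hg (h.map (e : A →+* Polynomial B)) m2).map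
    (e.symm : Polynomial B →+* A)
  rw [map_one] at h3
  convert h3 using 1
  ext1 i j
  simp

theorem qs_mvPolynomial {k : Type*} [Field k] (n : ℕ) : QS (MvPolynomial (Fin n) k) := by
  induction n with
  | zero =>
    refine QS.of_equiv (MvPolynomial.isEmptyRingEquiv k (Fin 0)).symm ?_
    intro N X hX
    exact hyp_field X hX
  | succ n ih =>
    intro N X hX
    have hX' : (1 - X) * (1 - X) = 1 - X := by
      rw [Matrix.sub_mul, Matrix.mul_sub, Matrix.mul_sub, hX]; simp
    obtain ⟨g1, hg1, h1⟩ := hyp_generic X hX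
    obtain ⟨g2, hg2, h2⟩ := hyp_generic (1 - X) hX'
    obtain ⟨u, a, ha, hlc⟩ := nT_leadingcoeff (g1 * g2) (mul_ne_zero hg1 hg2)
    refine qs_step' ih ((nT u).trans (finSuccEquiv k n)).toRingEquiv hX (g := C a⁻¹ * (g1 * g2))
      ?_ ?_ ?_
    · change ((finSuccEquiv k n) (nT u (C a⁻¹ * (g1 * g2)))).Monic
      rw [map_mul, map_mul, nT_C, Polynomial.Monic, Polynomial.leadingCoeff_mul, hlc,
        ← MvPolynomial.algebraMap_eq, AlgEquiv.commutes]
      change (Polynomial.C (C a⁻¹)).leadingCoeff * _ = _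
      rw [Polynomial.leadingCoeff_C, ← C_mul, inv_mul_cancel₀ ha, C_1]
    · refine Hyp.mul ?_ _
      rw [mul_comm]
      exact h1.mul g2
    · exact (h2.mul g1).mul _

end PartB3



section PartC

variable {R : Type*} [CommRing R]

/-- Pad a matrix with zero columns. -/
def padC {l : Type*} {r : ℕ} (m : ℕ) (G : Matrix l (Fin r) R) : Matrix l (Fin m) R :=
  Matrix.of fun i j => if h : (j : ℕ) < r then G i ⟨j, h⟩ else 0

/-- Pad a matrix with zero rows. -/
def padR {m : Type*} {r : ℕ} (l : ℕ) (G : Matrix (Fin r) m R) : Matrix (Fin l) m R :=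
  Matrix.of fun i j => if h : (i : ℕ) < r then G ⟨i, h⟩ j else 0

lemma padC_eq_mul {l : Type*} {r : ℕ} (m : ℕ) (G : Matrix l (Fin r) R) :
    padC m G = G * padC m (1 : Matrix (Fin r) (Fin r) R) := by
  ext i j
  simp only [padC, of_apply, Matrix.mul_apply]
  split_ifs with h
  · simp [Matrix.one_apply]
  · simp

lemma mul_padC {l n : Type*} [Fintype n] {r : ℕ} (m : ℕ) (U : Matrix l n R)
    (G : Matrix n (Fin r) R) : U * padC m G = padC m (U * G) := by
  rw [padC_eq_mul, padC_eq_mul m (U * G), Matrix.mul_assoc]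

lemma padC_sub {l : Type*} {r m : ℕ} (h : r ≤ m) (G : Matrix l (Fin r) R) :
    (padC m G).submatrix id (Fin.castLE h) = G := by
  ext i j
  simp [padC]

lemma dI_padC {l : Type*} {r m : ℕ} (h : r ≤ m) (G : Matrix l (Fin r) R) (k : ℕ) :
    dI k (padC m G) = dI k G := by
  apply le_antisymm
  · rw [padC_eq_mul]; exact dI_mul_le_left _ _ _
  · conv_lhs => rw [← padC_sub h G]
    exact dI_submatrix_le _ _ _ _

lemma padR_transpose {m : Type*} {r : ℕ} (l : ℕ) (G : Matrix (Fin r) m R) :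
    (padR l G)ᵀ = padC l Gᵀ := rfl

lemma dI_padR {m : Type*} {r l : ℕ} (h : r ≤ l) (G : Matrix (Fin r) m R) (k : ℕ) :
    dI k (padR l G) = dI k G := by
  rw [← dI_transpose, padR_transpose, dI_padC h, dI_transpose]

lemma det_border [IsDomain R] {r : ℕ} (M : Matrix (Fin r) (Fin r) R) (B : Matrix (Fin r) (Fin 1) R)
    (C' : Matrix (Fin 1) (Fin r) R) (D : Matrix (Fin 1) (Fin 1) R) (hM : M.det ≠ 0)
    (h : (fromBlocks M B C' D).det = 0) : C' * M.adjugate * B = M.det • D := by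
  have h1 : fromBlocks M B C' D * fromBlocks M.adjugate (-(M.adjugate * B)) 0 (M.det • 1) =
      fromBlocks (M.det • 1) 0 (C' * M.adjugate) (M.det • D - C' * M.adjugate * B) := by
    rw [fromBlocks_multiply]
    congr 1
    · simp [Matrix.mul_adjugate]
    · rw [Matrix.mul_neg, ← Matrix.mul_assoc, Matrix.mul_adjugate]; simp
    · simp
    · rw [Matrix.mul_neg, ← Matrix.mul_assoc]; simp; abel
  have h2 := congrArg Matrix.det h1
  rw [det_mul, h, zero_mul, det_fromBlocks_zero₁₂, det_smul, det_one, mul_one] at h2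
  have h3 := (mul_eq_zero.1 h2.symm).resolve_left (pow_ne_zero _ hM)
  ext i j
  rw [Subsingleton.elim i 0, Subsingleton.elim j 0]
  rw [det_fin_one, Matrix.sub_apply, sub_eq_zero] at h3
  exact h3.symm

lemma exists_proj [IsDomain R] {l m r : ℕ} (F : Matrix (Fin l) (Fin m) R) (d : R) (hd0 : d ≠ 0)
    (hd : dI r F = Ideal.span {d}) (h0 : dI (r + 1) F = ⊥) :
    ∃ (Z : Matrix (Fin m) (Fin l) R) (X : Matrix (Fin m) (Fin m) R), d • X = Z * F ∧ F * X = F ∧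
      X * X = X := by
  have key : ∀ x ∈ dI r F, ∃ Z : Matrix (Fin m) (Fin l) R, F * Z * F = x • F ∧
      ∀ i j, d ∣ (Z * F) i j := by
    intro x hx
    refine Submodule.span_induction ?_ ?_ ?_ ?_ hx
    · rintro x ⟨ρ, c, rfl⟩
      by_cases hx0 : (F.submatrix ρ c).det = 0
      · exact ⟨0, by simp [hx0], by simp⟩
      set M := F.submatrix ρ c with hM
      refine ⟨(1 : Matrix (Fin m) (Fin m) R).submatrix id c * (M.adjugate *
        (1 : Matrix (Fin l) (Fin l) R).submatrix ρ id), ?_, ?_⟩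
      · have e1 : F * (1 : Matrix (Fin m) (Fin m) R).submatrix id c = F.submatrix id c := by
          ext i j; simp [Matrix.mul_apply, Matrix.one_apply]
        have e2 : (1 : Matrix (Fin l) (Fin l) R).submatrix ρ id * F = F.submatrix ρ id := by
          ext i j; simp [Matrix.mul_apply, Matrix.one_apply]
        rw [← Matrix.mul_assoc F, e1, Matrix.mul_assoc, Matrix.mul_assoc, e2, ← Matrix.mul_assoc]
        ext i j
        have hb := det_border M (F.submatrix ρ (fun _ => j)) (F.submatrix (fun _ => i) c)
          (F.submatrix (fun _ => i) (fun _ => j)) hx0 (by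
            have : fromBlocks M (F.submatrix ρ (fun _ => j)) (F.submatrix (fun _ => i) c)
                (F.submatrix (fun _ : Fin 1 => i) (fun _ : Fin 1 => j)) =
                F.submatrix (Sum.elim ρ fun _ => i) (Sum.elim c fun _ => j) := by
              ext (i | i) (j | j) <;> simp [hM]
            rw [this, ← det_submatrix_equiv_self finSumFinEquiv.symm, submatrix_submatrix]
            have := det_mem_dI F ((Sum.elim ρ fun _ : Fin 1 => i) ∘ finSumFinEquiv.symm)
              ((Sum.elim c fun _ : Fin 1 => j) ∘ finSumFinEquiv.symm)
            rw [h0] at this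
            exact this)
        have := congrFun (congrFun hb 0) 0
        simp [Matrix.mul_apply] at this
        simp [Matrix.mul_apply, this]
      · intro i j
        have e2 : (1 : Matrix (Fin l) (Fin l) R).submatrix ρ id * F = F.submatrix ρ id := by
          ext i j; simp [Matrix.mul_apply, Matrix.one_apply]
        rw [Matrix.mul_assoc, Matrix.mul_assoc, e2, Matrix.mul_apply]
        refine Finset.dvd_sum fun t _ => Dvd.dvd.mul_left ?_ _
        have e3 : (M.adjugate * F.submatrix ρ id) t j =
            (F.submatrix ρ (Function.update c t j)).det := by
          have : (M.adjugate * F.submatrix ρ id) t j =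
              (M.cramer (fun x => F (ρ x) j)) t := by
            rw [cramer_eq_adjugate_mulVec]; rfl
          rw [this, cramer_apply]
          congr 1
          ext a b
          by_cases hb : b = t
          · subst hb; simp
          · simp [updateCol_ne hb, Function.update_of_ne hb, hM]
        rw [e3]
        have := det_mem_dI F ρ (Function.update c t j)
        rw [hd] at this
        exact Ideal.mem_span_singleton.1 this
    · exact ⟨0, by simp, by simp⟩
    · rintro x y - - ⟨Z, h1, h2⟩ ⟨Z', h1', h2'⟩
      refine ⟨Z + Z', ?_, fun i j => ?_⟩
      · rw [Matrix.mul_add, Matrix.add_mul, h1, h1', add_smul]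
      · rw [Matrix.add_mul, Matrix.add_apply]; exact dvd_add (h2 i j) (h2' i j)
    · rintro a x - ⟨Z, h1, h2⟩
      refine ⟨a • Z, ?_, fun i j => ?_⟩
      · rw [Matrix.mul_smul, Matrix.smul_mul, h1, smul_smul, smul_eq_mul]
      · rw [Matrix.smul_mul, Matrix.smul_apply]; exact Dvd.dvd.mul_left (h2 i j) _
  obtain ⟨Z, h1, h2⟩ := key d (hd ▸ Ideal.mem_span_singleton_self d)
  choose X hX using h2
  have e : d • Matrix.of X = Z * F := by ext i j; simp [hX]
  have e2 : F * Matrix.of X = F := by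
    apply smul_right_injective _ hd0
    simp only
    rw [← Matrix.mul_smul, e, ← Matrix.mul_assoc, h1]
  refine ⟨Z, Matrix.of X, e, e2, ?_⟩
  apply smul_right_injective _ hd0
  simp only
  rw [← Matrix.smul_mul, e, Matrix.mul_assoc, e2]

lemma colNF [IsDomain R] (hQS : QS R) {l m r : ℕ} (F : Matrix (Fin l) (Fin m) R) (d : R)
    (hd0 : d ≠ 0) (hd : dI r F = Ideal.span {d}) (h0 : dI (r + 1) F = ⊥) :
    r ≤ m ∧ ∃ (V : Matrix (Fin m) (Fin m) R) (G : Matrix (Fin l) (Fin r) R), IsUnit V.det ∧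
      F * V = padC m G ∧ ∀ k, dI k G = dI k F := by
  obtain ⟨Z, X, hZ, hFX, hX⟩ := exists_proj F d hd0 hd h0
  have hX' : (1 - X) * (1 - X) = 1 - X := by
    rw [Matrix.sub_mul, Matrix.mul_sub, Matrix.mul_sub, hX]; simp
  obtain ⟨s, ι, κ, a1, a2⟩ := hQS m X hX
  obtain ⟨s', ι', κ', b1, b2⟩ := hQS m (1 - X) hX'
  obtain ⟨a3, a4⟩ := hyp_absorb one_ne_zero a1 a2
  obtain ⟨b3, b4⟩ := hyp_absorb one_ne_zero b1 b2
  rw [one_smul] at a1 a2 b1 b2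
  have hs1 : s ≤ r := by
    by_contra hlt
    push Not at hlt
    have e1 : κ * Z * F * ι = d • 1 := by
      rw [Matrix.mul_assoc κ, ← hZ, Matrix.mul_smul, Matrix.smul_mul, a3, a1]
    have e2 : dI s (κ * Z * F * ι) ≤ ⊥ := by
      rw [← h0]
      exact (dI_mul_mul_le _ _ _ _).trans (dI_antitone _ hlt)
    rw [e1, dI_square, Ideal.span_singleton_le_iff_mem, Ideal.mem_bot, det_smul, det_one,
      mul_one] at e2
    exact pow_ne_zero _ hd0 e2
  have hFικ : F * ι * κ = F := by rw [Matrix.mul_assoc, a2, hFX]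
  have hs2 : r ≤ s := by
    by_contra hlt
    push Not at hlt
    have : dI r F = ⊥ := by
      rw [eq_bot_iff, ← hFικ]
      refine (dI_mul_le_right _ _ _).trans ?_
      rw [dI_eq_bot_row (by simpa using hlt)]
    rw [hd, Ideal.span_singleton_eq_bot] at this
    exact hd0 this
  obtain rfl : s = r := le_antisymm hs1 hs2
  have a5 : κ * ι' = 0 := by
    rw [← a3, ← b4, Matrix.mul_assoc, ← Matrix.mul_assoc X, Matrix.mul_sub, hX, Matrix.mul_one,
      sub_self, Matrix.zero_mul, Matrix.mul_zero]
  have a6 : κ' * ι = 0 := by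
    rw [← a4, ← b3, Matrix.mul_assoc, ← Matrix.mul_assoc (1 - X), Matrix.sub_mul, hX,
      Matrix.one_mul, sub_self, Matrix.zero_mul, Matrix.mul_zero]
  have c1 : fromCols ι ι' * fromRows κ κ' = 1 := by
    rw [fromCols_mul_fromRows, a2, b2]; simp
  have c2 : fromRows κ κ' * fromCols ι ι' = 1 := by
    rw [fromRows_mul_fromCols, a1, b1, a5, a6]; simp
  have hcard : m = s + s' := by
    have := Matrix.square_of_invertible _ _ c1 c2
    simpa using this
  subst hcard
  let e : Fin s ⊕ Fin s' ≃ Fin (s + s') := finSumFinEquiv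
  refine ⟨Nat.le_add_right _ _, (fromCols ι ι').submatrix id e.symm, F * ι, ?_, ?_, ?_⟩
  · have h1 : (fromCols ι ι').submatrix id e.symm * (fromRows κ κ').submatrix e.symm id = 1 := by
      rw [← submatrix_mul _ _ _ _ _ e.symm.bijective, c1, submatrix_id_id]
    exact (Matrix.isUnit_iff_isUnit_det _).1 (IsUnit.of_mul_eq_one _ h1)
  · have h1 : F * ι' = 0 := by
      rw [← b4, ← Matrix.mul_assoc, Matrix.mul_sub, hFX, Matrix.mul_one, sub_self, Matrix.zero_mul]
    have h2 : F * (fromCols ι ι').submatrix id e.symm =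
        (fromCols (F * ι) (F * ι')).submatrix id e.symm := by
      rw [← mul_fromCols]
      rfl
    rw [h2, h1]
    ext i j
    refine Fin.addCases (fun j => ?_) (fun j => ?_) j
    · simp [padC, e]
    · simp [padC, e]
  · intro k
    apply le_antisymm (dI_mul_le_left _ _ _)
    conv_lhs => rw [← hFικ]
    exact dI_mul_le_left _ _ _

theorem rankNF [IsDomain R] (hQS : QS R) {l m r : ℕ} (F : Matrix (Fin l) (Fin m) R) (d : R)
    (hd0 : d ≠ 0) (hd : dI r F = Ideal.span {d}) (h0 : dI (r + 1) F = ⊥) :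
    r ≤ l ∧ r ≤ m ∧ ∃ (U : Matrix (Fin l) (Fin l) R) (V : Matrix (Fin m) (Fin m) R)
      (G : Matrix (Fin r) (Fin r) R), IsUnit U.det ∧ IsUnit V.det ∧
      U * F * V = padC m (padR l G) ∧ ∀ k, dI k G = dI k F := by
  obtain ⟨hm, V, G, hV, hFV, hG⟩ := colNF hQS F d hd0 hd h0
  obtain ⟨hl, U, G', hU, hGU, hG'⟩ := colNF hQS (r := r) Gᵀ d hd0 (by rw [dI_transpose, hG, hd])
    (by rw [dI_transpose, hG, h0])
  refine ⟨hl, hm, Uᵀ, V, G'ᵀ, by rwa [det_transpose], hV, ?_, fun k => ?_⟩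
  · rw [Matrix.mul_assoc, hFV, mul_padC]
    congr 1
    have := congrArg transpose hGU
    rw [transpose_mul, transpose_transpose] at this
    rw [this]; rfl
  · rw [dI_transpose, hG', dI_transpose, hG]

end PartC



section PartD

/-- Matrices of determinant one congruent to the identity modulo `q`. -/
def CongSL {R : Type*} [CommRing R] {N : Type*} [Fintype N] [DecidableEq N] (q : R)
    (U : Matrix N N R) : Prop := U.det = 1 ∧ ∃ Y, U = 1 + q • Y

variable {R Q : Type*} [CommRing R] [CommRing Q] {N : Type*} [Fintype N] [DecidableEq N]

lemma CongSL.one (q : R) : CongSL q (1 : Matrix N N R) := ⟨det_one, 0, by simp⟩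

lemma CongSL.mul {q : R} {U V : Matrix N N R} (hU : CongSL q U) (hV : CongSL q V) :
    CongSL q (U * V) := by
  obtain ⟨h1, Y, rfl⟩ := hU
  obtain ⟨h2, Z, rfl⟩ := hV
  refine ⟨by rw [det_mul, h1, h2, one_mul], Y + Z + q • (Y * Z), ?_⟩
  simp only [Matrix.add_mul, Matrix.mul_add, Matrix.one_mul, Matrix.mul_one, smul_add,
    Matrix.smul_mul, Matrix.mul_smul, smul_smul]
  abel

lemma CongSL.map {R' : Type*} [CommRing R'] (φ : R →+* R') {q : R} {U : Matrix N N R}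
    (hU : CongSL q U) : CongSL (φ q) (U.map φ) := by
  obtain ⟨h1, Y, h2⟩ := hU
  refine ⟨?_, Y.map φ, ?_⟩
  · have := RingHom.map_det φ U
    rw [h1, map_one] at this
    exact this.symm
  · rw [h2]
    ext1 i j
    by_cases h : i = j <;> simp [h, Matrix.one_apply]

lemma CongSL.rank1 (q : R) (u y : N → R) (h : y ⬝ᵥ u = 0) :
    CongSL q (1 + q • vecMulVec u y) := by
  refine ⟨?_, _, rfl⟩
  have := det_one_add_replicateCol_mul_replicateRow (ι := Unit) (q • u) y
  rw [dotProduct_smul, h, smul_zero, add_zero] at this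
  rw [← this]
  congr 2
  ext1 i j
  simp [vecMulVec, Matrix.mul_apply, mul_assoc]

/-- A row over `Q` which can be moved to the first standard row by a matrix from `R`. -/
def GoodRow (π : R →+* Q) (q : R) {n : ℕ} (v : Fin (n + 2) → Q) : Prop :=
  ∃ U, CongSL q U ∧ v ᵥ* (U.map π) = Pi.single 0 1

lemma GoodRow.mul {π : R →+* Q} {q : R} {n : ℕ} {v : Fin (n + 2) → Q} {U} (hU : CongSL q U)
    (h : GoodRow π q (v ᵥ* U.map π)) : GoodRow π q v := by
  obtain ⟨V, hV, h2⟩ := h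
  refine ⟨U * V, hU.mul hV, ?_⟩
  rw [Matrix.map_mul, ← vecMul_vecMul, h2]

variable {π : R →+* Q} {q : R}

lemma GoodRow.step (hπ : Function.Surjective π) {e' : R} (he : π (q * e') = 1)
    {n : ℕ} {v : Fin (n + 2) → Q} (i : Fin (n + 2)) (y : Fin (n + 2) → Q)
    (hy : y i = 0) (h : GoodRow π q (v + v i • y)) : GoodRow π q v := by
  have : ∃ y' : Fin (n + 2) → R, y' i = 0 ∧ ∀ j, π (y' j) = y j := by
    choose s hs using hπ
    refine ⟨fun j => if j = i then 0 else s (y j), by simp, fun j => ?_⟩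
    by_cases hj : j = i
    · simp [hj, hy]
    · simp [hj, hs]
  obtain ⟨y', hy1, hy2⟩ := this
  refine GoodRow.mul (CongSL.rank1 q (Pi.single i 1) (e' • y') (by simp [hy1])) ?_
  convert h using 1
  ext1 j
  have h1 : (1 + q • vecMulVec (Pi.single i 1) (e' • y') : Matrix _ _ R).map π =
      1 + vecMulVec (Pi.single i 1) y := by
    ext1 a b
    have : π q * (π e' * y b) = y b := by rw [← mul_assoc, ← map_mul, he, one_mul]
    by_cases ha : a = i
    · subst ha
      simp [Matrix.one_apply, vecMulVec, hy2, this]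
    · simp [Matrix.one_apply, vecMulVec, hy2, ha]
  rw [h1, vecMul_add, vecMul_one]
  simp [Matrix.vecMul, dotProduct, vecMulVec, Pi.single_apply]

lemma GoodRow.of_unit (hπ : Function.Surjective π) {e' : R} (he : π (q * e') = 1)
    {n : ℕ} {v : Fin (n + 2) → Q} (h : IsUnit (v 0)) : GoodRow π q v := by
  obtain ⟨b, hb⟩ := h.exists_right_inv
  refine GoodRow.step hπ he 0 (fun j => if j = 0 then 0 else - b * v j) (by simp) ?_
  refine GoodRow.step hπ he 0 (Pi.single 1 b) (by simp) ?_
  refine GoodRow.step hπ he 1 (Pi.single 0 (1 - v 0)) (by simp) ?_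
  refine GoodRow.step hπ he 0 (Pi.single 1 (-1)) (by simp) ?_
  refine ⟨1, CongSL.one _, ?_⟩
  rw [Matrix.map_one _ (map_zero π) (map_one π), vecMul_one]
  ext1 j
  refine Fin.cases ?_ (fun j => ?_) j
  · simp
    rw [← mul_assoc, hb]; simp [hb]
  · refine Fin.cases ?_ (fun j => ?_) j
    · simp
      rw [← mul_assoc, hb]; simp [hb]
      try ring
    · have h1 : (j.succ.succ : Fin (n + 2)) ≠ 1 := by
        intro h; simp [Fin.ext_iff] at h
      have h0 : (j.succ.succ : Fin (n + 2)) ≠ 0 := by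
        intro h; simp [Fin.ext_iff] at h
      simp [Pi.single_apply, h1, h0]
      rw [← mul_assoc, hb]; simp

/-- It suffices to reach a unit multiple after an unit scaling. -/
lemma GoodRow.smul (hπ : Function.Surjective π) {e' : R} (he : π (q * e') = 1)
    {n : ℕ} {v : Fin (n + 2) → Q} (a : Q) (ha : IsUnit a)
    (h : GoodRow π q (a • v)) : GoodRow π q v := by
  obtain ⟨U, hU, h1⟩ := h
  refine GoodRow.mul hU (GoodRow.of_unit hπ he ?_)
  have := congrFun h1 0
  rw [smul_vecMul] at this
  simp only [Pi.smul_apply, smul_eq_mul, Pi.single_eq_same] at this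
  exact IsUnit.of_mul_eq_one a (by rw [mul_comm]; exact this)

lemma GoodRow.transfer {R' Q' : Type*} [CommRing R'] [CommRing Q'] {π' : R' →+* Q'}
    (φ : R' →+* R) (ψ : Q' →+* Q) (hc : ∀ x, π (φ x) = ψ (π' x)) {q' : R'} (hq : φ q' = q)
    {n : ℕ} {v : Fin (n + 2) → Q'} (h : GoodRow π' q' v) : GoodRow π q (ψ ∘ v) := by
  obtain ⟨U, hU, h1⟩ := h
  refine ⟨U.map φ, hq ▸ hU.map φ, ?_⟩
  have h2 : (U.map φ).map π = (U.map π').map ψ := by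
    ext1 i j; simp [hc]
  ext1 j
  rw [h2]
  have := congrArg ψ (congrFun h1 j)
  simp only [Matrix.vecMul, dotProduct, map_sum, map_mul] at this ⊢
  rw [Pi.single_apply] at *
  simp only [Function.comp, Matrix.map_apply] at this ⊢
  rw [this]
  split_ifs <;> simp

end PartD



section PartD2

lemma exists_coprime_add {A : Type*} [CommRing A] [IsDomain A] [IsPrincipalIdealRing A]
    (a b c : A) (ha : a ≠ 0) (h : ∀ p, Prime p → p ∣ a → p ∣ b → ¬ p ∣ c) :
    ∃ t, IsCoprime a (b + t * c) := by
  classical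
  obtain ⟨s, hs1, hs2⟩ : ∃ s : Multiset A, (∀ p ∈ s, Prime p) ∧ Associated s.prod a :=
    UniqueFactorizationMonoid.exists_prime_factors a ha
  refine ⟨((s.filter fun p => ¬ p ∣ b).prod), isCoprime_of_prime_dvd (by simp [ha]) ?_⟩
  intro p hp hpa hpb
  by_cases hb : p ∣ b
  · have h1 := h p hp hpa hb
    have h2 := (dvd_add_right hb).1 hpb
    rcases hp.dvd_or_dvd h2 with h3 | h3
    · obtain ⟨p', hp', h4⟩ := (Multiset.prod_induction (fun x => p ∣ x → ∃ p' ∈ s.filter fun p => ¬ p ∣ b, p ∣ p') _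
        (fun x y hx hy hxy => (hp.dvd_or_dvd hxy).elim hx hy) (fun h => (hp.not_dvd_one h).elim)
        (fun x hx hx' => ⟨x, hx, hx'⟩)) h3
      rw [Multiset.mem_filter] at hp'
      exact hp'.2 (((hp.associated_of_dvd (hs1 p' hp'.1) h4).symm.dvd).trans hb)
    · exact h1 h3
  · have h3 : p ∣ s.prod := hpa.trans hs2.symm.dvd
    obtain ⟨p', hp', h4⟩ := (Multiset.prod_induction (fun x => p ∣ x → ∃ p' ∈ s, p ∣ p') _
        (fun x y hx hy hxy => (hp.dvd_or_dvd hxy).elim hx hy) (fun h => (hp.not_dvd_one h).elim)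
        (fun x hx hx' => ⟨x, hx, hx'⟩)) h3
    have h5 : p' ∈ s.filter fun p => ¬ p ∣ b := by
      rw [Multiset.mem_filter]
      exact ⟨hp', fun h6 => hb (h4.trans h6)⟩
    have h6 := h4.trans (Multiset.dvd_prod h5)
    exact hb ((dvd_add_left (h6.mul_right c)).1 hpb)

/-- Completing a row to a matrix with prescribed determinant. -/
lemma exists_completion {R : Type*} [CommRing R] {n : ℕ} (v : Fin (n + 2) → R) (lam : Fin n → R)
    (α β c : R)
    (h : c = α * v 0 + β * (v 1 + ∑ j, lam j * v j.succ.succ)) :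
    ∃ M : Matrix (Fin (n + 2)) (Fin (n + 2)) R, M 0 = v ∧ M.det = c := by
  let e : Fin 2 ⊕ Fin n ≃ Fin (n + 2) := finSumFinEquiv.trans (finCongr (by omega))
  let M0 : Matrix (Fin 2 ⊕ Fin n) (Fin 2 ⊕ Fin n) R :=
    fromBlocks !![v 0, v 1; -β, α] (Matrix.of ![fun j => v j.succ.succ, 0])
      (Matrix.of fun j => ![0, -lam j]) 1
  have e0 : e (Sum.inl 0) = 0 := rfl
  have e1 : e (Sum.inl 1) = 1 := by ext; simp [e]
  have e2 : ∀ j, e (Sum.inr j) = j.succ.succ := by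
    intro j; ext; simp [e]; try omega
  refine ⟨M0.submatrix e.symm e.symm, ?_, ?_⟩
  · ext1 j
    obtain ⟨j, rfl⟩ := e.surjective j
    have h0 : e.symm 0 = Sum.inl 0 := by rw [← e0, e.symm_apply_apply]
    simp only [submatrix_apply, h0, Equiv.symm_apply_apply]
    rcases j with j | j
    · fin_cases j
      · simp [M0, e0]
      · simp [M0, e1]
    · rw [e2]; simp [M0]
  · rw [det_submatrix_equiv_self]
    simp only [M0, det_fromBlocks_one₂₂]
    rw [det_fin_two]
    have hs : ∑ j, v j.succ.succ * lam j = ∑ j, lam j * v j.succ.succ :=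
      Finset.sum_congr rfl fun j _ => mul_comm _ _
    simp [Matrix.vecMul, dotProduct, h]
    rw [hs]
    ring

/-- The elements `c` along which the row `v` may be translated. -/
def IrelSet {B : Type*} [CommRing B] (q : B) {N : Type*} [Fintype N] [DecidableEq N]
    (v : N → Polynomial B) : Set B :=
  {c | ∀ b b' : Polynomial B, Polynomial.C c ∣ b - b' →
    ∃ Γ : Matrix N N (Polynomial B), CongSL (Polynomial.C q) Γ ∧
      (fun i => (v i).comp b) ᵥ* Γ = fun i => (v i).comp b'}

def Irel {B : Type*} [CommRing B] (q : B) {N : Type*} [Fintype N] [DecidableEq N]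
    (v : N → Polynomial B) : Ideal B where
  carrier := IrelSet q v
  zero_mem' := by
    intro b b' h
    rw [map_zero, zero_dvd_iff, sub_eq_zero] at h
    subst h
    exact ⟨1, CongSL.one _, by simp⟩
  add_mem' := by
    intro c c' hc hc' b b' h
    obtain ⟨t, ht⟩ := h
    obtain ⟨Γ, h1, h2⟩ := hc b (b' + Polynomial.C c' * t) ⟨t, by
      rw [sub_eq_iff_eq_add] at ht; rw [ht, map_add]; ring⟩
    obtain ⟨Γ', h3, h4⟩ := hc' (b' + Polynomial.C c' * t) b' ⟨t, by ring⟩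
    exact ⟨Γ * Γ', h1.mul h3, by rw [← vecMul_vecMul, h2, h4]⟩
  smul_mem' := by
    intro a c hc b b' h
    exact hc b b' ((Dvd.intro_left (Polynomial.C a) (by rw [smul_eq_mul, map_mul])).trans h)

lemma mem_Irel {B : Type*} [CommRing B] [IsDomain B] (q : B) {n : ℕ}
    (v : Fin (n + 1) → Polynomial B) (M : Matrix (Fin (n + 1)) (Fin (n + 1)) (Polynomial B))
    (c : B) (hc : c ≠ 0) (hM : M 0 = v) (hdet : M.det = Polynomial.C c) : c * q ∈ Irel q v := by
  intro b b' h
  obtain ⟨Y, hY⟩ := msub_dvd M.adjugate h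
  have hc' : Polynomial.C c ≠ 0 := by simpa using hc
  have k1 : ∀ b, msub M b * msub M.adjugate b = Polynomial.C c • (1 : Matrix _ _ (Polynomial B)) := by
    intro b
    rw [← msub_mul, mul_adjugate, hdet, msub_smul]
    congr 1
    ext1 i j
    by_cases hij : i = j <;> simp [msub, Matrix.one_apply, hij]
  have k2 : ∀ b, msub M.adjugate b * msub M b = Polynomial.C c • (1 : Matrix _ _ (Polynomial B)) := by
    intro b
    rw [← msub_mul, adjugate_mul, hdet, msub_smul]
    congr 1
    ext1 i j
    by_cases hij : i = j <;> simp [msub, Matrix.one_apply, hij]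
  have kd : ∀ b, (msub M b).det = Polynomial.C c := by
    intro b
    have := RingHom.map_det (Polynomial.compRingHom b) M
    rw [hdet] at this
    simp only [Polynomial.coe_compRingHom, Polynomial.C_comp] at this
    exact this.symm
  have k3 : Polynomial.C c • (1 + Polynomial.C q • (Y * msub M b')) = msub M.adjugate b * msub M b' := by
    rw [hY, Matrix.add_mul, k2, smul_add, Matrix.smul_mul, map_mul, smul_smul]
  refine ⟨1 + Polynomial.C q • (Y * msub M b'), ⟨?_, _, rfl⟩, ?_⟩
  · have h1 := congrArg det k3
    have h2 := congrArg det (k2 b)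
    rw [det_smul, det_mul, kd] at h1
    rw [det_mul, kd, det_smul, det_one, mul_one] at h2
    rw [h2] at h1
    exact mul_left_cancel₀ (pow_ne_zero _ hc') (by rw [h1, mul_one])
  · have row : ∀ b, (fun i => (v i).comp b) = Pi.single 0 1 ᵥ* msub M b := by
      intro b
      rw [single_one_vecMul]
      ext1 i
      simp [msub, ← hM]
    have h1 : Polynomial.C c • ((fun i => (v i).comp b) ᵥ* (1 + Polynomial.C q • (Y * msub M b'))) =
        Polynomial.C c • (fun i => (v i).comp b') := by
      rw [← vecMul_smul, k3, row, row b', vecMul_vecMul, ← Matrix.mul_assoc, k1, Matrix.smul_mul,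
        Matrix.one_mul, vecMul_smul]
    ext1 i
    have := congrFun h1 i
    exact mul_left_cancel₀ hc' this

end PartD2



section PartD3

lemma map_vecMul {R S : Type*} [CommRing R] [CommRing S] (φ : R →+* S) {m n : Type*} [Fintype m]
    (v : m → R) (M : Matrix m n R) : (fun i => φ (v i)) ᵥ* M.map φ = fun j => φ ((v ᵥ* M) j) := by
  ext1 j
  simp [Matrix.vecMul, dotProduct]

lemma irel_sup_ker {B B' : Type*} [CommRing B] [IsDomain B] [CommRing B'] {π : B →+* B'}
    {q e' : B} (he : π (q * e') = 1) {n : ℕ}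
    (v y : Fin (n + 2) → Polynomial B) (hm : (v 0).Monic)
    (hy : Polynomial.map π (∑ i, v i * y i) = 1) :
    Irel q v ⊔ RingHom.ker π = ⊤ := by
  by_contra hne
  obtain ⟨m, hmax, hle⟩ := Ideal.exists_le_maximal _ hne
  have hI : Irel q v ≤ m := le_sup_left.trans hle
  have hker : RingHom.ker π ≤ m := le_sup_right.trans hle
  let φ := Ideal.Quotient.mk m
  have hφs : Function.Surjective φ := Ideal.Quotient.mk_surjective
  letI : Field (B ⧸ m) := Ideal.Quotient.field m
  have hφ0 : ∀ f : Polynomial B, Polynomial.map φ f = 0 ↔ f ∈ m.map Polynomial.C := by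
    intro f
    rw [Ideal.mem_map_C_iff, Polynomial.ext_iff]
    simp [φ, Ideal.Quotient.eq_zero_iff_mem]
  have huni : ∑ i, Polynomial.map φ (v i) * Polynomial.map φ (y i) = 1 := by
    have h1 : Polynomial.map φ (∑ i, v i * y i - 1) = 0 := by
      rw [hφ0, Ideal.mem_map_C_iff]
      intro k
      apply hker
      rw [RingHom.mem_ker, ← Polynomial.coeff_map, Polynomial.map_sub, hy]
      simp
    rw [Polynomial.map_sub, Polynomial.map_one, sub_eq_zero, Polynomial.map_sum] at h1
    simpa using h1
  obtain ⟨c, hc⟩ := (IsPrincipalIdealRing.principal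
    (Ideal.span (Set.range fun j : Fin n => Polynomial.map φ (v j.succ.succ)))).principal
  change Ideal.span _ = Ideal.span {c} at hc
  obtain ⟨μ, hμ⟩ := Ideal.mem_span_range_iff_exists_fun.1 (hc ▸ Ideal.mem_span_singleton_self c)
  have hdvd : ∀ j : Fin n, c ∣ Polynomial.map φ (v j.succ.succ) := fun j => by
    rw [← Ideal.mem_span_singleton, ← hc]
    exact Ideal.subset_span ⟨j, rfl⟩
  obtain ⟨t, ht⟩ := exists_coprime_add (Polynomial.map φ (v 0)) (Polynomial.map φ (v 1)) c
    (hm.map φ).ne_zero (by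
      intro p hp h0 h1 hpc
      apply hp.not_dvd_one
      rw [← huni]
      refine Finset.dvd_sum fun i _ => Dvd.dvd.mul_right ?_ _
      refine Fin.cases h0 (fun i => Fin.cases h1 (fun i => hpc.trans (hdvd i)) i) i)
  have hlift := Polynomial.map_surjective φ hφs
  choose lam hlam using fun j => hlift (t * μ j)
  have hw : Polynomial.map φ (v 1 + ∑ j, lam j * v j.succ.succ) = Polynomial.map φ (v 1) + t * c := by
    rw [Polynomial.map_add, Polynomial.map_sum, ← hμ, Finset.mul_sum]
    simp [hlam, mul_assoc]
  obtain ⟨w, hwd⟩ : ∃ w, w = v 1 + ∑ j, lam j * v j.succ.succ := ⟨_, rfl⟩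
  rw [← hwd] at hw
  rw [← hw] at ht
  obtain ⟨a, b, hab⟩ := ht
  obtain ⟨a, rfl⟩ := hlift a
  obtain ⟨b, rfl⟩ := hlift b
  obtain ⟨c', hc1, hc2⟩ := nakayama_monic (Ideal.span {v 0, w}) (v 0) hm
    (Ideal.subset_span (by simp)) m (by
      rw [Ideal.eq_top_iff_one, Submodule.mem_sup]
      refine ⟨a * v 0 + b * w, Ideal.mem_span_pair.2 ⟨a, b, rfl⟩, 1 - (a * v 0 + b * w), ?_, by ring⟩
      rw [← hφ0]
      simp [hab])
  obtain ⟨α, β, hαβ⟩ := Ideal.mem_span_pair.1 hc2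
  obtain ⟨M, hM1, hM2⟩ := exists_completion v lam α β (Polynomial.C c') (by rw [← hαβ, hwd])
  have hone : (1 : B) ∉ m := fun h => hmax.ne_top ((Ideal.eq_top_iff_one _).2 h)
  have hc'm : c' ∉ m := fun h => hone (by simpa using m.sub_mem h hc1)
  have hc0 : c' ≠ 0 := by rintro rfl; exact hc'm m.zero_mem
  rcases hmax.isPrime.mem_or_mem (hI (mem_Irel q v M c' hc0 hM1 hM2)) with h | h
  · exact hc'm h
  · have : q * e' - 1 ∈ m := hker (by rw [RingHom.mem_ker, map_sub, he, map_one, sub_self])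
    exact hone (by simpa using m.sub_mem (m.mul_mem_right e' h) this)

lemma goodRow_step {B B' : Type*} [CommRing B] [IsDomain B] [CommRing B'] {π : B →+* B'}
    (hπ : Function.Surjective π) {q e' : B} (he : π (q * e') = 1) {n : ℕ}
    (hIH : ∀ w : Fin (n + 2) → B', (∃ z, w ⬝ᵥ z = 1) → GoodRow π q w)
    (v : Fin (n + 2) → Polynomial B') (hv : ∃ z, v ⬝ᵥ z = 1) (hm : (v 0).Monic) :
    GoodRow (Polynomial.mapRingHom π) (Polynomial.C q) v := by
  obtain ⟨y, hy⟩ := hv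
  have hlift := Polynomial.map_surjective π hπ
  have : ∃ v' : Fin (n + 2) → Polynomial B, (∀ i, Polynomial.map π (v' i) = v i) ∧ (v' 0).Monic := by
    obtain ⟨f, hf1, -, hf2⟩ := Polynomial.lifts_and_natDegree_eq_and_monic (f := π) (p := v 0)
      (by rw [Polynomial.lifts_iff_coeff_lifts]; intro k; exact hπ _) hm
    choose s hs using hlift
    refine ⟨fun i => if i = 0 then f else s (v i), fun i => ?_, by simpa using hf2⟩
    by_cases hi : i = 0
    · simp [hi, hf1]
    · simp [hi, hs]
  obtain ⟨v', hv', hm'⟩ := this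
  choose y' hy' using fun i => hlift (y i)
  have htop := irel_sup_ker he v' y' hm' (by
    rw [Polynomial.map_sum]; simpa [hv', hy', dotProduct] using hy)
  obtain ⟨c, hc, k, hk, hck⟩ := Submodule.mem_sup.1 (htop ▸ Submodule.mem_top : (1 : B) ∈ _)
  have hπc : π c = 1 := by
    have := congrArg π hck
    rw [map_add, RingHom.mem_ker.1 hk, add_zero, map_one] at this
    exact this
  obtain ⟨Γ, hΓ, hΓ2⟩ := hc Polynomial.X (Polynomial.C (1 - c) * Polynomial.X)
    ⟨Polynomial.X, by rw [map_sub, map_one]; ring⟩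
  refine GoodRow.mul hΓ ?_
  have h1 : v ᵥ* Γ.map (Polynomial.mapRingHom π) = Polynomial.C ∘ (fun i => (v i).coeff 0) := by
    have h2 : v = fun i => (Polynomial.mapRingHom π) (v' i) := by ext1 i; simp [hv']
    have h3 : v' ᵥ* Γ = fun i => (v' i).comp (Polynomial.C (1 - c) * Polynomial.X) := by
      simpa using hΓ2
    rw [h2, map_vecMul, h3]
    ext1 i
    simp [Polynomial.map_comp, hπc, hv']
    rw [Polynomial.coeff_zero_eq_eval_zero]
  rw [h1]
  refine GoodRow.transfer (π' := π) Polynomial.C Polynomial.C (by intro x; simp) rfl (hIH _ ?_)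
  refine ⟨fun i => (y i).coeff 0, ?_⟩
  have := congrArg (fun f => Polynomial.coeff f 0) hy
  simpa [dotProduct, Polynomial.finset_sum_coeff, Polynomial.mul_coeff_zero] using this

end PartD3



section PartD4

lemma goodRow_nonzero {R Q : Type*} [CommRing R] [CommRing Q] [Nontrivial Q] {π : R →+* Q} {q : R}
    (hπ : Function.Surjective π) {e' : R} (he : π (q * e') = 1) {n : ℕ}
    (H : ∀ w : Fin (n + 2) → Q, (∃ z, w ⬝ᵥ z = 1) → w 0 ≠ 0 → GoodRow π q w)
    (v : Fin (n + 2) → Q) (hv : ∃ z, v ⬝ᵥ z = 1) : GoodRow π q v := by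
  by_cases h0 : v 0 = 0
  · obtain ⟨z, hz⟩ := hv
    have : ∃ i, v i ≠ 0 := by
      by_contra hcon
      push Not at hcon
      have : v = 0 := funext hcon
      simp [this] at hz
    obtain ⟨i, hi⟩ := this
    have hi0 : i ≠ 0 := by rintro rfl; exact hi h0
    refine GoodRow.step hπ he i (Pi.single 0 1) (by simp [hi0]) (H _ ?_ ?_)
    · refine ⟨z - z 0 • Pi.single i 1, ?_⟩
      have h0i : (Pi.single i 1 : Fin (n + 2) → Q) 0 = 0 := by simp [hi0]
      simp only [dotProduct_sub, add_dotProduct, smul_dotProduct, dotProduct_smul, hz,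
        single_dotProduct, dotProduct_single]
      simp [h0i, hi0]
      ring
    · simp [h0, hi]
  · exact H v hv h0

lemma fse_map {A L : Type*} [CommRing A] [CommRing L] (ρ : A →+* L) (k : ℕ)
    (x : MvPolynomial (Fin (k + 1)) A) :
    Polynomial.mapRingHom (MvPolynomial.map ρ) (finSuccEquiv A k x) =
      finSuccEquiv L k (MvPolynomial.map ρ x) := by
  induction x using MvPolynomial.induction_on with
  | C a => simp [finSuccEquiv_apply]
  | add p q hp hq => simp only [map_add, hp, hq]
  | mul_X p i hp =>
    simp only [map_mul, hp, MvPolynomial.map_X]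
    congr 1
    refine Fin.cases ?_ (fun i => ?_) i
    · simp [finSuccEquiv_apply]
    · simp [finSuccEquiv_apply]

set_option maxHeartbeats 800000 in
theorem goodRow_mv {A L : Type*} [CommRing A] [IsDomain A] [Field L] {ρ : A →+* L}
    (hρ : Function.Surjective ρ) {q e' : A} (he : ρ (q * e') = 1) (k : ℕ) :
    ∀ {n : ℕ} (v : Fin (n + 2) → MvPolynomial (Fin k) L), (∃ z, v ⬝ᵥ z = 1) →
      GoodRow (MvPolynomial.map ρ) (C q) v := by
  induction k with
  | zero =>
    intro n
    have he' : (MvPolynomial.map ρ) (C q * C e' : MvPolynomial (Fin 0) A) = 1 := by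
      rw [← map_mul, map_C, he, map_one]
    refine goodRow_nonzero (MvPolynomial.map_surjective ρ hρ) he' ?_
    intro w _ hw
    refine GoodRow.of_unit (MvPolynomial.map_surjective ρ hρ) he' ?_
    rw [← MulEquiv.isUnit_map (isEmptyAlgEquiv L (Fin 0)), isUnit_iff_ne_zero]
    exact (map_ne_zero_iff _ (isEmptyAlgEquiv L (Fin 0)).injective).2 hw
  | succ k ih =>
    intro n
    have he' : ∀ k, (MvPolynomial.map ρ) (C q * C e' : MvPolynomial (Fin k) A) = 1 := by
      intro k
      rw [← map_mul, map_C, he, map_one]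
    refine goodRow_nonzero (MvPolynomial.map_surjective ρ hρ) (he' _) ?_
    intro v ⟨z, hz⟩ hv0
    obtain ⟨u, a, ha, hlc⟩ := nT_leadingcoeff (v 0) hv0
    obtain ⟨ΨL, hΨL⟩ : ∃ Ψ : MvPolynomial (Fin (k + 1)) L ≃+* Polynomial (MvPolynomial (Fin k) L),
      ∀ x, Ψ x = finSuccEquiv L k (nT u x) := ⟨((nT u).trans (finSuccEquiv L k)).toRingEquiv, fun _ => rfl⟩
    obtain ⟨ΨA, hΨA⟩ : ∃ Ψ : MvPolynomial (Fin (k + 1)) A ≃+* Polynomial (MvPolynomial (Fin k) A),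
      ∀ x, Ψ x = finSuccEquiv A k (nT u x) := ⟨((nT u).trans (finSuccEquiv A k)).toRingEquiv, fun _ => rfl⟩
    have hΨ : ∀ x, Polynomial.mapRingHom (MvPolynomial.map ρ) (ΨA x) = ΨL (MvPolynomial.map ρ x) := by
      intro x
      rw [hΨA, hΨL, fse_map, nT_map]
    have hC : ∀ x, ΨL (C x) = Polynomial.C (C x) := by
      intro x
      rw [hΨL, nT_C]; simp [finSuccEquiv_apply]
    have hCA : ∀ x, ΨA (C x) = Polynomial.C (C x) := by
      intro x
      rw [hΨA, nT_C]; simp [finSuccEquiv_apply]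
    have haa : (C a⁻¹ : MvPolynomial (Fin (k+1)) L) * C a = 1 := by
      rw [← map_mul, inv_mul_cancel₀ ha, map_one]
    refine GoodRow.smul (MvPolynomial.map_surjective ρ hρ) (he' _) (C a⁻¹)
      (IsUnit.of_mul_eq_one _ haa) ?_
    have key : GoodRow (Polynomial.mapRingHom (MvPolynomial.map ρ)) (Polynomial.C (C q))
        (ΨL ∘ ((C a⁻¹ : MvPolynomial (Fin (k + 1)) L) • v)) := by
      refine goodRow_step (MvPolynomial.map_surjective ρ hρ) (he' _) (fun w hw => ih w hw) _ ?_ ?_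
      · refine ⟨ΨL ∘ ((C a : MvPolynomial (Fin (k + 1)) L) • z), ?_⟩
        have h1 := congrArg ΨL hz
        simp only [dotProduct, map_sum, map_one, map_mul, Function.comp, Pi.smul_apply, smul_eq_mul] at h1 ⊢
        rw [← h1]
        refine Finset.sum_congr rfl fun i _ => ?_
        have h2 := congrArg ΨL haa
        rw [map_mul, map_one] at h2
        rw [mul_mul_mul_comm, h2, one_mul]
      · change (ΨL (C a⁻¹ * v 0)).leadingCoeff = 1
        rw [map_mul, Polynomial.leadingCoeff_mul, hC, Polynomial.leadingCoeff_C]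
        rw [hΨL, hlc, ← map_mul, inv_mul_cancel₀ ha, map_one]
    have := GoodRow.transfer (π := MvPolynomial.map ρ) (q := C q) ΨA.symm.toRingHom
      ΨL.symm.toRingHom (by
        intro x
        obtain ⟨x, rfl⟩ := ΨA.surjective x
        rw [hΨ]
        simp) (by rw [← hCA]; simp) key
    convert this using 1
    ext1 i
    simp

/-- Lifting matrices of determinant one. -/
theorem lift_SL {R Q : Type*} [CommRing R] [CommRing Q] {π : R →+* Q} {q : R}
    (hπ : Function.Surjective π) {e' : R} (he : π (q * e') = 1)
    (H : ∀ {n : ℕ} (w : Fin (n + 2) → Q), (∃ z, w ⬝ᵥ z = 1) → GoodRow π q w) (n : ℕ)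
    (M : Matrix (Fin n) (Fin n) Q) (hM : M.det = 1) :
    ∃ U : Matrix (Fin n) (Fin n) R, CongSL q U ∧ U.map π = M := by
  induction n with
  | zero => exact ⟨1, CongSL.one _, by ext1 i; exact i.elim0⟩
  | succ n ih =>
    rcases n with _ | n
    · refine ⟨1, CongSL.one _, ?_⟩
      rw [det_fin_one] at hM
      ext1 i j
      have hi : i = 0 := by ext; omega
      have hj : j = 0 := by ext; omega
      rw [hi, hj, hM]
      simp
    · obtain ⟨U, hU, h1⟩ := H (M 0) ⟨fun j => M.adjugate j 0, by
        have := congrFun (congrFun (mul_adjugate M) 0) 0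
        rw [hM, one_smul, one_apply_eq] at this
        exact this⟩
      obtain ⟨M', hM'⟩ : ∃ M', M' = M * U.map π := ⟨_, rfl⟩
      have hdetU : (U.map π).det = 1 := by
        have := (hU.map π).1
        exact this
      have hrow : ∀ j, M' 0 j = (Pi.single 0 1 : Fin (n + 2) → Q) j := by
        intro j
        rw [hM']
        exact congrFun h1 j
      have hdet : M'.det = 1 := by rw [hM', det_mul, hM, hdetU, one_mul]
      have hdet2 : (M'.submatrix Fin.succ Fin.succ).det = 1 := by
        rw [det_succ_row_zero, Finset.sum_eq_single 0] at hdet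
        · simpa [hrow] using hdet
        · intro j _ hj
          simp [hrow, hj]
        · simp
      obtain ⟨W, hW, hW2⟩ := ih _ hdet2
      choose s hs using hπ
      -- block diagonal part
      let D : Matrix (Fin (n + 2)) (Fin (n + 2)) R := Matrix.of fun i j =>
        Fin.cases (Fin.cases 1 (fun _ => 0) j) (fun i' => Fin.cases 0 (fun j' => W i' j') j) i
      have hD : CongSL q D := by
        obtain ⟨hd, Y, hY⟩ := hW
        refine ⟨?_, Matrix.of fun i j =>
          Fin.cases 0 (fun i' => Fin.cases 0 (fun j' => Y i' j') j) i, ?_⟩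
        · rw [det_succ_row_zero, Finset.sum_eq_single 0]
          · simp [D]
            rw [← hd]
            congr 1
          · intro j _ hj
            obtain ⟨j, rfl⟩ := Fin.exists_succ_eq_of_ne_zero hj
            simp [D]
          · simp
        · ext1 i j
          refine Fin.cases ?_ (fun i => ?_) i <;> refine Fin.cases ?_ (fun j => ?_) j
          · simp [D]
          · simp [D, Matrix.one_apply, (Fin.succ_ne_zero _).symm]
          · simp [D, Matrix.one_apply]
          · simp [D, hY, Matrix.one_apply]
      let T : Matrix (Fin (n + 2)) (Fin (n + 2)) R := 1 + q • vecMulVec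
        (fun i => Fin.cases 0 (fun i' => e' * s (M' i'.succ 0)) i) (Pi.single 0 1)
      have hT : CongSL q T := CongSL.rank1 q _ _ (by simp)
      have hTD : (T * D).map π = M' := by
        have he2 : π q * π e' = 1 := by rw [← map_mul, he]
        rw [Matrix.map_mul]
        have hT' : T.map π = 1 + vecMulVec (fun i => Fin.cases 0 (fun i' => M' i'.succ 0) i)
            (Pi.single 0 1) := by
          ext1 i j
          have h3 : ∀ a, π q * (π e' * a) = a := fun a => by rw [← mul_assoc, he2, one_mul]
          refine Fin.cases ?_ (fun i => ?_) i <;> refine Fin.cases ?_ (fun j => ?_) j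
          · simp [T, vecMulVec, Matrix.one_apply]
          · simp [T, vecMulVec, Matrix.one_apply]
          · simp [T, vecMulVec, Matrix.one_apply, h3, hs]
          · simp [T, vecMulVec, Matrix.one_apply, apply_ite π]
        rw [hT', Matrix.add_mul, Matrix.one_mul, vecMulVec_mul]
        ext1 i j
        refine Fin.cases ?_ (fun i => ?_) i <;> refine Fin.cases ?_ (fun j => ?_) j
        · simp [D, vecMulVec, hrow]
        · simp [D, vecMulVec, hrow]
        · simp [D, vecMulVec]
        · have := congrFun (congrFun hW2 i) j
          simp at this
          simp [D, vecMulVec, this]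
      -- the inverse of U
      have hUinv : CongSL q U.adjugate := by
        obtain ⟨hd, Y, hY⟩ := hU
        refine ⟨by rw [det_adjugate, hd, one_pow], - Y * U.adjugate, ?_⟩
        have := mul_adjugate U
        rw [hd, one_smul] at this
        rw [← sub_eq_iff_eq_add'] at hY
        rw [← Matrix.smul_mul, smul_neg, ← hY, neg_sub, Matrix.sub_mul, Matrix.one_mul, this]
        abel
      refine ⟨T * D * U.adjugate, (hT.mul hD).mul hUinv, ?_⟩
      rw [Matrix.map_mul, hTD, hM', Matrix.mul_assoc, ← Matrix.map_mul, mul_adjugate, hU.1, one_smul,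
        Matrix.map_one _ (map_zero π) (map_one π), Matrix.mul_one]

end PartD4



section PartD5

lemma mk_map_eq_iff {R : Type*} [CommRing R] {m n : Type*} (c : R) (M U : Matrix m n R) :
    U.map (Ideal.Quotient.mk (Ideal.span {c})) = M.map (Ideal.Quotient.mk (Ideal.span {c})) ↔
      ∃ Y, U = M + c • Y := by
  constructor
  · intro h
    have : ∀ i j, ∃ y, U i j - M i j = c * y := by
      intro i j
      have := congrFun (congrFun h i) j
      simp only [Matrix.map_apply] at this
      rw [Ideal.Quotient.eq, Ideal.mem_span_singleton] at this
      exact this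
    choose Y hY using this
    refine ⟨Matrix.of Y, ?_⟩
    ext1 i j
    simp [← hY]
  · rintro ⟨Y, rfl⟩
    ext1 i j
    simp only [Matrix.map_apply]
    rw [Ideal.Quotient.eq, Ideal.mem_span_singleton]
    simp

theorem lift_SL_pow {A : Type*} [CommRing A] [IsDomain A] [IsPrincipalIdealRing A] (p q : A)
    (hp : Prime p) (hpq : IsCoprime q p) (E k n : ℕ)
    (M : Matrix (Fin n) (Fin n) (MvPolynomial (Fin k) A))
    (hM : (C p : MvPolynomial (Fin k) A) ^ (E + 1) ∣ M.det - 1) :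
    ∃ U : Matrix (Fin n) (Fin n) (MvPolynomial (Fin k) A), CongSL (C q) U ∧
      ∃ Y, U = M + (C p : MvPolynomial (Fin k) A) ^ (E + 1) • Y := by
  have hmax : (Ideal.span {p}).IsMaximal :=
    PrincipalIdealRing.isMaximal_of_irreducible hp.irreducible
  letI : Field (A ⧸ Ideal.span {p}) := Ideal.Quotient.field _
  let ρ : A →+* A ⧸ Ideal.span {p} := Ideal.Quotient.mk _
  have hρ : Function.Surjective ρ := Ideal.Quotient.mk_surjective
  have hρp : ρ p = 0 := Ideal.Quotient.eq_zero_iff_mem.2 (Ideal.mem_span_singleton_self p)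
  have he1 : ∃ e', ρ (q * e') = 1 := by
    obtain ⟨a, b, hab⟩ := hpq
    refine ⟨a, ?_⟩
    have := congrArg ρ hab
    rw [map_add, map_mul ρ b, hρp, mul_zero, add_zero, map_one, mul_comm] at this
    exact this
  obtain ⟨e1, he1⟩ := he1
  let R := MvPolynomial (Fin k) A
  let I : Ideal R := Ideal.span {(C p : R) ^ (E + 1)}
  let π : R →+* R ⧸ I := Ideal.Quotient.mk I
  have hπ : Function.Surjective π := Ideal.Quotient.mk_surjective
  have hπp : π (C p ^ (E + 1)) = 0 := Ideal.Quotient.eq_zero_iff_mem.2 (Ideal.mem_span_singleton_self _)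
  have he2 : ∃ e' : R, π (C q * e') = 1 := by
    obtain ⟨a, b, hab⟩ := hpq.pow_right (n := E + 1)
    refine ⟨C a, ?_⟩
    have := congrArg (fun x => π (C x)) hab
    simp only [map_add, map_mul, map_one, map_pow] at this
    rw [← map_pow, hπp, mul_zero, add_zero] at this
    rw [map_mul, mul_comm]
    exact this
  obtain ⟨e2, he2⟩ := he2
  have H : ∀ {n : ℕ} (w : Fin (n + 2) → R ⧸ I), (∃ z, w ⬝ᵥ z = 1) → GoodRow π (C q) w := by
    intro n w ⟨z, hz⟩
    choose s hs using hπ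
    have h1 : ((fun i => s (w i)) ⬝ᵥ fun i => s (z i)) - 1 ∈ I := by
      rw [← Ideal.Quotient.eq_zero_iff_mem]
      change π _ = 0
      rw [map_sub, sub_eq_zero, map_one, ← hz]
      simp [dotProduct, hs]
    obtain ⟨t, ht⟩ := Ideal.mem_span_singleton.1 h1
    obtain ⟨U, hU, hU2⟩ := goodRow_mv hρ he1 k (fun i => MvPolynomial.map ρ (s (w i)))
      ⟨fun i => MvPolynomial.map ρ (s (z i)), by
        have := congrArg (MvPolynomial.map ρ) ht
        rw [map_sub, map_mul, map_pow, map_C, hρp, map_zero, zero_pow (Nat.succ_ne_zero E), zero_mul,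
          sub_eq_zero, map_one] at this
        rw [← this]
        simp [dotProduct]⟩
    refine GoodRow.mul hU (GoodRow.of_unit (fun x => ⟨s x, hs x⟩) he2 ?_)
    rw [map_vecMul] at hU2
    have h3 : w = fun i => π (s (w i)) := by ext1 i; rw [hs]
    rw [h3, map_vecMul]
    have h4 := congrFun hU2 0
    simp only [Pi.single_eq_same] at h4
    have h5 : ((fun i => s (w i)) ᵥ* U) 0 - 1 ∈ RingHom.ker (MvPolynomial.map (σ := Fin k) ρ) := by
      rw [RingHom.mem_ker, map_sub, h4, map_one, sub_self]
    rw [MvPolynomial.ker_map, Ideal.mk_ker, Ideal.map_span, Set.image_singleton,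
      Ideal.mem_span_singleton] at h5
    obtain ⟨y, hy⟩ := h5
    rw [sub_eq_iff_eq_add] at hy
    change IsUnit (π (((fun i => s (w i)) ᵥ* U) 0))
    rw [hy, map_add, map_one]
    refine IsNilpotent.isUnit_add_one ⟨E + 1, ?_⟩
    rw [← map_pow, mul_pow, map_mul, hπp, zero_mul]
  obtain ⟨U, hU, hU2⟩ := lift_SL hπ he2 H n (M.map π) (by
    have := RingHom.map_det π M
    change (π.mapMatrix M).det = 1
    rw [← this, ← sub_eq_zero, ← map_one π, ← map_sub]
    exact Ideal.Quotient.eq_zero_iff_mem.2 (Ideal.mem_span_singleton.2 hM))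
  exact ⟨U, hU, (mk_map_eq_iff _ _ _).1 hU2⟩

end PartD5



section PartE

variable {R : Type*} [CommRing R]

/-- Border a square matrix by a one in the upper left corner. -/
def bord {n : ℕ} (W : Matrix (Fin n) (Fin n) R) : Matrix (Fin (n + 1)) (Fin (n + 1)) R :=
  Matrix.of fun i j =>
    Fin.cases (Fin.cases 1 (fun _ => 0) j) (fun i' => Fin.cases 0 (fun j' => W i' j') j) i

lemma det_bord {n : ℕ} (W : Matrix (Fin n) (Fin n) R) : (bord W).det = W.det := by
  rw [det_succ_row_zero, Finset.sum_eq_single 0]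
  · simp [bord]
    rfl
  · intro j _ hj
    obtain ⟨j, rfl⟩ := Fin.exists_succ_eq_of_ne_zero hj
    simp [bord]
  · simp

lemma bord_mul_zero {n : ℕ} {m : Type*} (W : Matrix (Fin n) (Fin n) R) (P : Matrix (Fin (n + 1)) m R)
    (j : m) : (bord W * P) 0 j = P 0 j := by
  simp [Matrix.mul_apply, Fin.sum_univ_succ, bord]

lemma bord_mul_succ {n : ℕ} {m : Type*} (W : Matrix (Fin n) (Fin n) R) (P : Matrix (Fin (n + 1)) m R)
    (i : Fin n) (j : m) : (bord W * P) i.succ j = ∑ k, W i k * P k.succ j := by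
  simp [Matrix.mul_apply, Fin.sum_univ_succ, bord]

lemma clear_pivot {n m : ℕ} (G : Matrix (Fin (n + 1)) (Fin (m + 1)) R) (h : G 0 0 = 1) :
    ∃ (U : Matrix (Fin (n + 1)) (Fin (n + 1)) R) (V : Matrix (Fin (m + 1)) (Fin (m + 1)) R),
      U.det = 1 ∧ V.det = 1 ∧
      (U * G * V) 0 0 = 1 ∧ (∀ j : Fin m, (U * G * V) 0 j.succ = 0) ∧
      (∀ i : Fin n, (U * G * V) i.succ 0 = 0) := by
  let u : Fin (n + 1) → R := fun i => Fin.cases 0 (fun i' => - G i'.succ 0) i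
  let w : Fin (m + 1) → R := fun i => Fin.cases 0 (fun i' => - G 0 i'.succ) i
  let U : Matrix (Fin (n + 1)) (Fin (n + 1)) R := 1 + (1 : R) • vecMulVec u (Pi.single 0 1)
  let V : Matrix (Fin (m + 1)) (Fin (m + 1)) R := 1 + (1 : R) • vecMulVec (Pi.single 0 1) w
  have hU : ∀ i j, (U * G) i j = G i j + u i * G 0 j := by
    intro i j
    simp [U, Matrix.add_mul, vecMulVec_mul, vecMulVec_apply]
  have hV : ∀ i j, (U * G * V) i j = (U * G) i j + (U * G) i 0 * w j := by
    intro i j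
    generalize U * G = P
    simp [V, Matrix.mul_add, mul_vecMulVec, vecMulVec_apply]
  refine ⟨U, V, (CongSL.rank1 (1 : R) _ _ (by simp [u])).1, (CongSL.rank1 (1 : R) _ _ (by simp [w])).1,
    ?_, ?_, ?_⟩
  · rw [hV, hU]; simp [u, w, h]
  · intro j; rw [hV, hU, hU]; simp [u, w, h]
  · intro j; rw [hV, hU]; simp [u, w, h]

lemma extR {s r : ℕ} (h : s ≤ r) (N : Matrix (Fin s) (Fin s) R) :
    ∃ W : Matrix (Fin r) (Fin r) R, W.det = N.det ∧
      ∀ {m : ℕ} (Y : Matrix (Fin s) (Fin m) R), W * padR r Y = padR r (N * Y) := by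
  obtain ⟨t, rfl⟩ := Nat.exists_eq_add_of_le h
  let e : Fin s ⊕ Fin t ≃ Fin (s + t) := finSumFinEquiv
  refine ⟨(fromBlocks N 0 0 1).submatrix e.symm e.symm, ?_, ?_⟩
  · rw [det_submatrix_equiv_self, det_fromBlocks_zero₂₁]; simp
  · intro m Y
    have h1 : padR (s + t) Y = (fromRows Y 0).submatrix e.symm id := by
      ext i j
      refine Fin.addCases (fun i => ?_) (fun i => ?_) i
      · simp [padR, e]
      · simp [padR, e]
    have h2 : padR (s + t) (N * Y) = (fromRows (N * Y) 0).submatrix e.symm id := by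
      ext i j
      refine Fin.addCases (fun i => ?_) (fun i => ?_) i
      · simp [padR, e]
      · simp [padR, e]
    rw [h1, h2, submatrix_mul_equiv, fromBlocks_mul_fromRows]
    simp

lemma padR_mul {n m : Type*} [Fintype n] {s r : ℕ} (Y : Matrix (Fin s) n R) (V : Matrix n m R) :
    padR r Y * V = padR r (Y * V) := by
  have := congrArg transpose (mul_padC r Vᵀ Yᵀ)
  rw [transpose_mul, transpose_transpose] at this
  have h2 : (padC r Yᵀ)ᵀ = padR r Y := rfl
  have h3 : (padC r (Vᵀ * Yᵀ))ᵀ = padR r (Vᵀ * Yᵀ)ᵀ := rfl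
  rw [h2, h3, transpose_mul, transpose_transpose, transpose_transpose] at this
  exact this

/-- Every entry of `G` is divisible by `c` when all entries lie in `(c)`. -/
lemma exists_smul_of_dI_one {m n : ℕ} (G : Matrix (Fin m) (Fin n) R) (c : R)
    (h : dI 1 G ≤ Ideal.span {c}) : ∃ G', G = c • G' := by
  have : ∀ i j, ∃ y, G i j = c * y := by
    intro i j
    have h1 := dI_le_iff.1 h (fun _ => i) (fun _ => j)
    rw [det_fin_one] at h1
    exact Ideal.mem_span_singleton.1 h1
  choose G' hG' using this
  exact ⟨Matrix.of G', by ext1 i j; simp [hG']⟩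

end PartE



section PartE2

variable {R Q : Type*} [CommRing R] [IsDomain R] [CommRing Q] [IsDomain Q]

lemma pivot_entry (hQS : QS Q) (π : R →+* Q) (hπ : Function.Surjective π)
    (hu : ∀ x, IsUnit (π x) → IsUnit x) {r s : ℕ} (hs : 1 ≤ s)
    (G : Matrix (Fin (r + 1)) (Fin (r + 1)) R) (h1 : dI s G = ⊤)
    (h2 : Ideal.map π (dI (s + 1) G) = ⊥) :
    ∃ U V : Matrix (Fin (r + 1)) (Fin (r + 1)) R, IsUnit U.det ∧ IsUnit V.det ∧
      (U * G * V) 0 0 = 1 := by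
  obtain ⟨hl, -, U, V, N, hU, hV, hN, hdI⟩ := rankNF hQS (r := s) (G.map π) 1 one_ne_zero
    (by rw [dI_map, h1, Ideal.map_top, Ideal.span_singleton_one]) (by rw [dI_map, h2])
  have hNdet : IsUnit N.det := by
    have := hdI s
    rw [dI_square, dI_map, h1, Ideal.map_top, Ideal.span_singleton_eq_top] at this
    exact this
  obtain ⟨W, hW1, hW2⟩ := extR hl N⁻¹
  have hWd : IsUnit W.det := by
    rw [hW1]; exact Matrix.isUnit_nonsing_inv_det _ hNdet
  have key : (W * U) * G.map π * V = padC (r + 1) (padR (r + 1) (1 : Matrix (Fin s) (Fin s) Q)) := by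
    rw [Matrix.mul_assoc W, Matrix.mul_assoc W, hN, mul_padC, hW2, nonsing_inv_mul _ hNdet]
  have hlift : ∀ M : Matrix (Fin (r + 1)) (Fin (r + 1)) Q, ∃ M' : Matrix (Fin (r + 1)) (Fin (r + 1)) R,
      M'.map π = M := by
    intro M
    choose t ht using hπ
    exact ⟨M.map t, by ext1 i j; simp [ht]⟩
  obtain ⟨U', hU'⟩ := hlift (W * U)
  obtain ⟨V', hV'⟩ := hlift V
  have hU'd : IsUnit U'.det := by
    apply hu
    have := RingHom.map_det π U'
    rw [this]
    change IsUnit (U'.map π).det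
    rw [hU', det_mul]
    exact hWd.mul hU
  have hV'd : IsUnit V'.det := by
    apply hu
    have := RingHom.map_det π V'
    rw [this]
    change IsUnit (V'.map π).det
    rwa [hV']
  have hentry : IsUnit ((U' * G * V') 0 0) := by
    apply hu
    have h3 : (U' * G * V').map π = padC (r + 1) (padR (r + 1) (1 : Matrix (Fin s) (Fin s) Q)) := by
      rw [Matrix.map_mul, Matrix.map_mul, hU', hV', key]
    have h4 := congrFun (congrFun h3 0) 0
    rw [Matrix.map_apply] at h4
    rw [h4]
    have : (0 : ℕ) < s := hs
    simp [padC, padR, this]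
  obtain ⟨b, hb⟩ := hentry.exists_left_inv
  refine ⟨b • U', V', ?_, hV'd, ?_⟩
  · rw [det_smul]
    exact ((IsUnit.of_mul_eq_one _ hb).pow _).mul hU'd
  · rw [Matrix.smul_mul, Matrix.smul_mul, Matrix.smul_apply, smul_eq_mul, hb]

lemma span_pow_eq_top {p : R} (hp : ¬ IsUnit p) {k : ℕ} (h : Ideal.span {p ^ k} = ⊤) : k = 0 := by
  rw [Ideal.span_singleton_eq_top] at h
  by_contra hk
  exact hp ((isUnit_pow_iff hk).1 h)

theorem local_rows (hQS : QS Q) (p : R) (hp0 : p ≠ 0) (hp1 : ¬ IsUnit p) (π : R →+* Q)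
    (hπ : Function.Surjective π) (hπp : π p = 0)
    (hu : ∀ x, IsUnit (π x) → IsUnit x) (r : ℕ) :
    ∀ (G : Matrix (Fin r) (Fin r) R) (δ : ℕ → ℕ)
      (_ : ∀ j, j < r → dI j G = Ideal.span {p ^ δ j}) (_ : dI r G ≤ Ideal.span {p ^ δ r}),
      ∃ U : Matrix (Fin r) (Fin r) R, IsUnit U.det ∧
        ∀ i j : Fin r, p ^ (δ ((i : ℕ) + 1) - δ (i : ℕ)) ∣ (U * G) i j := by
  induction r with
  | zero => intro G δ _ _; exact ⟨1, by simp, fun i => i.elim0⟩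
  | succ r ih =>
    intro G δ hδ hδr
    have hδ0 : δ 0 = 0 := by
      have := hδ 0 (by omega)
      rw [dI_zero] at this
      exact span_pow_eq_top hp1 this.symm
    rcases Nat.eq_zero_or_pos r with rfl | hr
    · refine ⟨1, by simp, fun i j => ?_⟩
      have hi : i = 0 := by ext; omega
      have hj : j = 0 := by ext; omega
      subst hi hj
      rw [Matrix.one_mul]
      rw [dI_square, det_fin_one, Ideal.span_singleton_le_span_singleton] at hδr
      exact (pow_dvd_pow p (Nat.sub_le _ _)).trans hδr
    -- the case `δ 1 = 0`
    have main : ∀ (G : Matrix (Fin (r + 1)) (Fin (r + 1)) R) (δ : ℕ → ℕ)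
      (_ : ∀ j, j < r + 1 → dI j G = Ideal.span {p ^ δ j})
      (_ : dI (r + 1) G ≤ Ideal.span {p ^ δ (r + 1)}) (_ : δ 0 = 0) (_ : δ 1 = 0),
      ∃ U : Matrix (Fin (r + 1)) (Fin (r + 1)) R, IsUnit U.det ∧
        ∀ i j : Fin (r + 1), p ^ (δ ((i : ℕ) + 1) - δ (i : ℕ)) ∣ (U * G) i j := by
      clear hδ0 hδr hδ δ G
      intro G δ hδ hδr h0 h1
      by_cases hall : ∀ j, j ≤ r + 1 → δ j = 0
      · refine ⟨1, by simp, fun i j => ?_⟩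
        rw [hall (i + 1) (by omega)]
        simp
      · push Not at hall
        have hex : ∃ j, j ≤ r + 1 ∧ δ j ≠ 0 := hall
        classical
        obtain ⟨hj1, hj2⟩ := Nat.find_spec hex
        have hmin := fun m hm => Nat.find_min hex (m := m) hm
        obtain ⟨s, hs⟩ : ∃ s, Nat.find hex = s + 1 := by
          refine Nat.exists_eq_succ_of_ne_zero ?_
          intro h; rw [h] at hj2; exact hj2 h0
        rw [hs] at hj1 hj2 hmin
        have hsδ : δ s = 0 := by
          have := hmin s (by omega)
          push Not at this
          exact this (by omega)
        have hs1 : 1 ≤ s := by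
          rcases Nat.eq_zero_or_pos s with rfl | h
          · exact absurd h1 hj2
          · exact h
        obtain ⟨U, V, hU, hV, hUV⟩ := pivot_entry hQS π hπ hu hs1 G
          (by rw [hδ s (by omega), hsδ]; simp) (by
            have hle : dI (s + 1) G ≤ Ideal.span {p} := by
              have : dI (s + 1) G ≤ Ideal.span {p ^ δ (s + 1)} := by
                rcases Nat.lt_or_ge (s + 1) (r + 1) with h | h
                · exact (hδ _ h).le
                · rw [show s + 1 = r + 1 by omega]; exact hδr
              exact this.trans (Ideal.span_singleton_le_span_singleton.2 (dvd_pow_self p hj2))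
            rw [eq_bot_iff]
            refine (Ideal.map_mono hle).trans ?_
            rw [Ideal.map_span, Set.image_singleton, hπp]
            simp)
        obtain ⟨U2, V2, hU2, hV2, h00, h0j, hi0⟩ := clear_pivot _ hUV
        obtain ⟨P, hP⟩ : ∃ P, P = U2 * (U * G * V) * V2 := ⟨_, rfl⟩
        rw [← hP] at h00 h0j hi0
        have hPd : ∀ k, dI k P = dI k G := by
          intro k
          rw [hP, dI_unit_right _ _ _ (by rw [hV2]; exact isUnit_one),
            dI_unit_left _ _ (by rw [hU2]; exact isUnit_one), dI_unit_right _ _ _ hV,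
            dI_unit_left _ _ hU]
        have hpiv := dI_pivot P h00 h0j hi0
        obtain ⟨W, hW, hWd⟩ := ih (P.submatrix Fin.succ Fin.succ) (fun j => δ (j + 1))
          (fun j hj => by rw [← hpiv, hPd]; exact hδ _ (by omega))
          (by rw [← hpiv, hPd]; exact hδr)
        have hVV : IsUnit (V * V2).det := by
          rw [det_mul, hV2, mul_one]; exact hV
        refine ⟨bord W * (U2 * U), ?_, ?_⟩
        · rw [det_mul, det_mul, det_bord, hU2, one_mul]
          exact hW.mul hU
        · have hrow : ∀ i j : Fin (r + 1), p ^ (δ ((i : ℕ) + 1) - δ (i : ℕ)) ∣ (bord W * P) i j := by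
            intro i j
            refine Fin.cases ?_ (fun i => ?_) i
            · simp [h1]
            · rw [bord_mul_succ]
              refine Fin.cases ?_ (fun j => ?_) j
              · simp [hi0]
              · exact hWd i j
          have heq : bord W * (U2 * U) * G = bord W * P * (V * V2)⁻¹ := by
            rw [hP]
            have : U2 * (U * G * V) * V2 = U2 * U * G * (V * V2) := by
              simp only [Matrix.mul_assoc]
            have h9 : bord W * (U2 * U * G * (V * V2)) * (V * V2)⁻¹ =
                bord W * (U2 * U * G * ((V * V2) * (V * V2)⁻¹)) := by
              simp only [Matrix.mul_assoc]
            rw [this, h9, mul_nonsing_inv _ hVV, Matrix.mul_one]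
            simp only [Matrix.mul_assoc]
          intro i j
          rw [heq, Matrix.mul_apply]
          exact Finset.dvd_sum fun k _ => (hrow i k).mul_right _
    obtain ⟨G1, hG1⟩ := exists_smul_of_dI_one G (p ^ δ 1) (hδ 1 (by omega)).le
    have hdI : ∀ j, dI j G = Ideal.span {p ^ (j * δ 1)} * dI j G1 := by
      intro j
      rw [hG1, dI_smul, ← pow_mul, mul_comm (δ 1)]
    have hge : ∀ j, j < r + 1 → j * δ 1 ≤ δ j := by
      intro j hj
      have : Ideal.span {p ^ δ j} ≤ Ideal.span {p ^ (j * δ 1)} := by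
        rw [← hδ j hj, hdI]; exact Ideal.mul_le_left
      rw [Ideal.span_singleton_le_span_singleton] at this
      exact (pow_dvd_pow_iff hp0 hp1).1 this
    have hcancel : ∀ k, Ideal.span {p ^ k} ≠ (⊥ : Ideal R) := fun k => by
      simp [Ideal.span_singleton_eq_bot, hp0]
    obtain ⟨U, hU, hUd⟩ := main G1 (fun j => δ j - j * δ 1) (fun j hj => by
        have h3 := hdI j
        rw [hδ j hj] at h3
        obtain ⟨t, ht⟩ := Nat.exists_eq_add_of_le (hge j hj)
        rw [ht, pow_add, ← Ideal.span_singleton_mul_span_singleton] at h3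
        have h4 := (Ideal.span_singleton_mul_right_inj (pow_ne_zero (j * δ 1) hp0)).1 h3
        simp only [ht, Nat.add_sub_cancel_left]
        exact h4.symm)
      (by
        rw [dI_square, Ideal.span_singleton_le_span_singleton] at hδr ⊢
        rw [hG1, det_smul, Fintype.card_fin, ← pow_mul] at hδr
        rcases Nat.le_total ((r + 1) * δ 1) (δ (r + 1)) with h | h
        · obtain ⟨t, ht⟩ := Nat.exists_eq_add_of_le h
          simp only [ht, Nat.add_sub_cancel_left]
          rw [ht, pow_add, mul_comm (δ 1)] at hδr
          exact (mul_dvd_mul_iff_left (pow_ne_zero _ hp0)).1 hδr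
        · simp only [Nat.sub_eq_zero_of_le h, pow_zero]
          exact one_dvd _)
      (by simp [hδ0]) (by simp)
    refine ⟨U, hU, fun i j => ?_⟩
    rw [hG1, Matrix.mul_smul, Matrix.smul_apply, smul_eq_mul]
    refine (pow_dvd_pow p ?_).trans (by rw [pow_add]; exact mul_dvd_mul_left _ (hUd i j))
    have h5 := hge i i.2
    have h6 : ((i : ℕ) + 1) * δ 1 = i * δ 1 + δ 1 := by ring
    rw [h6]
    omega

end PartE2



section PartE3

variable {R : Type*} [CommRing R] [IsDomain R]

/-- The submonoid `1 + pR`. -/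
def onePlus (p : R) : Submonoid R where
  carrier := {x | p ∣ x - 1}
  one_mem' := by simp
  mul_mem' := by
    intro a b ha hb
    have : a * b - 1 = (a - 1) * b + (b - 1) := by ring
    change p ∣ a * b - 1
    rw [this]
    exact dvd_add (Dvd.dvd.mul_right ha _) hb

lemma mem_onePlus {p x : R} : x ∈ onePlus p ↔ p ∣ x - 1 := Iff.rfl

lemma onePlus_coprime {p x : R} (h : x ∈ onePlus p) : IsCoprime x p := by
  obtain ⟨t, ht⟩ := h
  exact ⟨1, -t, by linear_combination ht⟩

theorem local_adapt (p : R) (hp : Prime p) (hQS : QS (R ⧸ Ideal.span {p})) {r : ℕ}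
    (G : Matrix (Fin r) (Fin r) R) (δ : ℕ → ℕ) (c : ℕ → R) (hc : ∀ j, j ≤ r → IsCoprime (c j) p)
    (h1 : ∀ j, j < r → dI j G = Ideal.span {p ^ δ j * c j})
    (h2 : dI r G ≤ Ideal.span {p ^ δ r * c r}) (E : ℕ) :
    ∃ M : Matrix (Fin r) (Fin r) R, p ^ E ∣ M.det - 1 ∧
      ∀ i j : Fin r, p ^ (δ ((i : ℕ) + 1) - δ (i : ℕ)) ∣ (M * G) i j := by
  rcases r with _ | r
  · exact ⟨1, by simp, fun i => i.elim0⟩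
  haveI hprime : (Ideal.span {p}).IsPrime := (Ideal.span_singleton_prime hp.ne_zero).2 hp
  haveI : IsDomain (R ⧸ Ideal.span {p}) := Ideal.Quotient.isDomain _
  obtain ⟨S, hS⟩ : ∃ S, S = onePlus p := ⟨_, rfl⟩
  have hmemS : ∀ x, x ∈ S ↔ p ∣ x - 1 := by intro x; rw [hS]; exact mem_onePlus
  have hS0 : S ≤ nonZeroDivisors R := by
    intro x hx
    rw [mem_nonZeroDivisors_iff_ne_zero]
    rintro rfl
    rw [hmemS] at hx
    simp only [zero_sub, dvd_neg] at hx
    exact hp.not_unit (isUnit_of_dvd_one hx)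
  haveI : IsDomain (Localization S) := IsLocalization.isDomain_localization hS0
  have hinj : Function.Injective (algebraMap R (Localization S)) :=
    IsLocalization.injective _ hS0
  have hmk : ∀ x ∈ S, Ideal.Quotient.mk (Ideal.span {p}) x = 1 := by
    intro x hx
    rw [← map_one (Ideal.Quotient.mk (Ideal.span {p})), Ideal.Quotient.mk_eq_mk_iff_sub_mem,
      Ideal.mem_span_singleton]
    exact (hmemS x).1 hx
  have hg : ∀ y : S, IsUnit (Ideal.Quotient.mk (Ideal.span {p}) y) := by
    intro y; rw [hmk y y.2]; exact isUnit_one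
  obtain ⟨π, hπ⟩ : ∃ π : Localization S →+* R ⧸ Ideal.span {p},
      ∀ x, π (algebraMap R _ x) = Ideal.Quotient.mk _ x :=
    ⟨IsLocalization.lift hg, fun x => IsLocalization.lift_eq hg x⟩
  have hunitS : ∀ x, IsUnit (Ideal.Quotient.mk (Ideal.span {p}) x) →
      IsUnit (algebraMap R (Localization S) x) := by
    intro x hx
    obtain ⟨b, hb⟩ := hx.exists_right_inv
    obtain ⟨b, rfl⟩ := Ideal.Quotient.mk_surjective b
    rw [← map_mul, ← map_one (Ideal.Quotient.mk (Ideal.span {p})),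
      Ideal.Quotient.mk_eq_mk_iff_sub_mem, Ideal.mem_span_singleton, ← hmemS] at hb
    have := IsLocalization.map_units (Localization S) ⟨_, hb⟩
    rw [map_mul] at this
    exact isUnit_of_mul_isUnit_left this
  have hu : ∀ x, IsUnit (π x) → IsUnit x := by
    intro x hx
    obtain ⟨a, s, rfl⟩ := IsLocalization.exists_mk'_eq S x
    have h3 := IsLocalization.mk'_spec (Localization S) a s
    have h4 := congrArg π h3
    rw [map_mul, hπ, hπ, hmk s s.2, mul_one] at h4
    rw [h4] at hx
    have h5 := hunitS _ hx
    rw [← h3] at h5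
    exact isUnit_of_mul_isUnit_left h5
  have hcu : ∀ j, j ≤ r + 1 → IsUnit (algebraMap R (Localization S) (c j)) := by
    intro j hj
    obtain ⟨u, v, huv⟩ := hc j hj
    apply hunitS
    refine IsUnit.of_mul_eq_one (Ideal.Quotient.mk _ u) ?_
    rw [← map_mul, ← map_one (Ideal.Quotient.mk (Ideal.span {p})),
      Ideal.Quotient.mk_eq_mk_iff_sub_mem, Ideal.mem_span_singleton]
    exact ⟨-v, by linear_combination huv⟩
  have hspan : ∀ j, j ≤ r + 1 → Ideal.map (algebraMap R (Localization S))
      (Ideal.span {p ^ δ j * c j}) = Ideal.span {(algebraMap R (Localization S) p) ^ δ j} := by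
    intro j hj
    rw [Ideal.map_span, Set.image_singleton, map_mul, map_pow]
    exact Ideal.span_singleton_mul_right_unit (hcu j hj) _
  obtain ⟨U, hU, hUd⟩ := local_rows hQS (algebraMap R (Localization S) p)
    (by rw [Ne, map_eq_zero_iff _ hinj]; exact hp.ne_zero)
    (by
      intro h
      have := h.map π
      rw [hπ, Ideal.Quotient.eq_zero_iff_mem.2 (Ideal.mem_span_singleton_self p)] at this
      exact not_isUnit_zero this)
    π (fun y => by
      obtain ⟨x, rfl⟩ := Ideal.Quotient.mk_surjective y
      exact ⟨_, hπ x⟩)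
    (by rw [hπ, Ideal.Quotient.eq_zero_iff_mem.2 (Ideal.mem_span_singleton_self p)]) hu (r + 1)
    (G.map (algebraMap R (Localization S))) δ
    (fun j hj => by rw [dI_map, h1 j hj, hspan j hj.le])
    (by rw [dI_map, ← hspan _ le_rfl]; exact Ideal.map_mono h2)
  obtain ⟨d, hdS, N, hN⟩ := exists_clear S U
  have hcopS : ∀ x ∈ S, ∀ v, IsCoprime x (p ^ v) := by
    intro x hx v
    rw [hS] at hx
    exact (onePlus_coprime hx).pow_right
  have hNG : ∀ i j : Fin (r + 1), p ^ (δ ((i : ℕ) + 1) - δ (i : ℕ)) ∣ (N * G) i j := by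
    intro i j
    have h3 : (N * G).map (algebraMap R (Localization S)) =
        algebraMap R (Localization S) d • (U * G.map (algebraMap R (Localization S))) := by
      rw [Matrix.map_mul, hN, Matrix.smul_mul]
    have h4 := congrFun (congrFun h3 i) j
    rw [Matrix.map_apply, Matrix.smul_apply, smul_eq_mul] at h4
    obtain ⟨y, hy⟩ := hUd i j
    rw [hy] at h4
    obtain ⟨a, s, rfl⟩ := IsLocalization.exists_mk'_eq S y
    have h5 := IsLocalization.mk'_spec (Localization S) a s
    have h6 : (N * G) i j * s = p ^ (δ ((i : ℕ) + 1) - δ (i : ℕ)) * (d * a) := by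
      apply hinj
      rw [map_mul, h4, map_mul, map_mul, map_pow, ← h5]
      ring
    exact (hcopS s s.2 _).symm.dvd_of_dvd_mul_right ⟨_, h6⟩
  have hNdet : IsCoprime N.det (p ^ E) := by
    have h3 : IsUnit (algebraMap R (Localization S) N.det) := by
      rw [RingHom.map_det]
      change IsUnit (N.map _).det
      rw [hN, det_smul]
      exact ((IsLocalization.map_units (Localization S) ⟨d, hdS⟩).pow _).mul hU
    obtain ⟨y, hy⟩ := h3.exists_right_inv
    obtain ⟨a, s, rfl⟩ := IsLocalization.exists_mk'_eq S y
    have h5 := IsLocalization.mk'_spec (Localization S) a s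
    have h6 : N.det * a = s := by
      apply hinj
      rw [map_mul, ← h5, ← mul_assoc, hy, one_mul]
    have := hcopS s s.2 E
    rw [← h6] at this
    exact this.of_mul_left_left
  obtain ⟨b, b', hb⟩ := hNdet
  refine ⟨diagonal (fun i => if i = 0 then b else 1) * N, ?_, ?_⟩
  · rw [det_mul, det_diagonal, Finset.prod_ite_eq']
    simp only [Finset.mem_univ, if_true]
    exact ⟨-b', by linear_combination hb⟩
  · intro i j
    rw [Matrix.mul_assoc, diagonal_mul]
    exact (hNG i j).mul_left _

end PartE3



section PartE4

variable {A : Type*} [CommRing A] [IsDomain A] [IsPrincipalIdealRing A]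

lemma qs_quot (k : ℕ) (p : A) (hp : Prime p) :
    QS (MvPolynomial (Fin k) A ⧸ Ideal.span {(C p : MvPolynomial (Fin k) A)}) := by
  haveI : (Ideal.span {p}).IsMaximal := PrincipalIdealRing.isMaximal_of_irreducible hp.irreducible
  letI : Field (A ⧸ Ideal.span {p}) := Ideal.Quotient.field _
  have h1 := qs_mvPolynomial (k := A ⧸ Ideal.span {p}) k
  have e1 := (MvPolynomial.quotientEquivQuotientMvPolynomial (σ := Fin k) (Ideal.span {p})).toRingEquiv
  have e2 := Ideal.quotEquivOfEq (show Ideal.map (C : A →+* MvPolynomial (Fin k) A) (Ideal.span {p}) =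
    Ideal.span {C p} by rw [Ideal.map_span, Set.image_singleton])
  exact QS.of_equiv (e1.trans e2) h1

/-- Chinese remainder theorem for matrices of determinant one. -/
lemma crt_SL [DecidableEq A] (T : Finset A) (hT : ∀ p ∈ T, Prime p)
    (hTc : ∀ p ∈ T, ∀ q ∈ T, p ≠ q → IsCoprime p q) (E k n : ℕ)
    (M : A → Matrix (Fin n) (Fin n) (MvPolynomial (Fin k) A))
    (hM : ∀ p ∈ T, (C p : MvPolynomial (Fin k) A) ^ (E + 1) ∣ (M p).det - 1) :
    ∃ U : Matrix (Fin n) (Fin n) (MvPolynomial (Fin k) A), U.det = 1 ∧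
      ∀ p ∈ T, ∃ Y, U = M p + (C p : MvPolynomial (Fin k) A) ^ (E + 1) • Y := by
  have hstep : ∀ p ∈ T, ∃ U : Matrix (Fin n) (Fin n) (MvPolynomial (Fin k) A), U.det = 1 ∧
      (∃ Y, U = M p + (C p : MvPolynomial (Fin k) A) ^ (E + 1) • Y) ∧
      ∀ q ∈ T, q ≠ p → ∃ Y, U = 1 + (C q : MvPolynomial (Fin k) A) ^ (E + 1) • Y := by
    intro p hp
    obtain ⟨U, hU1, hU2⟩ := lift_SL_pow p (∏ q ∈ T.erase p, q ^ (E + 1)) (hT p hp)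
      (IsCoprime.prod_left fun q hq => (hTc q (Finset.mem_of_mem_erase hq) p hp
        (Finset.ne_of_mem_erase hq)).pow_left) E k n (M p) (hM p hp)
    refine ⟨U, hU1.1, hU2, fun q hq hqp => ?_⟩
    obtain ⟨-, Y, hY⟩ := hU1
    obtain ⟨t, ht⟩ := Finset.dvd_prod_of_mem (fun q => q ^ (E + 1)) (Finset.mem_erase.2 ⟨hqp, hq⟩)
    refine ⟨(C t : MvPolynomial (Fin k) A) • Y, ?_⟩
    rw [hY, ht, map_mul, map_pow, smul_smul]
  have hind : ∀ T' : Finset A, T' ⊆ T →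
      ∃ U : Matrix (Fin n) (Fin n) (MvPolynomial (Fin k) A), U.det = 1 ∧
      (∀ p ∈ T', ∃ Y, U = M p + (C p : MvPolynomial (Fin k) A) ^ (E + 1) • Y) ∧
      ∀ q ∈ T, q ∉ T' → ∃ Y, U = 1 + (C q : MvPolynomial (Fin k) A) ^ (E + 1) • Y := by
    intro T'
    induction T' using Finset.induction_on with
    | empty => intro _; exact ⟨1, by simp, by simp, fun q _ _ => ⟨0, by simp⟩⟩
    | insert p T' hp ih =>
      intro hsub
      obtain ⟨U, hU1, hU2, hU3⟩ := ih (fun x hx => hsub (Finset.mem_insert_of_mem hx))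
      have hpT : p ∈ T := hsub (Finset.mem_insert_self _ _)
      obtain ⟨V, hV1, hV2, hV3⟩ := hstep p hpT
      refine ⟨V * U, by rw [det_mul, hU1, hV1, one_mul], fun q hq => ?_, fun q hq hq' => ?_⟩
      · rcases Finset.mem_insert.1 hq with rfl | hq1
        · have h1 := hU3 q hpT hp
          rw [← mk_map_eq_iff] at hV2 h1 ⊢
          rw [Matrix.map_mul, hV2, h1, ← Matrix.map_mul, Matrix.mul_one]
        · have h1 := hU2 q hq1
          have h2 := hV3 q (hsub hq) (by rintro rfl; exact hp hq1)
          rw [← mk_map_eq_iff] at h1 h2 ⊢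
          rw [Matrix.map_mul, h1, h2, ← Matrix.map_mul, Matrix.one_mul]
      · rw [Finset.mem_insert, not_or] at hq'
        have h1 := hU3 q hq hq'.2
        have h2 := hV3 q hq hq'.1
        rw [← mk_map_eq_iff] at h1 h2 ⊢
        rw [Matrix.map_mul, h1, h2, ← Matrix.map_mul, Matrix.one_mul]
  obtain ⟨U, h1, h2, -⟩ := hind T subset_rfl
  exact ⟨U, h1, h2⟩

open UniqueFactorizationMonoid in
theorem step2 [NormalizationMonoid A] {k r : ℕ} (F : Matrix (Fin r) (Fin r) (MvPolynomial (Fin k) A))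
    (h : ℕ → A) (hh : ∀ i, i < r → h i ≠ 0)
    (h1 : ∀ j, j < r → dI j F = Ideal.span {C (∏ i ∈ Finset.range j, h i)})
    (h2 : dI r F ≤ Ideal.span {C (∏ i ∈ Finset.range r, h i)}) :
    ∃ U : Matrix (Fin r) (Fin r) (MvPolynomial (Fin k) A), U.det = 1 ∧
      ∀ i j : Fin r, C (h i) ∣ (U * F) i j := by
  classical
  obtain ⟨T, hTdef⟩ : ∃ T, T = (normalizedFactors (∏ i ∈ Finset.range r, h i)).toFinset := ⟨_, rfl⟩
  have hprod0 : (∏ i ∈ Finset.range r, h i) ≠ 0 :=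
    Finset.prod_ne_zero_iff.2 fun i hi => hh i (Finset.mem_range.1 hi)
  have hT : ∀ p ∈ T, Prime p := fun p hp => by
    rw [hTdef, Multiset.mem_toFinset] at hp; exact prime_of_normalized_factor p hp
  have hTn : ∀ p ∈ T, normalize p = p := fun p hp => by
    rw [hTdef, Multiset.mem_toFinset] at hp; exact normalize_normalized_factor p hp
  have hTc : ∀ p ∈ T, ∀ q ∈ T, p ≠ q → IsCoprime p q := by
    intro p hp q hq hpq
    rw [(hT p hp).irreducible.coprime_iff_not_dvd]
    intro hd
    apply hpq
    rw [← hTn p hp, ← hTn q hq]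
    exact normalize_eq_normalize_iff_associated.2
      ((hT p hp).irreducible.associated_of_dvd (hT q hq).irreducible hd)
  obtain ⟨g, hg⟩ : ∃ g : A → ℕ → ℕ, g = fun p i => (normalizedFactors (h i)).count p := ⟨_, rfl⟩
  have hfac : ∀ p ∈ T, ∀ i, i < r → ∃ h', h i = p ^ g p i * h' ∧ IsCoprime h' p := by
    intro p hp i hi
    have h3 := emultiplicity_eq_count_normalizedFactors (hT p hp).irreducible (hh i hi)
    rw [hTn p hp, emultiplicity_eq_coe] at h3
    obtain ⟨⟨h', h4⟩, h5⟩ := h3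
    refine ⟨h', by rw [hg]; exact h4, ?_⟩
    rw [isCoprime_comm, (hT p hp).irreducible.coprime_iff_not_dvd]
    rintro ⟨t, rfl⟩
    exact h5 ⟨t, h4.trans (by ring)⟩
  have hloc : ∀ E, ∀ p : A, ∃ M : Matrix (Fin r) (Fin r) (MvPolynomial (Fin k) A), p ∈ T →
      (C p : MvPolynomial (Fin k) A) ^ (E + 1) ∣ M.det - 1 ∧
      ∀ i j : Fin r, (C p : MvPolynomial (Fin k) A) ^ (g p i) ∣ (M * F) i j := by
    intro E p
    by_cases hp : p ∈ T
    swap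
    · exact ⟨1, fun h => absurd h hp⟩
    have hfac' : ∀ i, ∃ h', i < r → h i = p ^ g p i * h' ∧ IsCoprime h' p := by
      intro i
      by_cases hi : i < r
      · obtain ⟨h', h3⟩ := hfac p hp i hi
        exact ⟨h', fun _ => h3⟩
      · exact ⟨0, fun h => absurd h hi⟩
    choose h' hh' using hfac'
    have hpe : ∀ j, j ≤ r → C (∏ i ∈ Finset.range j, h i) = (C p : MvPolynomial (Fin k) A) ^
        (∑ i ∈ Finset.range j, g p i) * C (∏ i ∈ Finset.range j, h' i) := by
      intro j hj
      rw [← map_pow, ← map_mul]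
      congr 1
      rw [← Finset.prod_pow_eq_pow_sum, ← Finset.prod_mul_distrib]
      exact Finset.prod_congr rfl fun i hi => (hh' i (by have := Finset.mem_range.1 hi; omega)).1
    obtain ⟨M, hM1, hM2⟩ := local_adapt (C p : MvPolynomial (Fin k) A)
      ((MvPolynomial.prime_C_iff _).2 (hT p hp)) (qs_quot k p (hT p hp)) F
      (fun j => ∑ i ∈ Finset.range j, g p i) (fun j => C (∏ i ∈ Finset.range j, h' i))
      (fun j hj => IsCoprime.map (IsCoprime.prod_left fun i hi =>
        (hh' i (by have := Finset.mem_range.1 hi; omega)).2) (C : A →+* MvPolynomial (Fin k) A))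
      (fun j hj => by rw [h1 j hj, hpe j hj.le]) (by rw [← hpe r le_rfl]; exact h2) (E + 1)
    refine ⟨M, fun _ => ⟨hM1, fun i j => ?_⟩⟩
    have := hM2 i j
    simpa only [Finset.sum_range_succ, Nat.add_sub_cancel_left] using this
  obtain ⟨E, hE⟩ : ∃ E, ∀ p ∈ T, ∀ i, i < r → g p i ≤ E := by
    refine ⟨∑ p ∈ T, ∑ i ∈ Finset.range r, g p i, fun p hp i hi => ?_⟩
    exact (Finset.single_le_sum (f := fun i => g p i) (fun _ _ => Nat.zero_le _)
      (Finset.mem_range.2 hi)).trans (Finset.single_le_sum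
        (f := fun p => ∑ i ∈ Finset.range r, g p i) (fun _ _ => Nat.zero_le _) hp)
  choose M hM using hloc E
  obtain ⟨U, hU, hUM⟩ := crt_SL T hT hTc E k r M (fun p hp => (hM p hp).1)
  refine ⟨U, hU, fun i j => ?_⟩
  have hdvd : ∀ p ∈ T, (C p : MvPolynomial (Fin k) A) ^ (g p i) ∣ (U * F) i j := by
    intro p hp
    obtain ⟨Y, hY⟩ := hUM p hp
    rw [hY, Matrix.add_mul, Matrix.smul_mul, Matrix.add_apply, Matrix.smul_apply, smul_eq_mul]
    refine dvd_add ((hM p hp).2 i j) (Dvd.dvd.mul_right (pow_dvd_pow _ ?_) _)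
    have := hE p hp i i.2
    omega
  have hsub : (normalizedFactors (h i)).toFinset ⊆ T := by
    rw [hTdef]
    apply Multiset.toFinset_subset.2
    exact Multiset.subset_of_le ((dvd_iff_normalizedFactors_le_normalizedFactors
      (hh i i.2) hprod0).1 (Finset.dvd_prod_of_mem h (Finset.mem_range.2 i.2)))
  have hass : C (h i) ∣ (∏ p ∈ T, (C p : MvPolynomial (Fin k) A) ^ (g p i)) := by
    have h3 := (prod_normalizedFactors (hh i i.2)).symm.dvd
    rw [Finset.prod_multiset_count_of_subset _ T hsub] at h3
    have h4 := map_dvd (C : A →+* MvPolynomial (Fin k) A) h3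
    rw [map_prod] at h4
    simp only [map_pow] at h4
    rw [hg]
    exact h4
  refine hass.trans (Finset.prod_dvd_of_coprime ?_ hdvd)
  intro p hp q hq hpq
  exact ((hTc p hp q hq hpq).map (C : A →+* MvPolynomial (Fin k) A)).pow

end PartE4



section PartF1

variable {R : Type*} [CommRing R]

lemma deriv_prod {B : Type*} [CommRing B] [Algebra B R] (D : Derivation B R R) {ι : Type*}
    [DecidableEq ι] (s : Finset ι) (f : ι → R) :
    D (∏ i ∈ s, f i) = ∑ i ∈ s, D (f i) * ∏ j ∈ s.erase i, f j := by
  induction s using Finset.induction_on with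
  | empty => simp
  | insert a s ha ih =>
    rw [Finset.prod_insert ha, Derivation.leibniz, ih, Finset.sum_insert ha, Finset.erase_insert ha,
      smul_eq_mul, smul_eq_mul, Finset.mul_sum, add_comm, mul_comm (∏ i ∈ s, f i)]
    congr 1
    refine Finset.sum_congr rfl fun i hi => ?_
    have hne : a ≠ i := by rintro rfl; exact ha hi
    rw [Finset.erase_insert_of_ne hne, Finset.prod_insert (fun h => ha (Finset.mem_of_mem_erase h))]
    ring

lemma deriv_det {B : Type*} [CommRing B] [Algebra B R] (D : Derivation B R R) {n : ℕ}
    (F : Matrix (Fin n) (Fin n) R) :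
    D F.det = ∑ i, (F.updateRow i (fun j => D (F i j))).det := by
  have hdet : ∀ M : Matrix (Fin n) (Fin n) R,
      M.det = ∑ σ : Equiv.Perm (Fin n), ((Equiv.Perm.sign σ : ℤ) : R) * ∏ i, M i (σ i) := by
    intro M
    rw [← det_transpose, det_apply']
    rfl
  rw [hdet, map_sum]
  simp only [hdet]
  rw [Finset.sum_comm]
  refine Finset.sum_congr rfl fun σ _ => ?_
  rw [Derivation.leibniz, Derivation.map_intCast, smul_zero, add_zero, smul_eq_mul, deriv_prod,
    Finset.mul_sum]
  refine Finset.sum_congr rfl fun i _ => ?_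
  congr 1
  rw [← Finset.mul_prod_erase Finset.univ _ (Finset.mem_univ i), updateRow_self]
  congr 1
  refine Finset.prod_congr rfl fun j hj => ?_
  rw [updateRow_ne (Finset.ne_of_mem_erase hj)]

lemma deriv_det_mem {B : Type*} [CommRing B] [Algebra B R] (D : Derivation B R R) {k : ℕ}
    (F : Matrix (Fin (k + 1)) (Fin (k + 1)) R) : D F.det ∈ dI k F := by
  rw [deriv_det]
  refine Ideal.sum_mem _ fun i _ => ?_
  rw [det_succ_row _ i]
  refine Ideal.sum_mem _ fun j _ => Ideal.mul_mem_left _ _ ?_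
  rw [submatrix_updateRow_succAbove]
  exact det_mem_dI F _ _

lemma adj_mem_dI {k : ℕ} (F : Matrix (Fin (k + 1)) (Fin (k + 1)) R) (i j) :
    F.adjugate i j ∈ dI k F := by
  rw [adjugate_fin_succ_eq_det_submatrix]
  exact Ideal.mul_mem_left _ _ (det_mem_dI F _ _)

/-- Block upper triangular matrix with blocks `W`, `c`, `1`. -/
def blk {k : ℕ} (W : Matrix (Fin k) (Fin k) R) (c : Fin k → R) :
    Matrix (Fin (k + 1)) (Fin (k + 1)) R :=
  Matrix.of (Fin.lastCases (Fin.lastCases 1 (fun _ => 0))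
    (fun i => Fin.lastCases (c i) (fun j => W i j)))

variable {k : ℕ} (W : Matrix (Fin k) (Fin k) R) (c : Fin k → R)

lemma blk_cc (i j : Fin k) : blk W c i.castSucc j.castSucc = W i j := by simp [blk]
lemma blk_cl (i : Fin k) : blk W c i.castSucc (Fin.last k) = c i := by simp [blk]
lemma blk_lc (j : Fin k) : blk W c (Fin.last k) j.castSucc = 0 := by simp [blk]
lemma blk_ll : blk W c (Fin.last k) (Fin.last k) = 1 := by simp [blk]

lemma det_blk : (blk W c).det = W.det := by
  rw [det_succ_row _ (Fin.last k), Fin.sum_univ_castSucc]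
  have : (blk W c).submatrix (Fin.last k).succAbove (Fin.last k).succAbove = W := by
    ext1 i j
    simp [blk_cc]
  rw [this, blk_ll]
  simp [blk_lc, ← two_mul, pow_mul]

end PartF1



section PartF2

variable {R : Type*} [CommRing R] [IsDomain R]

/-- The diagonal matrix `diag(1, …, 1, g)`. -/
def dlast (k : ℕ) (g : R) : Matrix (Fin (k + 1)) (Fin (k + 1)) R :=
  diagonal (fun i => if i = Fin.last k then g else 1)

lemma det_dlast (k : ℕ) (g : R) : (dlast k g).det = g := by
  rw [dlast, det_diagonal, Finset.prod_ite_eq']; simp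

lemma phi_idem (g : R) (φ : R →+* R) (hφ : ∀ y, g ∣ y - φ y) (hφg : φ g = 0) (y : R) :
    φ (φ y) = φ y := by
  obtain ⟨t, ht⟩ := hφ y
  have := congrArg φ ht
  rw [map_sub, map_mul, hφg, zero_mul, sub_eq_zero] at this
  exact this.symm

lemma peel (hQS : QS R) {B : Type*} [CommRing B] [Algebra B R] (D : Derivation B R R) (g : R)
    (hD : D g = 1) (φ : R →+* R) (hφ : ∀ y, g ∣ y - φ y) (hφg : φ g = 0) {k : ℕ}
    (F : Matrix (Fin (k + 1)) (Fin (k + 1)) R) (u : R) (hu : IsUnit u) (hF : F.det = u * g) :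
    ∃ Q F4 : Matrix (Fin (k + 1)) (Fin (k + 1)) R, Q.map φ = Q ∧ IsUnit Q.det ∧ IsUnit F4.det ∧
      F = Q * dlast k g * F4 := by
  have hg0 : g ≠ 0 := by
    rintro rfl; rw [map_zero] at hD; exact zero_ne_one hD
  have htop : dI k F = ⊤ := by
    have h1 := deriv_det_mem D F
    have h2 : g ∈ dI k F := by
      have : F.det ∈ dI k F := dI_antitone F (Nat.le_succ k) (by
        rw [Nat.succ_eq_add_one, dI_square]; exact Ideal.mem_span_singleton_self _)
      rw [hF] at this
      exact (Ideal.unit_mul_mem_iff_mem _ hu).1 this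
    rw [hF, Derivation.leibniz, hD, smul_eq_mul, mul_one, smul_eq_mul] at h1
    have h3 : u ∈ dI k F := by
      have := Ideal.sub_mem _ h1 (Ideal.mul_mem_right (D u) _ h2)
      simpa using this
    exact Ideal.eq_top_of_isUnit_mem _ h3 hu
  obtain ⟨-, -, U, V, G, hU, hV, hUV, -⟩ := rankNF hQS (r := k) (F.map φ) 1 one_ne_zero
    (by rw [dI_map, htop, Ideal.map_top, Ideal.span_singleton_one])
    (by rw [dI_map, dI_square, hF, Ideal.map_span, Set.image_singleton, map_mul, hφg, mul_zero]; simp)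
  have hUN : ∀ j, (U * F.map φ) (Fin.last k) j = 0 := by
    have h1 : U * F.map φ = padC (k + 1) (padR (k + 1) G) * V⁻¹ := by
      rw [← hUV, Matrix.mul_assoc, mul_nonsing_inv _ hV, Matrix.mul_one]
    intro j
    rw [h1, Matrix.mul_apply]
    refine Finset.sum_eq_zero fun i _ => ?_
    simp [padC, padR]
  have hφφ : (F.map φ).map φ = F.map φ := by
    ext1 i j; simp [phi_idem g φ hφ hφg]
  have hrow : ∀ j, g ∣ (U.map φ * F) (Fin.last k) j := by
    intro j
    have h1 : φ ((U.map φ * F) (Fin.last k) j) = 0 := by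
      have h2 : (U.map φ * F).map φ = (U * F.map φ).map φ := by
        rw [Matrix.map_mul, Matrix.map_mul, hφφ]
        congr 1
        ext1 i j; simp [phi_idem g φ hφ hφg]
      have h3 := congrFun (congrFun h2 (Fin.last k)) j
      rw [Matrix.map_apply, Matrix.map_apply, hUN, map_zero] at h3
      exact h3
    have := hφ ((U.map φ * F) (Fin.last k) j)
    rwa [h1, sub_zero] at this
  choose y hy using hrow
  obtain ⟨F4, hF4⟩ : ∃ F4 : Matrix (Fin (k + 1)) (Fin (k + 1)) R, U.map φ * F = dlast k g * F4 := by
    refine ⟨Matrix.of fun i j => if i = Fin.last k then y j else (U.map φ * F) i j, ?_⟩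
    ext1 i j
    rw [dlast, diagonal_mul, of_apply]
    by_cases h : i = Fin.last k
    · subst h; simp [hy]
    · simp [h]
  have hinv : (U⁻¹).map φ * U.map φ = 1 := by
    rw [← Matrix.map_mul, nonsing_inv_mul _ hU]
    ext1 i j; simp [Matrix.one_apply, apply_ite φ]
  have hdetφ : (U.map φ).det = φ U.det := (RingHom.map_det φ U).symm
  refine ⟨(U⁻¹).map φ, F4, ?_, ?_, ?_, ?_⟩
  · ext1 i j; simp [phi_idem g φ hφ hφg]
  · have := congrArg det hinv
    rw [det_mul, det_one] at this
    exact IsUnit.of_mul_eq_one _ this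
  · have := congrArg det hF4
    rw [det_mul, det_mul, det_dlast, hF, hdetφ] at this
    have h2 : φ U.det * u = F4.det := by
      apply mul_left_cancel₀ hg0
      rw [← this]; ring
    rw [← h2]
    exact (hU.map φ).mul hu
  · rw [Matrix.mul_assoc, ← hF4, ← Matrix.mul_assoc, hinv, Matrix.one_mul]

end PartF2



section PartF3

variable {A : Type*} [CommRing A] [IsDomain A] [IsPrincipalIdealRing A] [NormalizationMonoid A]

lemma step2_fac {k r : ℕ} (F : Matrix (Fin r) (Fin r) (MvPolynomial (Fin k) A))
    (h : ℕ → A) (hh : ∀ i, i < r → h i ≠ 0)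
    (h1 : ∀ j, j < r → dI j F = Ideal.span {C (∏ i ∈ Finset.range j, h i)})
    (h2 : dI r F ≤ Ideal.span {C (∏ i ∈ Finset.range r, h i)}) :
    ∃ U W : Matrix (Fin r) (Fin r) (MvPolynomial (Fin k) A), U.det = 1 ∧
      U * F = diagonal (fun i : Fin r => C (h i)) * W ∧
      F.det = C (∏ i ∈ Finset.range r, h i) * W.det := by
  obtain ⟨U, hU, hdvd⟩ := step2 F h hh h1 h2
  choose W hW using hdvd
  have h3 : U * F = diagonal (fun i : Fin r => (C (h i) : MvPolynomial (Fin k) A)) * Matrix.of W := by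
    ext1 i j
    rw [diagonal_mul, hW, of_apply]
  refine ⟨U, Matrix.of W, hU, h3, ?_⟩
  have := congrArg det h3
  rw [det_mul, hU, one_mul, det_mul, det_diagonal] at this
  rw [this, ← Fin.prod_univ_eq_prod_range, map_prod]

lemma tall_nf {k' k : ℕ} (hQS : QS (MvPolynomial (Fin k') A))
    (H : Matrix (Fin (k + 1)) (Fin k) (MvPolynomial (Fin k') A))
    (h : ℕ → A) (hh : ∀ i, i < k → h i ≠ 0)
    (h1 : ∀ j, j ≤ k → dI j H = Ideal.span {C (∏ i ∈ Finset.range j, h i)}) :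
    ∃ (U : Matrix (Fin (k + 1)) (Fin (k + 1)) (MvPolynomial (Fin k') A))
      (W : Matrix (Fin k) (Fin k) (MvPolynomial (Fin k') A)), IsUnit U.det ∧ IsUnit W.det ∧
      U * H = padR (k + 1) (diagonal (fun i : Fin k => (C (h i) : MvPolynomial (Fin k') A)) * W) := by
  have hne : (C (∏ i ∈ Finset.range k, h i) : MvPolynomial (Fin k') A) ≠ 0 := by
    rw [Ne, MvPolynomial.C_eq_zero]
    exact Finset.prod_ne_zero_iff.2 fun i hi => hh i (Finset.mem_range.1 hi)
  obtain ⟨-, -, U, V, G, hU, hV, hUV, hG⟩ := rankNF hQS (r := k) H _ hne (h1 k le_rfl)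
    (dI_eq_bot_col (by simp) H)
  have hpad : padC k (padR (k + 1) G) = padR (k + 1) G := by
    ext1 i j
    simp [padC]
  rw [hpad] at hUV
  obtain ⟨U6, W, hU6, hW, hdet⟩ := step2_fac G h hh (fun j hj => by rw [hG, h1 j hj.le])
    (by rw [hG, h1 k le_rfl])
  have hWu : IsUnit W.det := by
    have h3 := hG k
    rw [h1 k le_rfl, dI_square, Ideal.span_singleton_eq_span_singleton, hdet] at h3
    obtain ⟨u, hu⟩ := h3
    have h4 : (C (∏ i ∈ Finset.range k, h i) : MvPolynomial (Fin k') A) * 1 =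
        C (∏ i ∈ Finset.range k, h i) * (W.det * (u : MvPolynomial (Fin k') A)) := by
      rw [mul_one, ← mul_assoc]; exact hu.symm
    exact IsUnit.of_mul_eq_one _ (mul_left_cancel₀ hne h4).symm
  obtain ⟨Wb, hWb1, hWb2⟩ := extR (Nat.le_succ k) U6
  refine ⟨Wb * U, W * V⁻¹, ?_, ?_, ?_⟩
  · rw [det_mul, hWb1, hU6, one_mul]; exact hU
  · rw [det_mul]; exact hWu.mul (isUnit_nonsing_inv_det _ hV)
  · have h5 : U * H = padR (k + 1) G * V⁻¹ := by
      rw [← hUV, Matrix.mul_assoc, mul_nonsing_inv _ hV, Matrix.mul_one]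
    have h6 := hWb2 G
    rw [Matrix.mul_assoc, h5, ← Matrix.mul_assoc, h6, padR_mul, hW, Matrix.mul_assoc]

end PartF3



section PartF4

lemma last_col_dvd {R : Type*} [CommRing R] [IsDomain R] {k : ℕ}
    (B : Matrix (Fin (k + 1)) (Fin (k + 1)) R)
    (H : ℕ → R) (hH0 : ∀ i, i < k → H i ≠ 0) (g : R) (hg : Prime g) (hgH : ∀ i, i < k → ¬ g ∣ H i)
    (hB1 : ∀ i j : Fin k, B i.castSucc j.castSucc = if i = j then H i else 0)
    (w : Fin (k + 1) → R) (hBw : ∀ i, B i (Fin.last k) = g * w i)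
    (hdI : ∀ j, j ≤ k → dI j B ≤ Ideal.span {∏ t ∈ Finset.range j, H t}) (i : Fin k) :
    H i ∣ w i.castSucc := by
  obtain ⟨i, hi⟩ := i
  have hmem := hdI (i + 1) hi (det_mem_dI B (fun s : Fin (i + 1) => (⟨s, by omega⟩ : Fin (k + 1)))
    (fun s : Fin (i + 1) => if (s : ℕ) = i then Fin.last k else (⟨s, by omega⟩ : Fin (k + 1))))
  rw [Ideal.mem_span_singleton, det_of_isUpperTriangular] at hmem
  · rw [Fin.prod_univ_castSucc, Finset.prod_range_succ] at hmem
    have h1 : ∀ s : Fin i, (B.submatrix (fun s : Fin (i + 1) => (⟨s, by omega⟩ : Fin (k + 1)))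
      (fun s : Fin (i + 1) => if (s : ℕ) = i then Fin.last k else (⟨s, by omega⟩ : Fin (k + 1))))
        s.castSucc s.castSucc = H s := by
      intro s
      have h2 := hB1 ⟨s, by omega⟩ ⟨s, by omega⟩
      have h3 : (s : ℕ) ≠ i := s.2.ne
      simp only [submatrix_apply, Fin.val_castSucc, h3, if_false]
      simpa using h2
    rw [Finset.prod_congr rfl (fun s _ => h1 s), Fin.prod_univ_eq_prod_range] at hmem
    have hne : (∏ t ∈ Finset.range i, H t) ≠ 0 := Finset.prod_ne_zero_iff.2 fun t ht =>
      hH0 t (by have := Finset.mem_range.1 ht; omega)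
    have h4 := (mul_dvd_mul_iff_left hne).1 hmem
    simp only [submatrix_apply, Fin.val_last, if_true] at h4
    rw [hBw] at h4
    obtain ⟨t, ht⟩ := h4
    have h5 : g ∣ H i * t := ⟨_, ht.symm⟩
    rcases hg.dvd_or_dvd h5 with h6 | ⟨t', rfl⟩
    · exact absurd h6 (hgH i hi)
    · refine ⟨t', mul_left_cancel₀ hg.ne_zero ?_⟩
      refine Eq.trans ?_ (ht.trans (by ring))
      rfl
  · intro s t hst
    have hst' : (t : ℕ) < s := hst
    have h3 : (t : ℕ) ≠ i := by omega
    have h2 := hB1 ⟨s, by omega⟩ ⟨t, by omega⟩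
    simp only [submatrix_apply, h3, if_false]
    rw [if_neg (by intro h; rw [Fin.mk.injEq] at h; omega)] at h2
    exact h2

variable {A : Type*} [CommRing A] [IsDomain A] [IsPrincipalIdealRing A] [NormalizationMonoid A]

lemma C_dvd_C {k : ℕ} {a b : A} (h : (C a : MvPolynomial (Fin k) A) ∣ C b) : a ∣ b := by
  have := map_dvd (constantCoeff (R := A) (σ := Fin k)) h
  simpa using this

/-- choose the invariant factors in `A`. -/
lemma exists_factors {k k' : ℕ} (g : MvPolynomial (Fin k') A) (hg : Prime g)
    (hgC : ∀ a : A, a ≠ 0 → ¬ g ∣ C a)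
    (F : Matrix (Fin (k + 1)) (Fin (k + 1)) (MvPolynomial (Fin k') A))
    (d : ℕ → MvPolynomial (Fin k') A) (hd : ∀ j, j ≤ k + 1 → dI j F = Ideal.span {d j})
    (h : A) (hh : h ≠ 0) (hdr : Associated (d (k + 1)) (g * C h)) :
    ∃ H : ℕ → A, (∀ i, i ≤ k → H i ≠ 0) ∧
      (∀ j, j ≤ k → dI j F = Ideal.span {C (∏ i ∈ Finset.range j, H i)}) ∧
      ∏ i ∈ Finset.range (k + 1), H i = h := by
  have hdet : Associated F.det (g * C h) := by
    have := hd (k + 1) le_rfl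
    rw [dI_square, Ideal.span_singleton_eq_span_singleton] at this
    exact this.trans hdr
  have hgd : ¬ g ∣ d k := by
    intro hgd
    have h1 : ∀ i j, ∃ y, F.adjugate i j = g * y := by
      intro i j
      have := adj_mem_dI F i j
      rw [hd k (Nat.le_succ k), Ideal.mem_span_singleton] at this
      exact hgd.trans this
    choose Y hY using h1
    have h2 : F.adjugate = g • Matrix.of Y := by ext1 i j; simp [hY]
    have h3 := det_adjugate F
    rw [h2, det_smul, Fintype.card_fin, Nat.add_sub_cancel] at h3
    obtain ⟨u, hu⟩ := hdet.symm
    rw [← hu, mul_pow, mul_pow, pow_succ, mul_assoc, mul_assoc] at h3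
    have h4 := mul_left_cancel₀ (pow_ne_zero k hg.ne_zero) h3
    have h5 : g ∣ (C h : MvPolynomial (Fin k') A) ^ k * (u : MvPolynomial (Fin k') A) ^ k := ⟨_, h4.symm⟩
    rcases hg.dvd_or_dvd h5 with h6 | h6
    · exact hgC h hh (hg.dvd_of_dvd_pow h6)
    · exact hg.not_unit (isUnit_of_dvd_unit h6 (u.isUnit.pow k))
  have hdk : d k ∣ C h := by
    have h1 : d k ∣ g * C h := by
      refine dvd_trans ?_ hdr.dvd
      rw [← Ideal.span_singleton_le_span_singleton, ← hd k (Nat.le_succ k), ← hd (k + 1) le_rfl]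
      exact dI_antitone F (Nat.le_succ k)
    obtain ⟨t, ht⟩ := h1
    rcases hg.dvd_or_dvd (⟨_, ht.symm⟩ : g ∣ d k * t) with h2 | ⟨t', rfl⟩
    · exact absurd h2 hgd
    · exact ⟨t', mul_left_cancel₀ hg.ne_zero (by rw [ht]; ring)⟩
  have hdj : ∀ j, ∃ a : A, j ≤ k → dI j F = Ideal.span {C a} ∧ a ∣ h ∧ (j = 0 → a = 1) := by
    intro j
    by_cases hj : j ≤ k
    swap
    · exact ⟨0, fun h => absurd h hj⟩
    by_cases hj0 : j = 0
    · subst hj0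
      exact ⟨1, fun _ => ⟨by rw [dI_zero, C_1, Ideal.span_singleton_one], one_dvd _, fun _ => rfl⟩⟩
    have h1 : d j ∣ C h := by
      refine dvd_trans ?_ hdk
      rw [← Ideal.span_singleton_le_span_singleton, ← hd k (Nat.le_succ k), ← hd j (by omega)]
      exact dI_antitone F hj
    obtain ⟨a, ha, hda⟩ := (MvPolynomial.dvd_C_iff_exists hh).1 h1
    exact ⟨a, fun _ => ⟨by rw [hd j (by omega), hda], ha, fun h => absurd h hj0⟩⟩
  choose a ha using hdj
  -- normalise beyond `k`
  have hq : ∀ i, ∃ q : A, i ≤ k → (if i + 1 ≤ k then a (i + 1) else h) = a i * q := by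
    intro i
    by_cases hi : i ≤ k
    swap
    · exact ⟨0, fun h => absurd h hi⟩
    by_cases hi1 : i + 1 ≤ k
    · have h1 : a i ∣ a (i + 1) := by
        apply C_dvd_C (k := k')
        rw [← Ideal.span_singleton_le_span_singleton, ← (ha i hi).1, ← (ha (i + 1) hi1).1]
        exact dI_antitone F (Nat.le_succ i)
      obtain ⟨q, hq⟩ := h1
      exact ⟨q, fun _ => by rw [if_pos hi1, hq]⟩
    · obtain ⟨q, hq⟩ := (ha i hi).2.1
      exact ⟨q, fun _ => by rw [if_neg hi1, hq]⟩
  choose H hH using hq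
  have hprod : ∀ j, j ≤ k → ∏ i ∈ Finset.range j, H i = a j := by
    intro j
    induction j with
    | zero => intro _; rw [Finset.prod_range_zero, (ha 0 (Nat.zero_le _)).2.2 rfl]
    | succ j ih =>
      intro hj
      rw [Finset.prod_range_succ, ih (by omega), ← hH j (by omega), if_pos hj]
  have hfull : ∏ i ∈ Finset.range (k + 1), H i = h := by
    rw [Finset.prod_range_succ, hprod k le_rfl, ← hH k le_rfl, if_neg (by omega)]
  refine ⟨H, ?_, fun j hj => by rw [hprod j hj]; exact (ha j hj).1, hfull⟩
  intro i hi
  rw [← hfull] at hh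
  exact Finset.prod_ne_zero_iff.1 hh i (Finset.mem_range.2 (by omega))

end PartF4



section PartF5

variable {A : Type*} [CommRing A] [IsDomain A] [IsPrincipalIdealRing A] [NormalizationMonoid A]

theorem main_square {k k' : ℕ} (hQS : QS (MvPolynomial (Fin k') A))
    (D : Derivation A (MvPolynomial (Fin k') A) (MvPolynomial (Fin k') A))
    (g : MvPolynomial (Fin k') A) (hD : D g = 1)
    (φ : MvPolynomial (Fin k') A →+* MvPolynomial (Fin k') A) (hφ : ∀ y, g ∣ y - φ y)
    (hφg : φ g = 0) (hφC : ∀ a : A, φ (C a) = C a) (hg : Prime g)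
    (F : Matrix (Fin (k + 1)) (Fin (k + 1)) (MvPolynomial (Fin k') A))
    (d : ℕ → MvPolynomial (Fin k') A) (hd : ∀ j, j ≤ k + 1 → dI j F = Ideal.span {d j})
    (h : A) (hh : h ≠ 0) (hdr : Associated (d (k + 1)) (g * C h)) :
    ∃ (U V : Matrix (Fin (k + 1)) (Fin (k + 1)) (MvPolynomial (Fin k') A))
      (Φ : ℕ → MvPolynomial (Fin k') A), IsUnit U.det ∧ IsUnit V.det ∧
      F = U * diagonal (fun i : Fin (k + 1) => Φ i) * V ∧
      ∀ j, j ≤ k + 1 → dI j F = Ideal.span {∏ i ∈ Finset.range j, Φ i} := by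
  have hgC : ∀ a : A, a ≠ 0 → ¬ g ∣ C a := by
    rintro a ha ⟨t, ht⟩
    have := congrArg φ ht
    rw [hφC, map_mul, hφg, zero_mul, MvPolynomial.C_eq_zero] at this
    exact ha this
  obtain ⟨H, hH0, hHd, hHh⟩ := exists_factors g hg hgC F d hd h hh hdr
  have hdetF : Associated F.det (g * C h) := by
    have := hd (k + 1) le_rfl
    rw [dI_square, Ideal.span_singleton_eq_span_singleton] at this
    exact this.trans hdr
  have hCh : (C h : MvPolynomial (Fin k') A) ≠ 0 := by rwa [Ne, MvPolynomial.C_eq_zero]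
  -- peel off the constants
  obtain ⟨U1, F2, hU1, hUF, hdet⟩ := step2_fac F H (fun i hi => hH0 i (by omega))
    (fun j hj => hHd j (by omega)) (by
      rw [dI_square, Ideal.span_singleton_le_span_singleton, hHh]
      exact (Dvd.intro_left g rfl).trans hdetF.symm.dvd)
  obtain ⟨u, hu⟩ := hdetF.symm
  have hF2 : F2.det = u * g := by
    apply mul_left_cancel₀ hCh
    rw [← hHh, ← hdet, ← hu, hHh]; ring
  obtain ⟨Q, F4, hQφ, hQ, hF4, hF2e⟩ := peel hQS D g hD φ hφ hφg F2 _ u.isUnit hF2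
  obtain ⟨M, hM⟩ : ∃ M, M = diagonal (fun i : Fin (k + 1) => (C (H i) : MvPolynomial (Fin k') A)) * Q :=
    ⟨_, rfl⟩
  have hMφ : M.map φ = M := by
    rw [hM, Matrix.map_mul, hQφ]
    congr 1
    ext1 i j
    by_cases hij : i = j
    · subst hij; simp [hφC]
    · simp [hij]
  have hU1u : IsUnit U1.det := by rw [hU1]; exact isUnit_one
  have hUF3 : U1 * F = (M * dlast k g) * F4 := by
    rw [hUF, hF2e, hM]; simp only [Matrix.mul_assoc]
  obtain ⟨F3, hF3⟩ : ∃ F3, F3 = M * dlast k g := ⟨_, rfl⟩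
  rw [← hF3] at hUF3
  have hdF3 : ∀ j, dI j F3 = dI j F := by
    intro j
    rw [← dI_unit_right j F3 F4 hF4, ← hUF3, dI_unit_left _ _ hU1u]
  have hF3c : ∀ i (j : Fin k), F3 i j.castSucc = M i j.castSucc := by
    intro i j
    rw [hF3, dlast, mul_diagonal, if_neg (Fin.castSucc_lt_last j).ne, mul_one]
  have hF3l : ∀ i, F3 i (Fin.last k) = M i (Fin.last k) * g := by
    intro i
    rw [hF3, dlast, mul_diagonal, if_pos rfl]
  obtain ⟨M1, hM1⟩ : ∃ M1, M1 = M.submatrix id (Fin.castSucc (n := k)) := ⟨_, rfl⟩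
  have hM1F : F3.map φ = padC (k + 1) M1 := by
    ext1 i j
    refine Fin.lastCases ?_ (fun j => ?_) j
    · rw [Matrix.map_apply, hF3l, map_mul, hφg, mul_zero]; simp [padC]
    · rw [Matrix.map_apply, hF3c]
      have : φ (M i j.castSucc) = M i j.castSucc := congrFun (congrFun hMφ i) j.castSucc
      rw [this]
      simp [padC, hM1]
  have hM1d : ∀ j, j ≤ k → dI j M1 = Ideal.span {C (∏ i ∈ Finset.range j, H i)} := by
    intro j hj
    rw [← dI_padC (Nat.le_succ k) M1, Nat.succ_eq_add_one, ← hM1F, dI_map, hdF3, hHd j hj,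
      Ideal.map_span, Set.image_singleton, hφC]
  obtain ⟨U5, W, hU5, hW, hU5M⟩ := tall_nf hQS M1 H (fun i hi => hH0 i hi.le) hM1d
  -- the last column
  obtain ⟨w, hw⟩ : ∃ w : Fin (k + 1) → MvPolynomial (Fin k') A,
    ∀ i, (U5 * F3) i (Fin.last k) = g * w i := by
    refine ⟨fun i => (U5 * M) i (Fin.last k), fun i => ?_⟩
    rw [hF3, ← Matrix.mul_assoc, dlast, mul_diagonal, if_pos rfl, mul_comm]
  have hUc : ∀ i (j : Fin k), (U5 * F3) i j.castSucc = (U5 * M1) i j := by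
    intro i j
    rw [Matrix.mul_apply, Matrix.mul_apply]
    refine Finset.sum_congr rfl fun s _ => ?_
    rw [hF3c, hM1, submatrix_apply, id]
  -- the intermediate matrix
  obtain ⟨B, hBc, hBl, hBw⟩ : ∃ B : Matrix (Fin (k + 1)) (Fin (k + 1)) (MvPolynomial (Fin k') A),
      (∀ i j : Fin k, B i.castSucc j.castSucc = if i = j then C (H i) else 0) ∧
      (∀ j : Fin k, B (Fin.last k) j.castSucc = 0) ∧ ∀ i, B i (Fin.last k) = g * w i := by
    refine ⟨Matrix.of fun i => Fin.lastCases (g * w i) (fun j => Fin.lastCases (motive := fun _ => _)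
      0 (fun i => if i = j then C (H i) else 0) i), ?_, ?_, ?_⟩
    · intro i j; simp
    · intro j; simp
    · intro i; simp
  have hBV : U5 * F3 = B * blk W 0 := by
    ext1 i j
    rw [Matrix.mul_apply (M := B), Fin.sum_univ_castSucc]
    refine Fin.lastCases ?_ (fun j => ?_) j
    · rw [hw, blk_ll, hBw]
      simp [blk_cl]
    · rw [hUc, hU5M, blk_lc, mul_zero, add_zero]
      simp only [blk_cc]
      refine Fin.lastCases ?_ (fun i => ?_) i
      · simp [padR, hBl]
      · simp [padR, hBc, diagonal_mul]
  have hblkW : IsUnit (blk W 0).det := by rw [det_blk]; exact hW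
  have hdB : ∀ j, dI j B = dI j F := by
    intro j
    rw [← dI_unit_right j B (blk W 0) hblkW, ← hBV, dI_unit_left _ _ hU5, hdF3]
  have hdvd := last_col_dvd B (fun i => C (H i))
    (fun i hi => by rw [Ne, MvPolynomial.C_eq_zero]; exact hH0 i hi.le) g hg
    (fun i hi => hgC _ (hH0 i hi.le)) hBc w hBw
    (fun j hj => by rw [hdB, hHd j hj, map_prod])
  choose c hc using hdvd
  obtain ⟨Φ, hΦ1, hΦ2⟩ : ∃ Φ : ℕ → MvPolynomial (Fin k') A,
      (∀ i, i < k → Φ i = C (H i)) ∧ Φ k = g * w (Fin.last k) :=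
    ⟨fun i => if i < k then C (H i) else g * w (Fin.last k), fun i hi => by simp [hi], by simp⟩
  have hBD : B = diagonal (fun i : Fin (k + 1) => Φ i) * blk 1 (fun i => g * c i) := by
    ext1 i j
    rw [diagonal_mul]
    refine Fin.lastCases ?_ (fun i => ?_) i
    · rw [Fin.val_last, hΦ2]
      refine Fin.lastCases ?_ (fun j => ?_) j
      · rw [blk_ll, hBw, mul_one]
      · rw [blk_lc, hBl, mul_zero]
    · rw [Fin.val_castSucc, hΦ1 i i.2]
      refine Fin.lastCases ?_ (fun j => ?_) j
      · rw [blk_cl, hBw, hc i]; ring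
      · rw [blk_cc, hBc, Matrix.one_apply]; simp
  have hblk1 : IsUnit (blk (1 : Matrix (Fin k) (Fin k) (MvPolynomial (Fin k') A))
      (fun i => g * c i)).det := by rw [det_blk, det_one]; exact isUnit_one
  refine ⟨U1⁻¹ * U5⁻¹, blk 1 (fun i => g * c i) * blk W 0 * F4, Φ, ?_, ?_, ?_, ?_⟩
  · rw [det_mul]
    exact (isUnit_nonsing_inv_det _ hU1u).mul (isUnit_nonsing_inv_det _ hU5)
  · rw [det_mul, det_mul]
    exact (hblk1.mul hblkW).mul hF4
  · have h1 : F = U1⁻¹ * (U1 * F) := by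
      rw [← Matrix.mul_assoc, nonsing_inv_mul _ hU1u, Matrix.one_mul]
    have h2 : F3 = U5⁻¹ * (U5 * F3) := by
      rw [← Matrix.mul_assoc, nonsing_inv_mul _ hU5, Matrix.one_mul]
    rw [hBV, hBD] at h2
    rw [hUF3, h2] at h1
    rw [h1]
    simp only [Matrix.mul_assoc]
  · intro j hj
    rcases Nat.lt_or_ge k j with h1 | h1
    · obtain rfl : j = k + 1 := by omega
      rw [← hdB, hBD, dI_unit_right _ _ _ hblk1, dI_square, det_diagonal,
        Fin.prod_univ_eq_prod_range]
    · rw [hHd j h1, map_prod]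
      congr 2
      exact Finset.prod_congr rfl fun i hi =>
        (hΦ1 i (by have := Finset.mem_range.1 hi; omega)).symm

end PartF5



section PartF6

variable {K : Type*} [Field K]

lemma exists_transport (N : ℕ) : ∃ ε : MvPolynomial (Fin (N + 2)) K ≃+*
    MvPolynomial (Fin (N + 1)) (Polynomial K),
    (∀ i : Fin (N + 1), ε (X i.castSucc) = X i) ∧ ε (X (Fin.last (N + 1))) = C Polynomial.X ∧
    ∀ a : K, ε (C a) = C (Polynomial.C a) := by
  refine ⟨((MvPolynomial.renameEquiv K (finSuccEquivLast (n := N + 1))).trans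
    (MvPolynomial.optionEquivRight K (Fin (N + 1)))).toRingEquiv, ?_, ?_, ?_⟩
  · intro i
    simp [optionEquivRight_X_some]
  · simp [optionEquivRight_X_none]
  · intro a
    simp [optionEquivRight_C]

theorem main_square_K {N k : ℕ}
    (F : Matrix (Fin (k + 1)) (Fin (k + 1)) (MvPolynomial (Fin (N + 2)) K))
    (f h : MvPolynomial (Fin (N + 2)) K)
    (hf : f ∈ MvPolynomial.supported K {t : Fin (N + 2) | (t : ℕ) ≠ 0})
    (hh : h ∈ MvPolynomial.supported K {Fin.last (N + 1)})
    (d : ℕ → MvPolynomial (Fin (N + 2)) K) (hd : ∀ j, j ≤ k + 1 → dI j F = Ideal.span {d j})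
    (hd0 : d (k + 1) ≠ 0)
    (hdr : Associated (d (k + 1)) ((X 0 - f) * h)) :
    ∃ (U V : Matrix (Fin (k + 1)) (Fin (k + 1)) (MvPolynomial (Fin (N + 2)) K))
      (Φ : ℕ → MvPolynomial (Fin (N + 2)) K), IsUnit U.det ∧ IsUnit V.det ∧
      F = U * diagonal (fun i : Fin (k + 1) => Φ i) * V ∧
      ∀ j, j ≤ k + 1 → dI j F = Ideal.span {∏ i ∈ Finset.range j, Φ i} := by
  obtain ⟨ε, hε1, hεl, hεC⟩ := exists_transport (K := K) N
  have hε0 : ε (X 0) = X 0 := hε1 0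
  have hQS : QS (MvPolynomial (Fin (N + 1)) (Polynomial K)) :=
    QS.of_equiv ε (qs_mvPolynomial (N + 2))
  obtain ⟨h', hh'⟩ : ∃ h' : Polynomial K, ε h = C h' := by
    refine Algebra.adjoin_induction (p := fun x _ => ∃ h' : Polynomial K, ε x = C h')
      ?_ ?_ ?_ ?_ hh
    · rintro x ⟨t, ht, rfl⟩
      rw [Set.mem_singleton_iff] at ht
      subst ht
      exact ⟨_, hεl⟩
    · intro a; exact ⟨_, hεC a⟩
    · rintro x y - - ⟨a, ha⟩ ⟨b, hb⟩
      exact ⟨a + b, by rw [map_add, ha, hb, map_add]⟩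
    · rintro x y - - ⟨a, ha⟩ ⟨b, hb⟩
      exact ⟨a * b, by rw [map_mul, ha, hb, map_mul]⟩
  obtain ⟨f', hf'⟩ : ∃ f', f' = ε f := ⟨_, rfl⟩
  have hcase : ∀ t : Fin (N + 2), (t : ℕ) ≠ 0 →
      (∃ a, ε (X t) = C a) ∨ ∃ i : Fin (N + 1), i ≠ 0 ∧ ε (X t) = X i := by
    intro t
    refine Fin.lastCases ?_ (fun i => ?_) t
    · intro _; exact Or.inl ⟨_, hεl⟩
    · intro hi
      refine Or.inr ⟨i, ?_, hε1 i⟩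
      rintro rfl
      exact hi rfl
  obtain ⟨φ, hφX, hφC⟩ : ∃ φ : MvPolynomial (Fin (N + 1)) (Polynomial K) →+*
      MvPolynomial (Fin (N + 1)) (Polynomial K), (∀ i, φ (X i) = if i = 0 then f' else X i) ∧
      ∀ a, φ (C a) = C a :=
    ⟨eval₂Hom C (fun i => if i = 0 then f' else X i), fun i => by simp, fun a => by simp⟩
  have hφf : φ f' = f' := by
    rw [hf']
    refine Algebra.adjoin_induction (p := fun x _ => φ (ε x) = ε x) ?_ ?_ ?_ ?_ hf
    · rintro x ⟨t, ht, rfl⟩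
      rcases hcase t ht with ⟨a, ha⟩ | ⟨i, hi, hti⟩
      · rw [ha, hφC]
      · rw [hti, hφX, if_neg hi]
    · intro a
      have := hεC a
      change φ (ε (C a)) = ε (C a)
      rw [this, hφC]
    · intro x y _ _ hx hy
      rw [map_add, map_add, hx, hy]
    · intro x y _ _ hx hy
      rw [map_mul, map_mul, hx, hy]
  have hDf : pderiv (0 : Fin (N + 1)) f' = 0 := by
    rw [hf']
    refine Algebra.adjoin_induction (p := fun x _ => pderiv (0 : Fin (N + 1)) (ε x) = 0)
      ?_ ?_ ?_ ?_ hf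
    · rintro x ⟨t, ht, rfl⟩
      rcases hcase t ht with ⟨a, ha⟩ | ⟨i, hi, hti⟩
      · rw [ha, pderiv_C]
      · rw [hti, pderiv_X_of_ne hi]
    · intro a
      have := hεC a
      change pderiv (0 : Fin (N + 1)) (ε (C a)) = 0
      rw [this, pderiv_C]
    · intro x y _ _ hx hy
      rw [map_add, map_add, hx, hy, add_zero]
    · intro x y _ _ hx hy
      rw [map_mul, Derivation.leibniz, hx, hy, smul_zero, smul_zero, add_zero]
  obtain ⟨g, hgdef⟩ : ∃ g, g = X 0 - f' := ⟨_, rfl⟩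
  have hDg : pderiv (0 : Fin (N + 1)) g = 1 := by
    rw [hgdef, map_sub, hDf, pderiv_X_self, sub_zero]
  have hφg : φ g = 0 := by rw [hgdef, map_sub, hφX, if_pos rfl, hφf, sub_self]
  have hφ : ∀ y, g ∣ y - φ y := by
    intro y
    rw [← Ideal.mem_span_singleton, ← Ideal.Quotient.mk_eq_mk_iff_sub_mem]
    have : (Ideal.Quotient.mk (Ideal.span {g})) = (Ideal.Quotient.mk (Ideal.span {g})).comp φ := by
      apply MvPolynomial.ringHom_ext
      · intro a; rw [RingHom.comp_apply, hφC]
      · intro i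
        rw [RingHom.comp_apply, hφX]
        split_ifs with hi
        · subst hi
          rw [Ideal.Quotient.mk_eq_mk_iff_sub_mem, ← hgdef]
          exact Ideal.mem_span_singleton_self g
        · rfl
    exact congrArg (fun ψ => ψ y) this
  have hg : Prime g := by
    refine ⟨?_, ?_, ?_⟩
    · rintro rfl; rw [map_zero] at hDg; exact zero_ne_one hDg
    · intro hu; have := hu.map φ; rw [hφg] at this; exact not_isUnit_zero this
    · rintro a b ⟨t, ht⟩
      have h1 := congrArg φ ht
      rw [map_mul, map_mul, hφg, zero_mul, mul_eq_zero] at h1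
      rcases h1 with h1 | h1
      · left; have := hφ a; rwa [h1, sub_zero] at this
      · right; have := hφ b; rwa [h1, sub_zero] at this
  have hdr' : Associated (ε (d (k + 1))) (g * C h') := by
    have := hdr.map ε
    rwa [map_mul, map_sub, hε0, hh', ← hf', ← hgdef] at this
  have hh0 : h' ≠ 0 := by
    rintro rfl
    rw [map_zero, mul_zero, associated_zero_iff_eq_zero] at hdr'
    exact hd0 ((map_eq_zero_iff ε ε.injective).1 hdr')
  letI : StrongNormalizationMonoid (Polynomial K) := UniqueFactorizationMonoid.normalizationMonoid
  letI : NormalizationMonoid (Polynomial K) := inferInstance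
  obtain ⟨U, V, Φ, hU, hV, hUV, hΦ⟩ := main_square hQS (pderiv (0 : Fin (N + 1))) g hDg φ hφ hφg hφC hg
    (F.map (ε : _ →+* _)) (fun j => ε (d j))
    (fun j hj => by
      rw [dI_map, hd j hj, Ideal.map_span, Set.image_singleton]; rfl) h' hh0 hdr'
  have hback : (F.map (ε : MvPolynomial (Fin (N + 2)) K →+* _)).map
      (ε.symm : MvPolynomial (Fin (N + 1)) (Polynomial K) →+* MvPolynomial (Fin (N + 2)) K) = F := by
    ext1 i j; simp
  obtain ⟨ψ, hψ⟩ : ∃ ψ : MvPolynomial (Fin (N + 1)) (Polynomial K) →+* MvPolynomial (Fin (N + 2)) K,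
    ψ = (ε.symm : MvPolynomial (Fin (N + 1)) (Polynomial K) →+* MvPolynomial (Fin (N + 2)) K) := ⟨_, rfl⟩
  rw [← hψ] at hback
  refine ⟨U.map ψ, V.map ψ, fun i => ψ (Φ i), ?_, ?_, ?_, ?_⟩
  · have := hU.map ψ
    rwa [RingHom.map_det] at this
  · have := hV.map ψ
    rwa [RingHom.map_det] at this
  · have h1 := congrArg (fun M => M.map ψ) hUV
    simp only [Matrix.map_mul] at h1
    rw [hback, diagonal_map (map_zero ψ)] at h1
    exact h1
  · intro j hj
    have h1 := hΦ j hj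
    have h2 := congrArg (Ideal.map ψ) h1
    rw [← dI_map, hback, Ideal.map_span, Set.image_singleton, map_prod] at h2
    exact h2

end PartF6



section PartF7

variable {R : Type*} [CommRing R]

lemma extC {s r : ℕ} (h : s ≤ r) (N : Matrix (Fin s) (Fin s) R) :
    ∃ W : Matrix (Fin r) (Fin r) R, W.det = N.det ∧
      ∀ {m : ℕ} (Y : Matrix (Fin m) (Fin s) R), padC r Y * W = padC r (Y * N) := by
  obtain ⟨W, hW, hY⟩ := extR h Nᵀ
  refine ⟨Wᵀ, by rw [det_transpose, hW, det_transpose], fun {m} Y => ?_⟩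
  have h1 := congrArg transpose (hY Yᵀ)
  rw [transpose_mul, padR_transpose, padR_transpose, transpose_mul, transpose_transpose,
    transpose_transpose] at h1
  exact h1

lemma pad_diagonal {l m r : ℕ} (Φ : ℕ → R) :
    (padC m (padR l (diagonal fun i : Fin r => Φ i)) : Matrix (Fin l) (Fin m) R) =
      smithDiag (fun i : Fin l => if (i : ℕ) < r then Φ i else 0) := by
  ext1 i j
  simp only [padC, padR, smithDiag, of_apply, diagonal_apply, Fin.mk.injEq]
  by_cases h1 : (j : ℕ) < r <;> by_cases h2 : (i : ℕ) < r <;> by_cases h3 : (i : ℕ) = j <;>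
    simp [h1, h2, h3] <;> omega

lemma smithDiag_lead_det {l m k : ℕ} (hl : k ≤ l) (hm : k ≤ m) (Φ : Fin l → R) :
    ((smithDiag Φ : Matrix (Fin l) (Fin m) R).submatrix (Fin.castLE hl) (Fin.castLE hm)).det =
      ∏ j : Fin k, Φ (Fin.castLE hl j) := by
  have : (smithDiag Φ : Matrix (Fin l) (Fin m) R).submatrix (Fin.castLE hl) (Fin.castLE hm) =
      diagonal fun j : Fin k => Φ (Fin.castLE hl j) := by
    ext1 i j
    simp [smithDiag, diagonal_apply, Fin.ext_iff]
  rw [this, det_diagonal]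

lemma prod_Iic_fin {l k : ℕ} (hk : k < l) (Φ : Fin l → R) :
    ∏ j ∈ Finset.Iic (⟨k, hk⟩ : Fin l), Φ j = ∏ j : Fin (k + 1), Φ (Fin.castLE hk j) := by
  symm
  refine Finset.prod_bij (fun j _ => Fin.castLE hk j) ?_ ?_ ?_ ?_
  · intro j _
    simp only [Finset.mem_Iic, Fin.le_def, Fin.val_castLE]
    omega
  · intro a _ b _ hab
    exact Fin.castLE_injective hk hab
  · intro b hb
    simp only [Finset.mem_Iic, Fin.le_def] at hb
    exact ⟨⟨b, by omega⟩, Finset.mem_univ _, rfl⟩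
  · intro j _; rfl

lemma dI_ne_bot_of_rank {l m r : ℕ} {F : Matrix (Fin l) (Fin m) R} (h : HasRank F r) {k : ℕ}
    (hk : k ≤ r) : dI k F ≠ ⊥ := by
  intro h0
  obtain ⟨p, hp, hp0⟩ := h.1
  have h1 : p ∈ dI r F := by rw [← span_minorsSet]; exact Ideal.subset_span hp
  have h2 := dI_antitone F hk h1
  rw [h0] at h2
  exact hp0 h2

lemma statement_forward [IsDomain R] {l m r : ℕ} (F : Matrix (Fin l) (Fin m) R)
    (hrank : HasRank F r) (hS : SmithEquivAt F r) :
    ∀ k : ℕ, 1 ≤ k → k ≤ r → JkUnit F k := by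
  intro k hk1 hkr
  obtain ⟨Φ, hΦ, -, U, V, hU, hV, hF⟩ := hS
  obtain ⟨p, ⟨a, b, -⟩, -⟩ := hrank.1
  have hl : r ≤ l := by simpa using Fintype.card_le_of_embedding a
  have hm : r ≤ m := by simpa using Fintype.card_le_of_embedding b
  obtain ⟨k, rfl⟩ : ∃ k', k = k' + 1 := ⟨k - 1, by omega⟩
  have hkl : k < l := by omega
  have hg := hΦ ⟨k, hkl⟩ (by simp; omega)
  simp only at hg
  set d := ∏ j ∈ Finset.Iic (⟨k, hkl⟩ : Fin l), Φ j with hd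
  have hdI : dI (k + 1) F = Ideal.span {d} := by
    apply le_antisymm
    · rw [← span_minorsSet, Ideal.span_le]
      intro p hp
      exact Ideal.mem_span_singleton.2 (hg.1 p hp)
    · rw [Ideal.span_singleton_le_iff_mem, hF, dI_unit_right _ _ _ hV, dI_unit_left _ _ hU, hd,
        prod_Iic_fin, ← smithDiag_lead_det (m := m) hkl (by omega)]
      exact det_mem_dI _ _ _
  have hd0 : d ≠ 0 := by
    intro h0
    apply dI_ne_bot_of_rank hrank hkr
    rw [hdI, h0, Ideal.span_singleton_eq_bot]
  exact ⟨d, reduced_of_dI F _ d hd0 hdI⟩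

lemma main_square_all {K : Type*} [Field K] {N r : ℕ}
    (G : Matrix (Fin r) (Fin r) (MvPolynomial (Fin (N + 2)) K))
    (f h : MvPolynomial (Fin (N + 2)) K)
    (hf : f ∈ MvPolynomial.supported K {t : Fin (N + 2) | (t : ℕ) ≠ 0})
    (hh : h ∈ MvPolynomial.supported K {Fin.last (N + 1)})
    (d : ℕ → MvPolynomial (Fin (N + 2)) K) (hd : ∀ j ≤ r, dI j G = Ideal.span {d j})
    (hd0 : d r ≠ 0) (hdr : 0 < r → Associated (d r) ((X 0 - f) * h)) :
    ∃ (U V : Matrix (Fin r) (Fin r) (MvPolynomial (Fin (N + 2)) K))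
      (Φ : ℕ → MvPolynomial (Fin (N + 2)) K), IsUnit U.det ∧ IsUnit V.det ∧
      G = U * diagonal (fun i : Fin r => Φ i) * V ∧
      ∀ j ≤ r, dI j G = Ideal.span {∏ i ∈ Finset.range j, Φ i} := by
  rcases r with _ | k
  · refine ⟨1, 1, fun _ => 0, by simp, by simp, ?_, ?_⟩
    · ext1 i; exact i.elim0
    · intro j hj
      obtain rfl : j = 0 := by omega
      rw [dI_zero]; simp
  · exact main_square_K G f h hf hh d hd hd0 (hdr (by omega))

lemma statement_backward {K : Type*} [Field K] {N : ℕ} {l m r : ℕ}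
    (F : Matrix (Fin l) (Fin m) (MvPolynomial (Fin (N + 2)) K))
    (hrank : HasRank F r)
    (f h : MvPolynomial (Fin (N + 2)) K)
    (hf : f ∈ MvPolynomial.supported K {t : Fin (N + 2) | (t : ℕ) ≠ 0})
    (hh : h ∈ MvPolynomial.supported K {Fin.last (N + 1)})
    (hd : IsGcdMinors F r ((X 0 - f) * h))
    (hJ : ∀ k : ℕ, 1 ≤ k → k ≤ r → JkUnit F k) : SmithEquivAt F r := by
  have h1 : ∀ k : ℕ, ∃ d, k ≤ r → dI k F = Ideal.span {d} ∧ (1 ≤ k → IsGcdMinors F k d) := by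
    intro k
    rcases Nat.eq_zero_or_pos k with rfl | hk
    · exact ⟨1, fun _ => ⟨by rw [dI_zero, Ideal.span_singleton_one], fun h => by omega⟩⟩
    · by_cases hkr : k ≤ r
      · obtain ⟨d, hd, hr⟩ := hJ k hk hkr
        exact ⟨d, fun _ => ⟨dI_of_reduced F k d hd.1 hr, fun _ => hd⟩⟩
      · exact ⟨0, fun h => absurd h hkr⟩
  choose d hdd using h1
  have hd0 : d r ≠ 0 := by
    intro h0
    apply dI_ne_bot_of_rank hrank le_rfl
    rw [(hdd r le_rfl).1, h0, Ideal.span_singleton_eq_bot]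
  have hbot : dI (r + 1) F = ⊥ := by
    rw [← span_minorsSet, Ideal.span_eq_bot]
    exact hrank.2
  obtain ⟨hl, hm, U, V, G, hU, hV, hUV, hG⟩ :=
    rankNF (qs_mvPolynomial (N + 2)) F (d r) hd0 (hdd r le_rfl).1 hbot
  obtain ⟨U', V', Φ, hU', hV', hGD, hΦ⟩ := main_square_all G f h hf hh d
    (fun j hj => by rw [hG, (hdd j hj).1]) hd0 (fun hr => by
      have h2 := (hdd r le_rfl).2 hr
      exact associated_of_dvd_dvd (hd.2 _ h2.1) (h2.2 _ hd.1))
  obtain ⟨W₁, hW₁, hW₁'⟩ := extR hl U'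
  obtain ⟨W₂, hW₂, hW₂'⟩ := extC hm V'
  refine ⟨fun i => if (i : ℕ) < r then Φ i else 0, ?_, ?_, ?_⟩
  · intro i hi
    have h3 : (∏ j ∈ Finset.Iic i, if (j : ℕ) < r then Φ j else 0) =
        ∏ j ∈ Finset.range ((i : ℕ) + 1), Φ j := by
      obtain ⟨i, hil⟩ := i
      rw [prod_Iic_fin, Finset.prod_range]
      refine Finset.prod_congr rfl fun j _ => ?_
      simp only at hi
      rw [Fin.val_castLE, if_pos (by omega)]
    rw [h3]
    have h4 : dI ((i : ℕ) + 1) F = Ideal.span {∏ j ∈ Finset.range ((i : ℕ) + 1), Φ j} := by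
      rw [← hG, hΦ _ (by omega)]
    refine (reduced_of_dI F _ _ ?_ h4).1
    intro h0
    apply dI_ne_bot_of_rank hrank (k := (i : ℕ) + 1) (by omega)
    rw [h4, h0, Ideal.span_singleton_eq_bot]
  · intro i hi
    exact if_neg (by omega)
  · refine ⟨U⁻¹ * W₁, W₂ * V⁻¹, ?_, ?_, ?_⟩
    · rw [det_mul, hW₁]
      exact ((isUnit_nonsing_inv_det_iff).2 hU).mul hU'
    · rw [det_mul, hW₂]
      exact hV'.mul ((isUnit_nonsing_inv_det_iff).2 hV)
    · rw [← pad_diagonal]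
      have h5 : W₁ * padC m (padR l (diagonal fun i : Fin r => Φ i)) * W₂ = U * F * V := by
        rw [mul_padC, hW₁', hW₂', padR_mul, ← hGD, hUV]
      calc F = U⁻¹ * (U * F * V) * V⁻¹ := by
            rw [Matrix.mul_assoc U F V, nonsing_inv_mul_cancel_left _ _ hU,
              mul_nonsing_inv_cancel_right _ _ hV]
        _ = _ := by rw [← h5]; simp only [Matrix.mul_assoc]

end PartF7

theorem statement3 {K : Type*} [Field K] (n : ℕ) (hn : 2 ≤ n) (l m r : ℕ) (hlm : l < m)
    (F : Matrix (Fin l) (Fin m) (MvPolynomial (Fin n) K))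
    (hrank : HasRank F r)
    (f h : MvPolynomial (Fin n) K)
    (hf : f ∈ MvPolynomial.supported K {t : Fin n | (t : ℕ) ≠ 0})
    (hh : h ∈ MvPolynomial.supported K {(⟨n - 1, by omega⟩ : Fin n)})
    (hd : IsGcdMinors F r ((MvPolynomial.X (⟨0, by omega⟩ : Fin n) - f) * h)) :
    SmithEquivAt F r ↔ ∀ k : ℕ, 1 ≤ k → k ≤ r → JkUnit F k := by
  refine ⟨statement_forward F hrank, ?_⟩
  obtain ⟨N, rfl⟩ : ∃ N, n = N + 2 := ⟨n - 2, by omega⟩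
  exact statement_backward F hrank f h hf hh hd
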